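/- Let ω^T ∈ A^{[AB]}(T) and let u* be the backward-forward solution associated to ω^T. Then the initial positions of the AB-genuine/interface characteristics of u* cover the whole line: ℝ = ∪_{x ∈ ℝ} C_0(u*, x). -/

import Mathlib

open MeasureTheory Set Filter

noncomputable section

/-- The discontinuous flux `f(x,u) = f_l(u)` for `x < 0`, `f_r(u)` for `x > 0`
(the value at the interface is taken to be `f_r(u)`). -/
def dflux (fl fr : ℝ → ℝ) (x u : ℝ) : ℝ := if x < 0 then fl u else fr u

/-- The connection function `c^{AB}`. -/
def cAB (A B : ℝ) (x : ℝ) : ℝ := if x ≤ 0 then A else B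

/-- An `AB`-entropy solution of `u_t + f(x,u)_x = 0` on `ℝ × [0,∞)` with
initial datum `u0`, for the flux `f(x,·) = fl` on `x<0` and `fr` on `x>0`,
relative to the connection `(A,B)`.  The structure bundles the solution `u`
(as a function of `(x,t)`), its one-sided spatial limits `um x t = u(x-,t)` and
`up x t = u(x+,t)` (for `t > 0`), the weak (distributional) formulation, the
Kružkov entropy inequalities away from the interface, the `AB`-interface
entropy inequality, `L¹_loc`-continuity in time and the initial condition. -/
structure ABSol (fl fr : ℝ → ℝ) (A B : ℝ) (u0 : ℝ → ℝ) where
  u : ℝ → ℝ → ℝ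
  meas : Measurable (Function.uncurry u)
  bdd : ∃ M : ℝ, ∀ x t, |u x t| ≤ M
  um : ℝ → ℝ → ℝ
  up : ℝ → ℝ → ℝ
  um_spec : ∀ x t, 0 < t →
    Tendsto (fun y => u y t) (nhdsWithin x (Iio x)) (nhds (um x t))
  up_spec : ∀ x t, 0 < t →
    Tendsto (fun y => u y t) (nhdsWithin x (Ioi x)) (nhds (up x t))
  weak : ∀ φ : ℝ → ℝ → ℝ,
    ContDiff ℝ 1 (fun p : ℝ × ℝ => φ p.1 p.2) →
    HasCompactSupport (fun p : ℝ × ℝ => φ p.1 p.2) →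
    (∀ x t, t ≤ 0 → φ x t = 0) →
    (∫ p : ℝ × ℝ, (u p.1 p.2 * deriv (fun s => φ p.1 s) p.2 +
        dflux fl fr p.1 (u p.1 p.2) * deriv (fun y => φ y p.2) p.1)) = 0
  kruzkov_l : ∀ (k : ℝ) (φ : ℝ → ℝ → ℝ),
    ContDiff ℝ 1 (fun p : ℝ × ℝ => φ p.1 p.2) →
    HasCompactSupport (fun p : ℝ × ℝ => φ p.1 p.2) →
    (∀ x t, 0 ≤ φ x t) →
    (∀ x t, 0 ≤ x ∨ t ≤ 0 → φ x t = 0) →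
    0 ≤ ∫ p : ℝ × ℝ, (|u p.1 p.2 - k| * deriv (fun s => φ p.1 s) p.2 +
        Real.sign (u p.1 p.2 - k) * (fl (u p.1 p.2) - fl k) *
          deriv (fun y => φ y p.2) p.1)
  kruzkov_r : ∀ (k : ℝ) (φ : ℝ → ℝ → ℝ),
    ContDiff ℝ 1 (fun p : ℝ × ℝ => φ p.1 p.2) →
    HasCompactSupport (fun p : ℝ × ℝ => φ p.1 p.2) →
    (∀ x t, 0 ≤ φ x t) →
    (∀ x t, x ≤ 0 ∨ t ≤ 0 → φ x t = 0) →
    0 ≤ ∫ p : ℝ × ℝ, (|u p.1 p.2 - k| * deriv (fun s => φ p.1 s) p.2 +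
        Real.sign (u p.1 p.2 - k) * (fr (u p.1 p.2) - fr k) *
          deriv (fun y => φ y p.2) p.1)
  interfaceEntropy : ∀ φ : ℝ → ℝ → ℝ,
    ContDiff ℝ 1 (fun p : ℝ × ℝ => φ p.1 p.2) →
    HasCompactSupport (fun p : ℝ × ℝ => φ p.1 p.2) →
    (∀ x t, 0 ≤ φ x t) →
    (∀ x t, t ≤ 0 → φ x t = 0) →
    0 ≤ ∫ p : ℝ × ℝ, (|u p.1 p.2 - cAB A B p.1| * deriv (fun s => φ p.1 s) p.2 +
        Real.sign (u p.1 p.2 - cAB A B p.1) *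
          (dflux fl fr p.1 (u p.1 p.2) - dflux fl fr p.1 (cAB A B p.1)) *
          deriv (fun y => φ y p.2) p.1)
  timeCont : ∀ (r t₀ : ℝ), 0 ≤ t₀ →
    Tendsto (fun t => ∫ x in Icc (-r) r, |u x t - u x t₀|)
      (nhdsWithin t₀ (Ici 0)) (nhds 0)
  init : ∀ᵐ x : ℝ ∂volume, u x 0 = u0 x

/-- `AB`-genuine/interface characteristic for the `AB`-entropy solution `sol`,
on the time interval `[0,T]`, where `γ = f_l(A) = f_r(B)`. -/
def IsABgic (T : ℝ) (fl fr : ℝ → ℝ) (γ : ℝ) {A B : ℝ} {u0 : ℝ → ℝ}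
    (sol : ABSol fl fr A B u0) (ζ : ℝ → ℝ) : Prop :=
  (∃ K : NNReal, LipschitzOnWith K ζ (Icc 0 T)) ∧
  (∀ᵐ t ∂(volume.restrict (Icc 0 T)),
    (ζ t < 0 → HasDerivAt ζ (deriv fl (sol.um (ζ t) t)) t ∧
      deriv fl (sol.um (ζ t) t) = deriv fl (sol.up (ζ t) t)) ∧
    (0 < ζ t → HasDerivAt ζ (deriv fr (sol.um (ζ t) t)) t ∧
      deriv fr (sol.um (ζ t) t) = deriv fr (sol.up (ζ t) t)) ∧
    (ζ t = 0 → fl (sol.um 0 t) = γ ∧ fr (sol.up 0 t) = γ))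

/-- `C(u,x)`: the set of `AB`-genuine/interface characteristics of `sol`
reaching `x` at time `T`. -/
def charSet (T : ℝ) (fl fr : ℝ → ℝ) (γ : ℝ) {A B : ℝ} {u0 : ℝ → ℝ}
    (sol : ABSol fl fr A B u0) (x : ℝ) : Set (ℝ → ℝ) :=
  {ζ | IsABgic T fl fr γ sol ζ ∧ ζ T = x}

/-- `C₀(u,x)`: the set of initial positions `ζ(0)` of characteristics in `C(u,x)`. -/
def charSet0 (T : ℝ) (fl fr : ℝ → ℝ) (γ : ℝ) {A B : ℝ} {u0 : ℝ → ℝ}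
    (sol : ABSol fl fr A B u0) (x : ℝ) : Set ℝ :=
  (fun ζ : ℝ → ℝ => ζ 0) '' charSet T fl fr γ sol x

/-- Membership in `L^∞(ℝ)`: measurable and (essentially) bounded. -/
def IsLinf (g : ℝ → ℝ) : Prop :=
  Measurable g ∧ ∃ M : ℝ, ∀ᵐ x : ℝ ∂volume, |g x| ≤ M

/-- `ω ∈ A^{[AB]}(T)`: the profile `ω` is attainable at time `T`. -/
def Attainable (T : ℝ) (fl fr : ℝ → ℝ) (A B : ℝ) (ω : ℝ → ℝ) : Prop :=
  ∃ u0 : ℝ → ℝ, IsLinf u0 ∧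
    ∃ sol : ABSol fl fr A B u0, ∀ᵐ x : ℝ ∂volume, sol.u x T = ω x

/-- `I_T^{[AB]}(ω)`: the set of (bounded) initial data whose `AB`-entropy
solution coincides a.e. with `ω` at time `T`. -/
def InitialSet (T : ℝ) (fl fr : ℝ → ℝ) (A B : ℝ) (ω : ℝ → ℝ) : Set (ℝ → ℝ) :=
  {u0 | IsLinf u0 ∧
    ∃ sol : ABSol fl fr A B u0, ∀ᵐ x : ℝ ∂volume, sol.u x T = ω x}

/-- `x` is a point of continuity of `ω`: the one-sided limits exist and coincide. -/
def ContinuityPt (ω : ℝ → ℝ) (x : ℝ) : Prop :=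
  ∃ l : ℝ, Tendsto ω (nhdsWithin x (Iio x)) (nhds l) ∧
    Tendsto ω (nhdsWithin x (Ioi x)) (nhds l)

/-!
Let `U` be the Hamilton–Jacobi potential of an `AB`-entropy solution: `∂ₓU = u`, `∂ₜU = -f(x,u)`,
`U(0,0) = 0`. A route is a concatenation of straight legs, each in one closed half-plane and charged
the Lax–Oleinik cost of the flux there, and of stays on the interface, charged `-γ` per unit time.

By Fenchel–Young and the lower bound `γ` on the interface flux, `U` grows along a route by at most
its cost. Conversely, the Kružkov inequalities make `U` a viscosity supersolution, and the interface
entropy condition makes it decrease at the exact rate `γ` along the interface wherever no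
characteristic arrives there; so every point is the end of a route, started at time `0`, along which
`U` grows by exactly the cost. Such an optimal route is followed by an `AB`-gic: on its legs `U` is
squeezed between two differentiable functions, and on its stays the interface flux must equal `γ`.

The map `(x, t) ↦ (-x, T - t)` exchanges the routes of the two problems, keeping their costs, and
`U*(y, 0) = V(0, T) - V(-y, T)` where `U*`, `V` are the potentials of `u*`, `v`. Hence the reversal
of an optimal route of `v` ending at `(-y, T)` is optimal for `u*`, and it starts at `y`.
-/

noncomputable section

open scoped Topology

/-! ### Uniformly convex fluxes and the Legendre transform -/

/-- A `C²` flux whose second derivative is bounded below by the positive constant `a`. -/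
structure UniformlyConvexFlux (f : ℝ → ℝ) (a : ℝ) : Prop where
  contDiff : ContDiff ℝ 2 f
  pos : 0 < a
  le_deriv_deriv : ∀ u, a ≤ deriv (deriv f) u

/-- The inverse of the characteristic speed `f'`. -/
def derivInv (f : ℝ → ℝ) (p : ℝ) : ℝ := Function.invFun (deriv f) p

/-- The Legendre transform `f*(p) = max_u (p u - f u)` of a uniformly convex flux, given by the
value at the maximiser `u = (f')⁻¹(p)`. -/
def legendre (f : ℝ → ℝ) (p : ℝ) : ℝ := p * derivInv f p - f (derivInv f p)

namespace UniformlyConvexFlux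

variable {f : ℝ → ℝ} {a : ℝ} (h : UniformlyConvexFlux f a)
include h

lemma differentiable : Differentiable ℝ f := h.contDiff.differentiable (by norm_num)

lemma continuous : Continuous f := h.differentiable.continuous

lemma contDiff_deriv : ContDiff ℝ 1 (deriv f) :=
  ((contDiff_succ_iff_deriv (n := 1)).1 (by simpa using! h.contDiff)).2.2

lemma differentiable_deriv : Differentiable ℝ (deriv f) :=
  h.contDiff_deriv.differentiable (by norm_num)

lemma continuous_deriv : Continuous (deriv f) := h.contDiff_deriv.continuous

lemma mul_sub_le_deriv_sub {x y : ℝ} (hxy : x ≤ y) : a * (y - x) ≤ deriv f y - deriv f x :=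
  mul_sub_le_image_sub_of_le_deriv h.differentiable_deriv h.le_deriv_deriv hxy

lemma strictMono_deriv : StrictMono (deriv f) :=
  strictMono_of_deriv_pos fun u => h.pos.trans_le (h.le_deriv_deriv u)

lemma surjective_deriv : Function.Surjective (deriv f) := by
  apply h.continuous_deriv.surjective
  · refine tendsto_atTop_mono' _ ?_ (tendsto_atTop_add_const_right _ (deriv f 0)
      (tendsto_id.const_mul_atTop h.pos))
    filter_upwards [eventually_ge_atTop 0] with x hx
    have := h.mul_sub_le_deriv_sub hx
    simp only [id]
    linarith
  · refine tendsto_atBot_mono' _ ?_ (tendsto_atBot_add_const_right _ (deriv f 0)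
      (tendsto_id.const_mul_atBot h.pos))
    filter_upwards [eventually_le_atBot 0] with x hx
    have := h.mul_sub_le_deriv_sub hx
    simp only [id]
    linarith

lemma deriv_derivInv (p : ℝ) : deriv f (derivInv f p) = p :=
  Function.invFun_eq (h.surjective_deriv p)

lemma derivInv_deriv (u : ℝ) : derivInv f (deriv f u) = u :=
  Function.leftInverse_invFun h.strictMono_deriv.injective u

lemma legendre_deriv (u : ℝ) : legendre f (deriv f u) = deriv f u * u - f u := by
  rw [legendre, h.derivInv_deriv]

lemma tangent_le (x y : ℝ) : f x + deriv f x * (y - x) ≤ f y := by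
  have hconv : ConvexOn ℝ univ f :=
    h.strictMono_deriv.monotone.convexOn_univ_of_deriv h.differentiable
  rcases lt_trichotomy x y with hlt | rfl | hlt
  · have := hconv.deriv_le_slope (mem_univ x) (mem_univ y) hlt (h.differentiable x)
    rw [slope_def_field, le_div_iff₀ (sub_pos.2 hlt)] at this
    linarith
  · simp
  · have := hconv.slope_le_deriv (mem_univ y) (mem_univ x) hlt (h.differentiable x)
    rw [slope_def_field, div_le_iff₀ (sub_pos.2 hlt)] at this
    linarith

lemma mul_sub_le_legendre (p u : ℝ) : p * u - f u ≤ legendre f p := by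
  have := h.tangent_le (derivInv f p) u
  rw [h.deriv_derivInv] at this
  unfold legendre
  linarith

lemma abs_derivInv_sub_le (p p' : ℝ) : |derivInv f p' - derivInv f p| ≤ |p' - p| / a := by
  rw [le_div_iff₀ h.pos]
  wlog hle : derivInv f p ≤ derivInv f p' generalizing p p'
  · rw [abs_sub_comm, abs_sub_comm p']
    exact this p' p (le_of_not_ge hle)
  have := h.mul_sub_le_deriv_sub hle
  rw [h.deriv_derivInv, h.deriv_derivInv] at this
  rw [abs_of_nonneg (sub_nonneg.2 hle), mul_comm]
  exact this.trans (le_abs_self _)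

lemma legendre_le_quadratic (p p' : ℝ) :
    legendre f p' ≤ legendre f p + derivInv f p * (p' - p) + (p' - p) ^ 2 / a := by
  have hfenchel := h.mul_sub_le_legendre p (derivInv f p')
  have hquad : (derivInv f p' - derivInv f p) * (p' - p) ≤ (p' - p) ^ 2 / a := by
    calc _ ≤ |derivInv f p' - derivInv f p| * |p' - p| := (le_abs_self _).trans (abs_mul _ _).le
      _ ≤ |p' - p| / a * |p' - p| := by gcongr; exact h.abs_derivInv_sub_le p p'
      _ = _ := by rw [div_mul_eq_mul_div, ← sq, sq_abs]
  have hdef : legendre f p' = p' * derivInv f p' - f (derivInv f p') := rfl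
  linarith

lemma continuous_derivInv : Continuous (derivInv f) := by
  refine (LipschitzWith.of_dist_le_mul (K := ⟨1 / a, one_div_nonneg.2 h.pos.le⟩)
    fun p' p => ?_).continuous
  simpa [Real.dist_eq, div_eq_inv_mul] using! h.abs_derivInv_sub_le p p'

lemma continuous_legendre : Continuous (legendre f) :=
  (continuous_id.mul h.continuous_derivInv).sub (h.continuous.comp h.continuous_derivInv)

lemma exists_mul_abs_sub_le_legendre (N : ℝ) : ∃ C, 0 ≤ C ∧ ∀ p, N * |p| - C ≤ legendre f p := by
  refine ⟨|f N| + |f (-N)|, by positivity, fun p => ?_⟩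
  have h₁ := h.mul_sub_le_legendre p N
  have h₂ := h.mul_sub_le_legendre p (-N)
  rcases abs_cases p with ⟨hp, _⟩ | ⟨hp, _⟩ <;> rw [hp] <;>
    linarith [le_abs_self (f N), le_abs_self (f (-N)), abs_nonneg (f N), abs_nonneg (f (-N))]

lemma comp_neg : UniformlyConvexFlux (fun u => f (-u)) a := by
  refine ⟨h.contDiff.comp contDiff_neg, h.pos, fun u => ?_⟩
  have hderiv : deriv (fun u => f (-u)) = fun u => -deriv f (-u) :=
    funext fun u => deriv_comp_neg f u
  rw [hderiv, deriv.fun_neg, deriv_comp_neg, neg_neg]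
  exact h.le_deriv_deriv (-u)

lemma legendre_comp_neg (p : ℝ) : legendre (fun u => f (-u)) p = legendre f (-p) := by
  have hspeed : deriv (fun u => f (-u)) (-derivInv f (-p)) = p := by
    rw [deriv_comp_neg, neg_neg, h.deriv_derivInv, neg_neg]
  have := h.comp_neg.legendre_deriv (-derivInv f (-p))
  rw [hspeed] at this
  rw [this, legendre]
  simp

end UniformlyConvexFlux

/-! ### One-sided traces and test functions -/

lemma integrable_mul_of_abs_le {α : Type*} [MeasurableSpace α] {μ : Measure α} {h w : α → ℝ}
    {M : ℝ} (hm : Measurable h) (hb : ∀ x, |h x| ≤ M) (hw : Integrable w μ) :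
    Integrable (fun x => h x * w x) μ :=
  hw.bdd_mul hm.aestronglyMeasurable (Eventually.of_forall hb)

lemma abs_integral_Ioc_le {h : ℝ → ℝ} {M c₁ c₂ : ℝ} (hb : ∀ x, |h x| ≤ M) (hc : c₁ ≤ c₂) :
    |∫ x in Ioc c₁ c₂, h x| ≤ M * (c₂ - c₁) := by
  have := norm_setIntegral_le_of_norm_le_const (μ := volume) (f := h) (s := Ioc c₁ c₂) (by simp)
    fun x _ => hb x
  rwa [Real.volume_real_Ioc_of_le hc] at this

lemma deriv_smoothTransition_nonneg (x : ℝ) : 0 ≤ deriv Real.smoothTransition x :=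
  Real.smoothTransition.monotone.deriv_nonneg

lemma deriv_smoothTransition_eq_zero {x : ℝ} (hx : x ∉ Ioo 0 1) :
    deriv Real.smoothTransition x = 0 := by
  rcases le_or_gt x 0 with h₀ | h₀
  · refine IsLocalMin.deriv_eq_zero (Eventually.of_forall fun y => ?_)
    rw [Real.smoothTransition.zero_of_nonpos h₀]
    exact Real.smoothTransition.nonneg y
  · have h₁ : 1 ≤ x := not_lt.1 fun h₁ => hx ⟨h₀, h₁⟩
    refine IsLocalMax.deriv_eq_zero (Eventually.of_forall fun y => ?_)
    rw [Real.smoothTransition.one_of_one_le h₁]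
    exact Real.smoothTransition.le_one y

lemma continuous_deriv_smoothTransition : Continuous (deriv Real.smoothTransition) :=
  Real.smoothTransition.contDiff.continuous_deriv (n := 1) le_rfl

lemma integrable_deriv_smoothTransition : Integrable (deriv Real.smoothTransition) :=
  continuous_deriv_smoothTransition.integrable_of_hasCompactSupport
    (HasCompactSupport.intro isCompact_Icc fun _ hx =>
      deriv_smoothTransition_eq_zero fun h => hx (Ioo_subset_Icc_self h))

lemma integral_deriv_smoothTransition : ∫ x, deriv Real.smoothTransition x = 1 := by
  have hlim₀ : Tendsto Real.smoothTransition atBot (𝓝 0) :=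
    tendsto_const_nhds.congr' <| (eventually_le_atBot 0).mono fun x hx =>
      (Real.smoothTransition.zero_of_nonpos hx).symm
  have hlim₁ : Tendsto Real.smoothTransition atTop (𝓝 1) :=
    tendsto_const_nhds.congr' <| (eventually_ge_atTop 1).mono fun x hx =>
      (Real.smoothTransition.one_of_one_le hx).symm
  rw [integral_of_hasDerivAt_of_tendsto (fun x =>
    (Real.smoothTransition.contDiff.differentiable one_ne_zero x).hasDerivAt)
    integrable_deriv_smoothTransition hlim₀ hlim₁, sub_zero]

/-- A smooth step rising from `0` to `1` across `[c - e δ, c + (1 - e) δ]`: as `δ → 0⁺` it rises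
immediately to the right of `c` for `e = 0` and immediately to the left of `c` for `e = 1`. -/
def smoothStep (e c δ x : ℝ) : ℝ := Real.smoothTransition ((x - c) / δ + e)

/-- A smooth approximation of the indicator function of `[c₁, c₂]`, used as a test function; `e₁`
and `e₂` choose the sides of `c₁` and `c₂` on which it varies, as in `smoothStep`. -/
def smoothBump (e₁ c₁ e₂ c₂ δ x : ℝ) : ℝ := smoothStep e₁ c₁ δ x - smoothStep e₂ c₂ δ x

/-- `l` is the one-sided limit of `h` at `c`, from the right for `e = 0` and from the left for
`e = 1`, in the form in which derivatives of `smoothStep` detect it. -/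
def HasTrace (e : ℝ) (h : ℝ → ℝ) (c l : ℝ) : Prop :=
  ∀ ξ ∈ Ioo (0 : ℝ) 1, Tendsto (fun δ => h (c + δ * (ξ - e))) (𝓝[>] 0) (𝓝 l)

lemma hasTrace_right {h : ℝ → ℝ} {c l : ℝ} (hl : Tendsto h (𝓝[>] c) (𝓝 l)) :
    HasTrace 0 h c l := fun ξ hξ => by
  refine hl.comp (tendsto_nhdsWithin_iff.2 ⟨?_, ?_⟩)
  · exact (Continuous.tendsto' (by fun_prop) 0 c (by simp)).mono_left nhdsWithin_le_nhds
  · filter_upwards [self_mem_nhdsWithin] with δ hδ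
    simpa using mul_pos hδ hξ.1

lemma hasTrace_left {h : ℝ → ℝ} {c l : ℝ} (hl : Tendsto h (𝓝[<] c) (𝓝 l)) :
    HasTrace 1 h c l := fun ξ hξ => by
  refine hl.comp (tendsto_nhdsWithin_iff.2 ⟨?_, ?_⟩)
  · exact (Continuous.tendsto' (by fun_prop) 0 c (by simp)).mono_left nhdsWithin_le_nhds
  · filter_upwards [self_mem_nhdsWithin] with δ hδ
    simpa using mul_neg_of_pos_of_neg hδ (sub_neg.2 hξ.2)

namespace HasTrace

lemma abs_le {e c l M : ℝ} {h : ℝ → ℝ} (hl : HasTrace e h c l) (hb : ∀ x, |h x| ≤ M) : |l| ≤ M :=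
  le_of_tendsto (hl (1 / 2) (by norm_num)).abs (Eventually.of_forall fun _ => hb _)

lemma measurable {Q : ℝ → ℝ → ℝ} (hQ : Measurable (Function.uncurry Q)) {e c : ℝ} {l : ℝ → ℝ}
    (hl : ∀ t, 0 < t → HasTrace e (fun x => Q x t) c (l t)) :
    Measurable ((Ioi 0).indicator l) := by
  refine measurable_of_tendsto_metrizable (f := fun n : ℕ =>
    (Ioi 0).indicator fun t => Q (c + (1 / ((n : ℝ) + 1)) * (1 / 2 - e)) t) (fun n => ?_) ?_
  · exact (hQ.comp (measurable_const.prodMk measurable_id)).indicator measurableSet_Ioi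
  · refine tendsto_pi_nhds.2 fun t => ?_
    by_cases ht : 0 < t
    · simp only [indicator_of_mem (mem_Ioi.2 ht)]
      refine (hl t ht (1 / 2) (by norm_num)).comp (tendsto_nhdsWithin_iff.2
        ⟨tendsto_one_div_add_atTop_nhds_zero_nat, Eventually.of_forall fun n => ?_⟩)
      exact mem_Ioi.2 (by positivity)
    · simpa only [indicator_of_notMem (mt mem_Ioi.1 ht)] using tendsto_const_nhds

end HasTrace

lemma contDiff_smoothStep (e c δ : ℝ) : ContDiff ℝ 1 (smoothStep e c δ) :=
  Real.smoothTransition.contDiff.comp (by fun_prop)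

lemma deriv_smoothStep (e c δ x : ℝ) :
    deriv (smoothStep e c δ) x = δ⁻¹ * deriv Real.smoothTransition ((x - c) / δ + e) := by
  have hinner : HasDerivAt (fun x => (x - c) / δ + e) (1 / δ) x :=
    (((hasDerivAt_id x).sub_const c).div_const δ).add_const e
  have hstep := (Real.smoothTransition.contDiff.differentiable (n := 1) one_ne_zero
    ((x - c) / δ + e)).hasDerivAt.comp x hinner
  rw [one_div, mul_comm] at hstep
  exact hstep.deriv

lemma integrable_deriv_smoothStep (e c : ℝ) {δ : ℝ} (hδ : 0 < δ) :
    Integrable (deriv (smoothStep e c δ)) := by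
  simp_rw [funext (deriv_smoothStep e c δ)]
  exact (((integrable_deriv_smoothTransition.comp_add_right e).comp_div hδ.ne').comp_sub_right
    c).const_mul _

lemma integral_mul_deriv_smoothStep (e c : ℝ) {δ : ℝ} (hδ : 0 < δ) (h : ℝ → ℝ) :
    ∫ x, h x * deriv (smoothStep e c δ) x =
      ∫ ξ, h (c + δ * (ξ - e)) * deriv Real.smoothTransition ξ := by
  have hshift := integral_add_right_eq_self (μ := volume)
    (fun x => h x * deriv (smoothStep e c δ) x) (c - δ * e)
  have hscale := Measure.integral_comp_mul_left
    (fun x => h (x + (c - δ * e)) * deriv (smoothStep e c δ) (x + (c - δ * e))) δ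
  rw [abs_of_pos (inv_pos.2 hδ), smul_eq_mul, hshift, eq_inv_mul_iff_mul_eq₀ hδ.ne',
    ← integral_const_mul] at hscale
  rw [← hscale]
  congr 1 with ξ
  have harg : (δ * ξ + (c - δ * e) - c) / δ + e = ξ := by field_simp; ring
  rw [deriv_smoothStep, harg, mul_left_comm, mul_inv_cancel_left₀ hδ.ne']
  ring_nf

lemma abs_integral_mul_deriv_smoothStep_le {e c M δ : ℝ} (hδ : 0 < δ) {h : ℝ → ℝ}
    (hb : ∀ x, |h x| ≤ M) : |∫ x, h x * deriv (smoothStep e c δ) x| ≤ M := by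
  have hM : ∫ ξ, M * deriv Real.smoothTransition ξ = M := by
    rw [integral_const_mul, integral_deriv_smoothTransition, mul_one]
  rw [integral_mul_deriv_smoothStep e c hδ, ← Real.norm_eq_abs]
  refine (norm_integral_le_of_norm_le (integrable_deriv_smoothTransition.const_mul M)
    (Eventually.of_forall fun ξ => ?_)).trans_eq hM
  rw [norm_mul, Real.norm_of_nonneg (deriv_smoothTransition_nonneg ξ)]
  exact mul_le_mul_of_nonneg_right (hb _) (deriv_smoothTransition_nonneg ξ)

lemma HasTrace.tendsto_integral_mul_deriv_smoothStep {e c l M : ℝ} {h : ℝ → ℝ}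
    (hl : HasTrace e h c l) (hm : Measurable h) (hb : ∀ x, |h x| ≤ M) :
    Tendsto (fun δ => ∫ x, h x * deriv (smoothStep e c δ) x) (𝓝[>] 0) (𝓝 l) := by
  have hlim : Tendsto (fun δ => ∫ ξ, h (c + δ * (ξ - e)) * deriv Real.smoothTransition ξ)
      (𝓝[>] 0) (𝓝 (∫ ξ, l * deriv Real.smoothTransition ξ)) := by
    refine tendsto_integral_filter_of_dominated_convergence
      (fun ξ => M * deriv Real.smoothTransition ξ) (Eventually.of_forall fun δ => ?_)
      (Eventually.of_forall fun δ => Eventually.of_forall fun ξ => ?_)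
      (integrable_deriv_smoothTransition.const_mul M) (Eventually.of_forall fun ξ => ?_)
    · exact ((hm.comp (by fun_prop)).mul
        continuous_deriv_smoothTransition.measurable).aestronglyMeasurable
    · rw [norm_mul, Real.norm_of_nonneg (deriv_smoothTransition_nonneg ξ)]
      exact mul_le_mul_of_nonneg_right (hb _) (deriv_smoothTransition_nonneg ξ)
    · by_cases hξ : ξ ∈ Ioo (0 : ℝ) 1
      · exact (hl ξ hξ).mul_const _
      · simp [deriv_smoothTransition_eq_zero hξ]
  rw [integral_const_mul, integral_deriv_smoothTransition, mul_one] at hlim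
  refine hlim.congr' ?_
  filter_upwards [self_mem_nhdsWithin] with δ hδ
  rw [integral_mul_deriv_smoothStep e c hδ]

lemma tendsto_smoothStep {e c x : ℝ} (hx : x ≠ c) :
    Tendsto (fun δ => smoothStep e c δ x) (𝓝[>] 0) (𝓝 (if c < x then 1 else 0)) := by
  refine tendsto_const_nhds.congr' ?_
  have hsmall : Ioo 0 (|x - c| / (|e| + 1)) ∈ 𝓝[>] (0 : ℝ) :=
    Ioo_mem_nhdsGT (div_pos (abs_pos.2 (sub_ne_zero.2 hx)) (by positivity))
  filter_upwards [hsmall] with δ hδ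
  have hfar := (lt_div_iff₀ (by positivity)).1 hδ.2
  rcases lt_or_gt_of_ne hx with hlt | hlt
  · rw [abs_of_neg (sub_neg.2 hlt)] at hfar
    have : (x - c) / δ ≤ -(|e| + 1) := by rw [div_le_iff₀ hδ.1]; linarith
    rw [if_neg hlt.not_gt, smoothStep,
      Real.smoothTransition.zero_of_nonpos (by linarith [le_abs_self e])]
  · rw [abs_of_pos (sub_pos.2 hlt)] at hfar
    have : |e| + 1 ≤ (x - c) / δ := by rw [le_div_iff₀ hδ.1]; linarith
    rw [if_pos hlt, smoothStep,
      Real.smoothTransition.one_of_one_le (by linarith [neg_abs_le e])]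

lemma contDiff_smoothBump (e₁ c₁ e₂ c₂ δ : ℝ) : ContDiff ℝ 1 (smoothBump e₁ c₁ e₂ c₂ δ) :=
  (contDiff_smoothStep _ _ _).sub (contDiff_smoothStep _ _ _)

lemma deriv_smoothBump (e₁ c₁ e₂ c₂ δ x : ℝ) :
    deriv (smoothBump e₁ c₁ e₂ c₂ δ) x =
      deriv (smoothStep e₁ c₁ δ) x - deriv (smoothStep e₂ c₂ δ) x :=
  deriv_fun_sub ((contDiff_smoothStep _ _ _).differentiable one_ne_zero x)
    ((contDiff_smoothStep _ _ _).differentiable one_ne_zero x)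

lemma abs_smoothBump_le_one (e₁ c₁ e₂ c₂ δ x : ℝ) : |smoothBump e₁ c₁ e₂ c₂ δ x| ≤ 1 :=
  abs_sub_le_of_nonneg_of_le (Real.smoothTransition.nonneg _) (Real.smoothTransition.le_one _)
    (Real.smoothTransition.nonneg _) (Real.smoothTransition.le_one _)

section Bump

variable {e₁ c₁ e₂ c₂ δ : ℝ}

lemma smoothBump_nonneg (he : e₂ ≤ e₁) (hc : c₁ ≤ c₂) (hδ : 0 < δ) (x : ℝ) :
    0 ≤ smoothBump e₁ c₁ e₂ c₂ δ x :=
  sub_nonneg.2 (Real.smoothTransition.monotone (by gcongr))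

lemma smoothBump_eq_zero (he₁ : e₁ ≤ 1) (he₂ : 0 ≤ e₂) (he : e₂ ≤ e₁) (hc : c₁ ≤ c₂)
    (hδ : δ ∈ Ioc 0 1) {x : ℝ} (hx : x ∉ Icc (c₁ - 1) (c₂ + 1)) :
    smoothBump e₁ c₁ e₂ c₂ δ x = 0 := by
  have hdiv_le {y : ℝ} (hy : y ≤ -1) : y / δ ≤ -1 := by
    rw [div_le_iff₀ hδ.1]; linarith [hδ.2]
  have hle_div {y : ℝ} (hy : 1 ≤ y) : 1 ≤ y / δ := by
    rw [le_div_iff₀ hδ.1]; linarith [hδ.2]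
  unfold smoothBump smoothStep
  rcases not_and_or.1 hx with hlt | hlt <;> rw [not_le] at hlt
  · have h₁ := hdiv_le (y := x - c₁) (by linarith)
    have h₂ := hdiv_le (y := x - c₂) (by linarith)
    rw [Real.smoothTransition.zero_of_nonpos (by linarith),
      Real.smoothTransition.zero_of_nonpos (by linarith), sub_zero]
  · have h₁ := hle_div (y := x - c₁) (by linarith)
    have h₂ := hle_div (y := x - c₂) (by linarith)
    rw [Real.smoothTransition.one_of_one_le (by linarith),
      Real.smoothTransition.one_of_one_le (by linarith), sub_self]

lemma hasCompactSupport_smoothBump (he₁ : e₁ ≤ 1) (he₂ : 0 ≤ e₂) (he : e₂ ≤ e₁) (hc : c₁ ≤ c₂)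
    (hδ : δ ∈ Ioc 0 1) : HasCompactSupport (smoothBump e₁ c₁ e₂ c₂ δ) :=
  HasCompactSupport.intro isCompact_Icc fun _ hx => smoothBump_eq_zero he₁ he₂ he hc hδ hx

lemma smoothBump_zero_eq_zero (hc : c₁ ≤ c₂) (hδ : 0 < δ) {x : ℝ} (hx : x ≤ c₁) :
    smoothBump 0 c₁ 0 c₂ δ x = 0 := by
  have hnonpos {c : ℝ} (hxc : x ≤ c) : (x - c) / δ + 0 ≤ 0 := by
    simpa using div_nonpos_of_nonpos_of_nonneg (sub_nonpos.2 hxc) hδ.le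
  rw [smoothBump, smoothStep, smoothStep, Real.smoothTransition.zero_of_nonpos (hnonpos hx),
    Real.smoothTransition.zero_of_nonpos (hnonpos (hx.trans hc)), sub_zero]

lemma tendsto_smoothBump (hc : c₁ ≤ c₂) {x : ℝ} (hx₁ : x ≠ c₁) (hx₂ : x ≠ c₂) :
    Tendsto (fun δ => smoothBump e₁ c₁ e₂ c₂ δ x) (𝓝[>] 0)
      (𝓝 ((Ioc c₁ c₂).indicator 1 x)) := by
  unfold smoothBump
  convert (tendsto_smoothStep (e := e₁) hx₁).sub (tendsto_smoothStep (e := e₂) hx₂) using 2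
  simp only [indicator, mem_Ioc, Pi.one_apply]
  grind

variable {h : ℝ → ℝ} {M : ℝ}

lemma abs_mul_smoothBump_le_indicator (he₁ : e₁ ≤ 1) (he₂ : 0 ≤ e₂) (he : e₂ ≤ e₁) (hc : c₁ ≤ c₂)
    (hδ : δ ∈ Ioc 0 1) (hb : ∀ x, |h x| ≤ M) (x : ℝ) :
    |h x * smoothBump e₁ c₁ e₂ c₂ δ x| ≤ (Icc (c₁ - 1) (c₂ + 1)).indicator (fun _ => M) x := by
  by_cases hx : x ∈ Icc (c₁ - 1) (c₂ + 1)
  · rw [indicator_of_mem hx, abs_mul]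
    exact (mul_le_of_le_one_right (abs_nonneg _) (abs_smoothBump_le_one ..)).trans (hb x)
  · rw [indicator_of_notMem hx, smoothBump_eq_zero he₁ he₂ he hc hδ hx, mul_zero, abs_zero]

lemma abs_integral_mul_smoothBump_le (he₁ : e₁ ≤ 1) (he₂ : 0 ≤ e₂) (he : e₂ ≤ e₁) (hc : c₁ ≤ c₂)
    (hδ : δ ∈ Ioc 0 1) (hb : ∀ x, |h x| ≤ M) :
    |∫ x, h x * smoothBump e₁ c₁ e₂ c₂ δ x| ≤ M * (c₂ - c₁ + 2) := by
  have hint : Integrable ((Icc (c₁ - 1) (c₂ + 1)).indicator fun _ => M) :=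
    (integrable_indicator_iff measurableSet_Icc).2 (integrableOn_const (by simp))
  refine (norm_integral_le_of_norm_le (f := fun x => h x * smoothBump e₁ c₁ e₂ c₂ δ x) hint
    (Eventually.of_forall (abs_mul_smoothBump_le_indicator he₁ he₂ he hc hδ hb))).trans_eq ?_
  rw [integral_indicator measurableSet_Icc, setIntegral_const, Real.volume_real_Icc_of_le
    (by linarith), smul_eq_mul]
  ring

lemma tendsto_integral_mul_smoothBump (he₁ : e₁ ≤ 1) (he₂ : 0 ≤ e₂) (he : e₂ ≤ e₁)
    (hc : c₁ ≤ c₂) (hm : Measurable h) (hb : ∀ x, |h x| ≤ M) :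
    Tendsto (fun δ => ∫ x, h x * smoothBump e₁ c₁ e₂ c₂ δ x) (𝓝[>] 0)
      (𝓝 (∫ x in Ioc c₁ c₂, h x)) := by
  rw [← integral_indicator measurableSet_Ioc]
  refine tendsto_integral_filter_of_dominated_convergence
    ((Icc (c₁ - 1) (c₂ + 1)).indicator fun _ => M)
    (Eventually.of_forall fun δ =>
      (hm.mul (contDiff_smoothBump ..).continuous.measurable).aestronglyMeasurable)
    ?_ ((integrable_indicator_iff measurableSet_Icc).2 (integrableOn_const (by simp))) ?_
  · filter_upwards [Ioc_mem_nhdsGT one_pos] with δ hδ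
    exact Eventually.of_forall (abs_mul_smoothBump_le_indicator he₁ he₂ he hc hδ hb)
  · filter_upwards [Measure.ae_ne volume c₁, Measure.ae_ne volume c₂] with x hx₁ hx₂
    convert (tendsto_smoothBump (e₁ := e₁) (e₂ := e₂) hc hx₁ hx₂).const_mul (h x) using 2
    by_cases hx : x ∈ Ioc c₁ c₂ <;> simp [hx]

lemma integral_mul_deriv_smoothBump (hδ : 0 < δ) (hm : Measurable h) (hb : ∀ x, |h x| ≤ M) :
    ∫ x, h x * deriv (smoothBump e₁ c₁ e₂ c₂ δ) x =
      (∫ x, h x * deriv (smoothStep e₁ c₁ δ) x) - ∫ x, h x * deriv (smoothStep e₂ c₂ δ) x := by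
  rw [← integral_sub (integrable_mul_of_abs_le hm hb (integrable_deriv_smoothStep _ _ hδ))
    (integrable_mul_of_abs_le hm hb (integrable_deriv_smoothStep _ _ hδ))]
  simp_rw [deriv_smoothBump, mul_sub]

lemma abs_integral_mul_deriv_smoothBump_le (hδ : 0 < δ) (hm : Measurable h)
    (hb : ∀ x, |h x| ≤ M) : |∫ x, h x * deriv (smoothBump e₁ c₁ e₂ c₂ δ) x| ≤ 2 * M := by
  rw [integral_mul_deriv_smoothBump hδ hm hb, two_mul]
  exact (abs_sub _ _).trans (add_le_add (abs_integral_mul_deriv_smoothStep_le hδ hb)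
    (abs_integral_mul_deriv_smoothStep_le hδ hb))

lemma tendsto_integral_mul_deriv_smoothBump {l₁ l₂ : ℝ} (hl₁ : HasTrace e₁ h c₁ l₁)
    (hl₂ : HasTrace e₂ h c₂ l₂) (hm : Measurable h) (hb : ∀ x, |h x| ≤ M) :
    Tendsto (fun δ => ∫ x, h x * deriv (smoothBump e₁ c₁ e₂ c₂ δ) x) (𝓝[>] 0)
      (𝓝 (l₁ - l₂)) := by
  refine ((hl₁.tendsto_integral_mul_deriv_smoothStep hm hb).sub
    (hl₂.tendsto_integral_mul_deriv_smoothStep hm hb)).congr' ?_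
  filter_upwards [self_mem_nhdsWithin] with δ hδ
  rw [integral_mul_deriv_smoothBump hδ hm hb]

end Bump

lemma deriv_eq_zero_of_eqOn_Iic {θ : ℝ → ℝ} {c : ℝ} (hθ : Continuous (deriv θ))
    (hzero : ∀ t ≤ c, θ t = 0) {t : ℝ} (ht : t ≤ c) : deriv θ t = 0 := by
  have hIio : EqOn (deriv θ) 0 (Iio c) := fun s hs => by
    have : θ =ᶠ[𝓝 s] fun _ => 0 := by
      filter_upwards [Iio_mem_nhds hs] with r hr using hzero r (le_of_lt hr)
    rw [this.deriv_eq, deriv_const, Pi.zero_apply]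
  exact hIio.closure hθ continuous_const (by rwa [closure_Iio])

lemma measurable_integral_mul {F : ℝ → ℝ → ℝ} {w : ℝ → ℝ} {s : Set ℝ}
    (hF : Measurable (Function.uncurry F)) (hw : Measurable w) :
    Measurable fun t => ∫ x in s, F x t * w x :=
  (StronglyMeasurable.integral_prod_right (f := fun t x => F x t * w x) (ν := volume.restrict s)
    ((hF.comp measurable_swap).mul (hw.comp measurable_snd)).stronglyMeasurable).measurable

section ProductTest

variable {E Q : ℝ → ℝ → ℝ} {M : ℝ} (hE : Measurable (Function.uncurry E))
  (hQ : Measurable (Function.uncurry Q)) (hbE : ∀ x t, |E x t| ≤ M) (hbQ : ∀ x t, |Q x t| ≤ M)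
  {θ : ℝ → ℝ} (hθ : ContDiff ℝ 1 θ) (hθc : HasCompactSupport θ)
include hE hQ hbE hbQ hθ hθc

lemma integral_product_test {χ : ℝ → ℝ} (hχ : ContDiff ℝ 1 χ) (hχc : HasCompactSupport χ) :
    ∫ p : ℝ × ℝ, (E p.1 p.2 * deriv (fun s => χ p.1 * θ s) p.2 +
        Q p.1 p.2 * deriv (fun y => χ y * θ p.2) p.1) =
      ∫ t, (deriv θ t * (∫ x, E x t * χ x) + θ t * ∫ x, Q x t * deriv χ x) := by
  have hχi := hχ.continuous.integrable_of_hasCompactSupport (μ := volume) hχc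
  have hχi' := (hχ.continuous_deriv le_rfl).integrable_of_hasCompactSupport (μ := volume) hχc.deriv
  have hθi := hθ.continuous.integrable_of_hasCompactSupport (μ := volume) hθc
  have hθi' := (hθ.continuous_deriv le_rfl).integrable_of_hasCompactSupport (μ := volume) hθc.deriv
  have hintegrand : ∀ p : ℝ × ℝ, E p.1 p.2 * deriv (fun s => χ p.1 * θ s) p.2 +
      Q p.1 p.2 * deriv (fun y => χ y * θ p.2) p.1 =
      E p.1 p.2 * (χ p.1 * deriv θ p.2) + Q p.1 p.2 * (deriv χ p.1 * θ p.2) := fun p => by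
    rw [deriv_const_mul _ (hθ.differentiable one_ne_zero _),
      deriv_mul_const (hχ.differentiable one_ne_zero _)]
  have hintE : Integrable (fun p : ℝ × ℝ => E p.1 p.2 * (χ p.1 * deriv θ p.2)) :=
    integrable_mul_of_abs_le hE (fun p => hbE p.1 p.2) (hχi.mul_prod hθi')
  have hintQ : Integrable (fun p : ℝ × ℝ => Q p.1 p.2 * (deriv χ p.1 * θ p.2)) :=
    integrable_mul_of_abs_le hQ (fun p => hbQ p.1 p.2) (hχi'.mul_prod hθi)
  simp_rw [hintegrand]
  rw [Measure.volume_eq_prod, integral_prod_symm _ (by exact hintE.add hintQ)]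
  congr 1 with t
  have hintE_t : Integrable fun x => E x t * χ x :=
    integrable_mul_of_abs_le hE.of_uncurry_right (fun x => hbE x t) hχi
  have hintQ_t : Integrable fun x => Q x t * deriv χ x :=
    integrable_mul_of_abs_le hQ.of_uncurry_right (fun x => hbQ x t) hχi'
  rw [← integral_const_mul, ← integral_const_mul,
    ← integral_add (hintE_t.const_mul _) (hintQ_t.const_mul _)]
  congr 1 with x
  ring

variable {e₁ c₁ e₂ c₂ : ℝ} (he₁ : e₁ ≤ 1) (he₂ : 0 ≤ e₂) (he : e₂ ≤ e₁) (hc : c₁ ≤ c₂)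
  {l₁ l₂ : ℝ → ℝ} (hl₁ : ∀ t, 0 < t → HasTrace e₁ (fun x => Q x t) c₁ (l₁ t))
  (hl₂ : ∀ t, 0 < t → HasTrace e₂ (fun x => Q x t) c₂ (l₂ t))
include he₁ he₂ he hc hl₁ hl₂

lemma tendsto_integral_product_smoothBump (hθ₀ : ∀ t ≤ 0, θ t = 0) :
    Tendsto (fun δ => ∫ p : ℝ × ℝ,
        (E p.1 p.2 * deriv (fun s => smoothBump e₁ c₁ e₂ c₂ δ p.1 * θ s) p.2 +
          Q p.1 p.2 * deriv (fun y => smoothBump e₁ c₁ e₂ c₂ δ y * θ p.2) p.1)) (𝓝[>] 0)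
      (𝓝 (∫ t, (deriv θ t * (∫ x in Ioc c₁ c₂, E x t) + θ t * (l₁ t - l₂ t)))) := by
  have hθ' := hθ.continuous_deriv le_rfl
  have hlim : Tendsto (fun δ => ∫ t, (deriv θ t * (∫ x, E x t * smoothBump e₁ c₁ e₂ c₂ δ x) +
      θ t * ∫ x, Q x t * deriv (smoothBump e₁ c₁ e₂ c₂ δ) x)) (𝓝[>] 0)
      (𝓝 (∫ t, (deriv θ t * (∫ x in Ioc c₁ c₂, E x t) + θ t * (l₁ t - l₂ t)))) := by
    refine tendsto_integral_filter_of_dominated_convergence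
      (fun t => |deriv θ t| * (M * (c₂ - c₁ + 2)) + |θ t| * (2 * M))
      (Eventually.of_forall fun δ => ?_) ?_ ?_ (Eventually.of_forall fun t => ?_)
    · have hE_meas := measurable_integral_mul (s := univ) hE
        (contDiff_smoothBump e₁ c₁ e₂ c₂ δ).continuous.measurable
      have hQ_meas := measurable_integral_mul (s := univ) hQ
        (measurable_deriv (smoothBump e₁ c₁ e₂ c₂ δ))
      rw [Measure.restrict_univ] at hE_meas hQ_meas
      exact ((hθ'.measurable.mul hE_meas).add
        (hθ.continuous.measurable.mul hQ_meas)).aestronglyMeasurable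
    · filter_upwards [Ioc_mem_nhdsGT one_pos] with δ hδ
      refine Eventually.of_forall fun t => (norm_add_le _ _).trans ?_
      simp only [norm_mul, Real.norm_eq_abs]
      gcongr
      · exact abs_integral_mul_smoothBump_le he₁ he₂ he hc hδ fun x => hbE x t
      · exact abs_integral_mul_deriv_smoothBump_le hδ.1 hQ.of_uncurry_right fun x => hbQ x t
    · exact ((hθ'.integrable_of_hasCompactSupport hθc.deriv).abs.mul_const _).add
        ((hθ.continuous.integrable_of_hasCompactSupport hθc).abs.mul_const _)
    · rcases le_or_gt t 0 with ht | ht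
      · simp [hθ₀ t ht, deriv_eq_zero_of_eqOn_Iic hθ' hθ₀ ht]
      · exact ((tendsto_integral_mul_smoothBump he₁ he₂ he hc hE.of_uncurry_right
          fun x => hbE x t).const_mul _).add ((tendsto_integral_mul_deriv_smoothBump (hl₁ t ht)
            (hl₂ t ht) hQ.of_uncurry_right fun x => hbQ x t).const_mul _)
  refine hlim.congr' ?_
  filter_upwards [Ioc_mem_nhdsGT one_pos] with δ hδ
  exact (integral_product_test hE hQ hbE hbQ hθ hθc (contDiff_smoothBump ..)
    (hasCompactSupport_smoothBump he₁ he₂ he hc hδ)).symm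

lemma integral_trace_test_nonneg (hθ₀ : ∀ t ≤ 0, θ t = 0) (hθn : ∀ t, 0 ≤ θ t)
    (htest : ∀ φ : ℝ → ℝ → ℝ, ContDiff ℝ 1 (fun p : ℝ × ℝ => φ p.1 p.2) →
      HasCompactSupport (fun p : ℝ × ℝ => φ p.1 p.2) → (∀ x t, 0 ≤ φ x t) →
      (∀ x t, t ≤ 0 → φ x t = 0) →
      0 ≤ ∫ p : ℝ × ℝ, (E p.1 p.2 * deriv (fun s => φ p.1 s) p.2 +
        Q p.1 p.2 * deriv (fun y => φ y p.2) p.1)) :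
    0 ≤ ∫ t, (deriv θ t * (∫ x in Ioc c₁ c₂, E x t) + θ t * (l₁ t - l₂ t)) := by
  refine ge_of_tendsto (tendsto_integral_product_smoothBump hE hQ hbE hbQ hθ hθc he₁ he₂ he hc
    hl₁ hl₂ hθ₀) ?_
  filter_upwards [Ioc_mem_nhdsGT one_pos] with δ hδ
  refine htest (fun x t => smoothBump e₁ c₁ e₂ c₂ δ x * θ t) ?_ ?_
    (fun x t => mul_nonneg (smoothBump_nonneg he hc hδ.1 x) (hθn t))
    (fun x t ht => by rw [hθ₀ t ht, mul_zero])
  · exact ((contDiff_smoothBump ..).comp contDiff_fst).mul (hθ.comp contDiff_snd)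
  · refine HasCompactSupport.intro
      ((hasCompactSupport_smoothBump he₁ he₂ he hc hδ).isCompact.prod hθc.isCompact) fun p hp => ?_
    by_contra hne
    exact hp ⟨subset_tsupport _ (left_ne_zero_of_mul hne),
      subset_tsupport _ (right_ne_zero_of_mul hne)⟩

end ProductTest

lemma le_add_integral_Ioc_of_forall_test {g q : ℝ → ℝ} {M N : ℝ} (hg : Measurable g)
    (hbg : ∀ t, |g t| ≤ M) (hq : Measurable q) (hbq : ∀ t, |q t| ≤ N)
    (htest : ∀ θ : ℝ → ℝ, ContDiff ℝ 1 θ → HasCompactSupport θ → (∀ t ≤ 0, θ t = 0) →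
      (∀ t, 0 ≤ θ t) → 0 ≤ ∫ t, (deriv θ t * g t + θ t * q t))
    {t₁ t₂ : ℝ} (ht₁ : 0 < t₁) (ht : t₁ ≤ t₂) (hg₁ : Tendsto g (𝓝[>] t₁) (𝓝 (g t₁)))
    (hg₂ : Tendsto g (𝓝[>] t₂) (𝓝 (g t₂))) :
    g t₂ ≤ g t₁ + ∫ t in Ioc t₁ t₂, q t := by
  have hlim := (tendsto_integral_mul_deriv_smoothBump (hasTrace_right hg₁) (hasTrace_right hg₂)
    hg hbg).add (tendsto_integral_mul_smoothBump zero_le_one le_rfl le_rfl ht hq hbq)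
  suffices 0 ≤ g t₁ - g t₂ + ∫ t in Ioc t₁ t₂, q t by linarith
  refine ge_of_tendsto hlim ?_
  filter_upwards [Ioc_mem_nhdsGT one_pos] with δ hδ
  have hsupp : HasCompactSupport (smoothBump 0 t₁ 0 t₂ δ) :=
    hasCompactSupport_smoothBump zero_le_one le_rfl le_rfl ht hδ
  have hsmooth := contDiff_smoothBump 0 t₁ 0 t₂ δ
  have hint₁ : Integrable fun t => g t * deriv (smoothBump 0 t₁ 0 t₂ δ) t :=
    integrable_mul_of_abs_le hg hbg
      ((hsmooth.continuous_deriv le_rfl).integrable_of_hasCompactSupport hsupp.deriv)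
  have hint₂ : Integrable fun t => q t * smoothBump 0 t₁ 0 t₂ δ t :=
    integrable_mul_of_abs_le hq hbq (hsmooth.continuous.integrable_of_hasCompactSupport hsupp)
  rw [← integral_add hint₁ hint₂]
  simpa only [mul_comm] using htest _ hsmooth hsupp
    (fun t h => smoothBump_zero_eq_zero ht hδ.1 (h.trans ht₁.le))
    (smoothBump_nonneg le_rfl ht hδ.1)

/-- Testing a weak inequality `∂ₜE + ∂ₓQ ≤ 0` against approximate indicators of the rectangle
`(c₁, c₂) × (t₁, t₂)` gives its integrated form, the boundary terms being the traces of `Q`. -/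
lemma rectangle_inequality {E Q : ℝ → ℝ → ℝ} {M : ℝ} (hE : Measurable (Function.uncurry E))
    (hQ : Measurable (Function.uncurry Q)) (hbE : ∀ x t, |E x t| ≤ M) (hbQ : ∀ x t, |Q x t| ≤ M)
    {e₁ c₁ e₂ c₂ : ℝ} (he₁ : e₁ ≤ 1) (he₂ : 0 ≤ e₂) (he : e₂ ≤ e₁) (hc : c₁ ≤ c₂) {l₁ l₂ : ℝ → ℝ}
    (hl₁ : ∀ t, 0 < t → HasTrace e₁ (fun x => Q x t) c₁ (l₁ t))
    (hl₂ : ∀ t, 0 < t → HasTrace e₂ (fun x => Q x t) c₂ (l₂ t))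
    (htest : ∀ φ : ℝ → ℝ → ℝ, ContDiff ℝ 1 (fun p : ℝ × ℝ => φ p.1 p.2) →
      HasCompactSupport (fun p : ℝ × ℝ => φ p.1 p.2) → (∀ x t, 0 ≤ φ x t) →
      (∀ x t, t ≤ 0 → φ x t = 0) →
      0 ≤ ∫ p : ℝ × ℝ, (E p.1 p.2 * deriv (fun s => φ p.1 s) p.2 +
        Q p.1 p.2 * deriv (fun y => φ y p.2) p.1))
    {t₁ t₂ : ℝ} (ht₁ : 0 < t₁) (ht : t₁ ≤ t₂)
    (hcont₁ : Tendsto (fun t => ∫ x in Ioc c₁ c₂, E x t) (𝓝[>] t₁) (𝓝 (∫ x in Ioc c₁ c₂, E x t₁)))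
    (hcont₂ : Tendsto (fun t => ∫ x in Ioc c₁ c₂, E x t) (𝓝[>] t₂)
      (𝓝 (∫ x in Ioc c₁ c₂, E x t₂))) :
    ∫ x in Ioc c₁ c₂, E x t₂ ≤ (∫ x in Ioc c₁ c₂, E x t₁) + ∫ t in Ioc t₁ t₂, (l₁ t - l₂ t) := by
  have hg_meas : Measurable fun t => ∫ x in Ioc c₁ c₂, E x t := by
    simpa only [mul_one] using
      measurable_integral_mul hE (w := fun _ => 1) (s := Ioc c₁ c₂) measurable_const
  have hq_bound (t : ℝ) : |(Ioi 0).indicator l₁ t - (Ioi 0).indicator l₂ t| ≤ 2 * M := by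
    rcases le_or_gt t 0 with h | h
    · simpa [h.not_gt] using (abs_nonneg _).trans (hbE 0 0)
    · simp only [indicator_of_mem (mem_Ioi.2 h), two_mul]
      exact (abs_sub _ _).trans (add_le_add ((hl₁ t h).abs_le fun x => hbQ x t)
        ((hl₂ t h).abs_le fun x => hbQ x t))
  have hpos : EqOn (fun t => (Ioi 0).indicator l₁ t - (Ioi 0).indicator l₂ t)
      (fun t => l₁ t - l₂ t) (Ioi 0) := fun t h => by simp only [indicator_of_mem h]
  rw [← setIntegral_congr_fun measurableSet_Ioc (hpos.mono fun t h => ht₁.trans h.1)]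
  refine le_add_integral_Ioc_of_forall_test hg_meas
    (fun t => abs_integral_Ioc_le (fun x => hbE x t) hc)
    ((HasTrace.measurable hQ hl₁).sub (HasTrace.measurable hQ hl₂)) hq_bound
    (fun θ hθ hθc hθ₀ hθn => (integral_trace_test_nonneg hE hQ hbE hbQ hθ hθc
      he₁ he₂ he hc hl₁ hl₂ hθ₀ hθn htest).trans_eq ?_) ht₁ ht hcont₁ hcont₂
  congr 1 with t
  rcases le_or_gt t 0 with h | h
  · simp only [hθ₀ t h, zero_mul]
  · simp [indicator_of_mem (mem_Ioi.2 h)]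

/-! ### The Hamilton–Jacobi potential -/

lemma ae_nonneg_of_forall_setIntegral_Ioc {q : ℝ → ℝ} (hq : LocallyIntegrable q)
    (hint : ∀ t₁ t₂, 0 < t₁ → t₁ ≤ t₂ → 0 ≤ ∫ t in Ioc t₁ t₂, q t) :
    ∀ᵐ t : ℝ, 0 < t → 0 ≤ q t := by
  filter_upwards [LocallyIntegrable.ae_hasDerivAt_integral hq] with t ht ht₀
  have hslope := (hasDerivWithinAt_iff_tendsto_slope' (by simp)).1
    ((ht 0).hasDerivWithinAt (s := Ioi t))
  refine ge_of_tendsto hslope ?_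
  filter_upwards [self_mem_nhdsWithin] with s (hs : t < s)
  have hI : ∀ a b, IntervalIntegrable q volume a b := fun a b =>
    (hq.integrableOn_isCompact isCompact_uIcc).intervalIntegrable
  rw [slope_def_field, intervalIntegral.integral_interval_sub_left (hI 0 s) (hI 0 t),
    intervalIntegral.integral_of_le hs.le]
  exact div_nonneg (hint t s ht₀ hs.le) (sub_pos.2 hs).le

lemma locallyIntegrable_of_abs_le {g : ℝ → ℝ} {M : ℝ} (hg : Measurable g)
    (hb : ∀ x, |g x| ≤ M) : LocallyIntegrable g :=
  (locallyIntegrable_const M).mono hg.aestronglyMeasurable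
    (Eventually.of_forall fun x => (hb x).trans (le_abs_self M))

lemma intervalIntegrable_of_abs_le {g : ℝ → ℝ} {M : ℝ} (hg : Measurable g)
    (hb : ∀ x, |g x| ≤ M) (a b : ℝ) : IntervalIntegrable g volume a b :=
  ((locallyIntegrable_of_abs_le hg hb).integrableOn_isCompact isCompact_uIcc).intervalIntegrable

lemma HasTrace.ae_le_of_forall_test {E Q : ℝ → ℝ → ℝ} {M : ℝ}
    (hE : Measurable (Function.uncurry E)) (hQ : Measurable (Function.uncurry Q))
    (hbE : ∀ x t, |E x t| ≤ M) (hbQ : ∀ x t, |Q x t| ≤ M) {c : ℝ} {l₁ l₂ : ℝ → ℝ}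
    (hl₁ : ∀ t, 0 < t → HasTrace 1 (fun x => Q x t) c (l₁ t))
    (hl₂ : ∀ t, 0 < t → HasTrace 0 (fun x => Q x t) c (l₂ t))
    (htest : ∀ φ : ℝ → ℝ → ℝ, ContDiff ℝ 1 (fun p : ℝ × ℝ => φ p.1 p.2) →
      HasCompactSupport (fun p : ℝ × ℝ => φ p.1 p.2) → (∀ x t, 0 ≤ φ x t) →
      (∀ x t, t ≤ 0 → φ x t = 0) →
      0 ≤ ∫ p : ℝ × ℝ, (E p.1 p.2 * deriv (fun s => φ p.1 s) p.2 +
        Q p.1 p.2 * deriv (fun y => φ y p.2) p.1)) :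
    ∀ᵐ t : ℝ, 0 < t → l₂ t ≤ l₁ t := by
  have hbound : ∀ {e : ℝ} {l : ℝ → ℝ}, (∀ t, 0 < t → HasTrace e (fun x => Q x t) c (l t)) →
      ∀ t, |(Ioi 0).indicator l t| ≤ M := fun hl t => by
    by_cases ht : 0 < t
    · simpa [indicator_of_mem (mem_Ioi.2 ht)] using (hl t ht).abs_le fun x => hbQ x t
    · simpa [ht] using (abs_nonneg _).trans (hbQ 0 0)
  have hloc := (locallyIntegrable_of_abs_le (HasTrace.measurable hQ hl₁) (hbound hl₁)).sub
    (locallyIntegrable_of_abs_le (HasTrace.measurable hQ hl₂) (hbound hl₂))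
  have hae := ae_nonneg_of_forall_setIntegral_Ioc hloc fun t₁ t₂ ht₁ ht => by
    have hrect := rectangle_inequality hE hQ hbE hbQ le_rfl le_rfl zero_le_one le_rfl hl₁ hl₂
      htest ht₁ ht (by simp) (by simp)
    simp only [Ioc_self, Measure.restrict_empty, integral_zero_measure, zero_add] at hrect
    refine hrect.trans_eq (setIntegral_congr_fun measurableSet_Ioc fun t ht => ?_)
    simp [ht₁.trans ht.1]
  filter_upwards [hae] with t ht ht₀
  simpa [ht₀] using ht ht₀

lemma sign_sub_mul_sub_eq (f : ℝ → ℝ) (w a : ℝ) :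
    Real.sign (w - a) * (f w - f a) = f (max w a) - f (min w a) := by
  rcases lt_trichotomy w a with h | rfl | h
  · simp [Real.sign_of_neg (sub_neg.2 h), h.le]
  · simp
  · simp [Real.sign_of_pos (sub_pos.2 h), h.le]

lemma continuous_sign_sub_mul_sub {f : ℝ → ℝ} (hf : Continuous f) (a : ℝ) :
    Continuous fun w => Real.sign (w - a) * (f w - f a) := by
  simp only [sign_sub_mul_sub_eq]
  fun_prop

section Dflux

variable {fl fr : ℝ → ℝ}

lemma dflux_of_neg {x : ℝ} (hx : x < 0) (w : ℝ) : dflux fl fr x w = fl w := if_pos hx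

lemma dflux_of_nonneg {x : ℝ} (hx : 0 ≤ x) (w : ℝ) : dflux fl fr x w = fr w := if_neg hx.not_gt

lemma cAB_of_nonpos {A B x : ℝ} (hx : x ≤ 0) : cAB A B x = A := if_pos hx

lemma cAB_of_pos {A B x : ℝ} (hx : 0 < x) : cAB A B x = B := if_neg hx.not_ge

lemma measurable_cAB (A B : ℝ) : Measurable (cAB A B) :=
  measurable_const.ite measurableSet_Iic measurable_const

lemma abs_sign_mul_le (x y : ℝ) : |Real.sign x * y| ≤ |y| := by
  rcases Real.sign_apply_eq x with h | h | h <;> simp [h]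

lemma measurable_sign_real : Measurable Real.sign :=
  measurable_const.ite measurableSet_Iio (measurable_const.ite measurableSet_Ioi measurable_const)

lemma measurable_dflux (hl : Continuous fl) (hr : Continuous fr) {α : Type*} [MeasurableSpace α]
    {x u : α → ℝ} (hx : Measurable x) (hu : Measurable u) :
    Measurable fun z => dflux fl fr (x z) (u z) :=
  (hl.measurable.comp hu).ite (measurableSet_lt hx measurable_const) (hr.measurable.comp hu)

end Dflux

namespace ABSol

variable {fl fr : ℝ → ℝ} {A B : ℝ} {u0 : ℝ → ℝ} (s : ABSol fl fr A B u0)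

lemma measurable_slice (t : ℝ) : Measurable fun x => s.u x t :=
  s.meas.comp (measurable_id.prodMk measurable_const)

lemma intervalIntegrable_comp_u {g : ℝ → ℝ} (hg : Continuous g) (t a b : ℝ) :
    IntervalIntegrable (fun x => g (s.u x t)) volume a b := by
  obtain ⟨M, hM⟩ := s.bdd
  obtain ⟨N, hN⟩ := (isCompact_Icc (a := -M) (b := M)).exists_bound_of_continuousOn hg.continuousOn
  exact intervalIntegrable_of_abs_le (hg.measurable.comp (s.measurable_slice t))
    (fun x => hN _ (abs_le.1 (hM x t))) a b

lemma intervalIntegrable_u (t a b : ℝ) : IntervalIntegrable (fun x => s.u x t) volume a b :=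
  s.intervalIntegrable_comp_u continuous_id t a b

/-- `M` bounds the solution and `L` bounds both fluxes on the values allowed by `M`. -/
structure BoundedBy (M L : ℝ) : Prop where
  pos : 0 < M
  flux_pos : 0 < L
  abs_u_le : ∀ x t, |s.u x t| ≤ M
  abs_left_le : ∀ w, |w| ≤ M → |fl w| ≤ L
  abs_right_le : ∀ w, |w| ≤ M → |fr w| ≤ L

/-- The flux `f(c, u(c+,t))`, truncated to zero for `t ≤ 0`, where `ABSol` does not constrain
the traces. -/
def fluxRight (c : ℝ) : ℝ → ℝ := (Ioi 0).indicator fun t => dflux fl fr c (s.up c t)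

/-- The Hamilton–Jacobi potential, with `∂ₓ = u` and `∂ₜ = -f(x,u)`, vanishing at the origin. -/
def potential (x t : ℝ) : ℝ := (∫ y in (0 : ℝ)..x, s.u y t) - ∫ τ in (0 : ℝ)..t, s.fluxRight 0 τ

variable {s} in
lemma fluxRight_zero {t : ℝ} (ht : 0 < t) : s.fluxRight 0 t = fr (s.up 0 t) := by
  simp [fluxRight, ht, dflux]

namespace BoundedBy

variable {s} {M L : ℝ} (h : s.BoundedBy M L)
include h

lemma abs_up_le (x : ℝ) {t : ℝ} (ht : 0 < t) : |s.up x t| ≤ M :=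
  le_of_tendsto (s.up_spec x t ht).abs (Eventually.of_forall fun y => h.abs_u_le y t)

lemma abs_dflux_le (x : ℝ) {w : ℝ} (hw : |w| ≤ M) : |dflux fl fr x w| ≤ L := by
  unfold dflux
  split_ifs
  exacts [h.abs_left_le w hw, h.abs_right_le w hw]

lemma abs_fluxRight_le (c t : ℝ) : |s.fluxRight c t| ≤ L := by
  by_cases ht : 0 < t
  · simpa [fluxRight, ht] using h.abs_dflux_le c (h.abs_up_le c ht)
  · simpa [fluxRight, ht] using h.flux_pos.le

end BoundedBy

lemma tendsto_dflux_left_zero (hl : Continuous fl) {t : ℝ} (ht : 0 < t) :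
    Tendsto (fun y => dflux fl fr y (s.u y t)) (𝓝[<] 0) (𝓝 (fl (s.um 0 t))) := by
  refine ((hl.tendsto _).comp (s.um_spec 0 t ht)).congr' ?_
  filter_upwards [self_mem_nhdsWithin] with y hy using (dflux_of_neg hy (s.u y t)).symm

section Continuous

variable (hl : Continuous fl) (hr : Continuous fr)
include hl hr

lemma exists_boundedBy (M₀ : ℝ) : ∃ M L, M₀ ≤ M ∧ s.BoundedBy M L := by
  obtain ⟨M₁, hM₁⟩ := s.bdd
  set M := max (max M₀ M₁) 1
  obtain ⟨L₁, hL₁⟩ := (isCompact_Icc (a := -M) (b := M)).exists_bound_of_continuousOn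
    hl.continuousOn
  obtain ⟨L₂, hL₂⟩ := (isCompact_Icc (a := -M) (b := M)).exists_bound_of_continuousOn
    hr.continuousOn
  refine ⟨M, max (max L₁ L₂) 1, (le_max_left _ _).trans (le_max_left _ _), by positivity,
    by positivity, fun x t => (hM₁ x t).trans ((le_max_right _ _).trans (le_max_left _ _)),
    fun w hw => (hL₁ w (abs_le.1 hw)).trans ?_, fun w hw => (hL₂ w (abs_le.1 hw)).trans ?_⟩
  exacts [(le_max_left _ _).trans (le_max_left _ _), (le_max_right _ _).trans (le_max_left _ _)]

lemma tendsto_dflux_right (c : ℝ) {t : ℝ} (ht : 0 < t) :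
    Tendsto (fun y => dflux fl fr y (s.u y t)) (𝓝[>] c) (𝓝 (dflux fl fr c (s.up c t))) := by
  rcases lt_or_ge c 0 with hc | hc
  · rw [dflux_of_neg hc]
    refine ((hl.tendsto _).comp (s.up_spec c t ht)).congr' ?_
    filter_upwards [nhdsWithin_le_nhds (Iio_mem_nhds hc)] with y hy
    exact (dflux_of_neg hy (s.u y t)).symm
  · rw [dflux_of_nonneg hc]
    refine ((hr.tendsto _).comp (s.up_spec c t ht)).congr' ?_
    filter_upwards [self_mem_nhdsWithin] with y (hy : c < y)
    exact (dflux_of_nonneg (hc.trans hy.le) (s.u y t)).symm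

lemma hasTrace_fluxRight (c : ℝ) {t : ℝ} (ht : 0 < t) :
    HasTrace 0 (fun x => dflux fl fr x (s.u x t)) c (s.fluxRight c t) := by
  rw [fluxRight, indicator_of_mem (mem_Ioi.2 ht)]
  exact hasTrace_right (s.tendsto_dflux_right hl hr c ht)

lemma measurable_flux : Measurable (Function.uncurry fun x t => dflux fl fr x (s.u x t)) :=
  measurable_dflux hl hr measurable_fst s.meas

lemma intervalIntegrable_fluxRight (c a b : ℝ) :
    IntervalIntegrable (s.fluxRight c) volume a b := by
  obtain ⟨M, L, -, h⟩ := s.exists_boundedBy hl hr 0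
  have hmeas : Measurable (s.fluxRight c) := HasTrace.measurable (s.measurable_flux hl hr)
    fun t ht => hasTrace_right (s.tendsto_dflux_right hl hr c ht)
  exact intervalIntegrable_of_abs_le hmeas (h.abs_fluxRight_le c) a b

end Continuous

lemma continuousOn_intervalIntegral_comp {g : ℝ → ℝ} (hg : LocallyLipschitz g) (a b : ℝ) :
    ContinuousOn (fun t => ∫ x in a..b, g (s.u x t)) (Ici 0) := fun t₀ ht₀ => by
  obtain ⟨M, hM⟩ := s.bdd
  obtain ⟨K, hK⟩ := (hg.locallyLipschitzOn (s := Icc (-M) M)).exists_lipschitzOnWith_of_compact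
    isCompact_Icc
  have hgi := fun t => s.intervalIntegrable_comp_u hg.continuous t a b
  set r := max |a| |b|
  have hsub : uIoc a b ⊆ Icc (-r) r := uIoc_subset_uIcc.trans <| uIcc_subset_Icc
    (abs_le.1 (le_max_left _ _)) (abs_le.1 (le_max_right _ _))
  have hdiff : ∀ t, IntegrableOn (fun x => K * |s.u x t - s.u x t₀|) (Icc (-r) r) := fun t =>
    ((locallyIntegrable_of_abs_le ((s.measurable_slice t).sub (s.measurable_slice t₀)).abs
      (M := M + M) fun x => by
        rw [abs_abs]
        exact (abs_sub _ _).trans (add_le_add (hM x t) (hM x t₀))).integrableOn_isCompact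
      isCompact_Icc).const_mul _
  have hlim := (s.timeCont r t₀ ht₀).const_mul (K : ℝ)
  rw [mul_zero] at hlim
  refine tendsto_iff_norm_sub_tendsto_zero.2
    (squeeze_zero (fun _ => norm_nonneg _) (fun t => ?_) hlim)
  rw [← intervalIntegral.integral_sub (hgi t) (hgi t₀), ← integral_const_mul]
  refine intervalIntegral.norm_integral_le_integral_norm_uIoc.trans ?_
  refine (integral_mono (intervalIntegrable_iff.1 ((hgi t).sub (hgi t₀))).norm
    ((hdiff t).mono_set hsub) fun x => ?_).trans
    (setIntegral_mono_set (hdiff t) (Eventually.of_forall fun x => by positivity)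
      hsub.eventuallyLE)
  exact hK.dist_le_mul _ (abs_le.1 (hM x t)) _ (abs_le.1 (hM x t₀))

lemma tendsto_intervalIntegral_u (a b : ℝ) {t₀ : ℝ} (ht₀ : 0 ≤ t₀) :
    Tendsto (fun t => ∫ x in a..b, s.u x t) (𝓝[>] t₀) (𝓝 (∫ x in a..b, s.u x t₀)) :=
  (s.continuousOn_intervalIntegral_comp .id a b t₀ ht₀).mono_left
    (nhdsWithin_mono _ fun _ ht => ht₀.trans (mem_Ioi.1 ht).le)

lemma weak_const_mul (ε : ℝ) (φ : ℝ → ℝ → ℝ) (hφ : ContDiff ℝ 1 (fun p : ℝ × ℝ => φ p.1 p.2))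
    (hφc : HasCompactSupport (fun p : ℝ × ℝ => φ p.1 p.2)) (hφ₀ : ∀ x t, t ≤ 0 → φ x t = 0) :
    ∫ p : ℝ × ℝ, ((ε * s.u p.1 p.2) * deriv (fun s => φ p.1 s) p.2 +
      (ε * dflux fl fr p.1 (s.u p.1 p.2)) * deriv (fun y => φ y p.2) p.1) = 0 := by
  simp only [mul_assoc, ← mul_add]
  rw [integral_const_mul, s.weak φ hφ hφc hφ₀, mul_zero]

section Continuous

variable (hl : Continuous fl) (hr : Continuous fr)
include hl hr

lemma integral_sub_integral_le {ε : ℝ} (hε : |ε| ≤ 1) {c₁ c₂ : ℝ} (hc : c₁ ≤ c₂) {t₁ t₂ : ℝ}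
    (ht₁ : 0 < t₁) (ht : t₁ ≤ t₂) :
    ε * ((∫ x in c₁..c₂, s.u x t₂) - ∫ x in c₁..c₂, s.u x t₁) ≤
      ε * ∫ t in t₁..t₂, (s.fluxRight c₁ t - s.fluxRight c₂ t) := by
  obtain ⟨M, L, -, h⟩ := s.exists_boundedBy hl hr 0
  have hcont : ∀ t₀, 0 < t₀ → Tendsto (fun t => ∫ x in Ioc c₁ c₂, ε * s.u x t) (𝓝[>] t₀)
      (𝓝 (∫ x in Ioc c₁ c₂, ε * s.u x t₀)) := fun t₀ ht₀ => by
    simpa only [intervalIntegral.integral_of_le hc, integral_const_mul] using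
      (s.tendsto_intervalIntegral_u c₁ c₂ ht₀.le).const_mul ε
  have hscale : ∀ {z K : ℝ}, |z| ≤ K → K ≤ max M L → |ε * z| ≤ max M L := fun hz hK => by
    rw [abs_mul]
    exact (mul_le_of_le_one_left (abs_nonneg _) hε).trans (hz.trans hK)
  have hrect := rectangle_inequality (E := fun x t => ε * s.u x t)
    (Q := fun x t => ε * dflux fl fr x (s.u x t)) (s.meas.const_mul ε)
    ((s.measurable_flux hl hr).const_mul ε)
    (fun x t => hscale (h.abs_u_le x t) (le_max_left _ _))
    (fun x t => hscale (h.abs_dflux_le x (h.abs_u_le x t)) (le_max_right _ _))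
    zero_le_one le_rfl le_rfl hc
    (fun t ht ξ hξ => (s.hasTrace_fluxRight hl hr c₁ ht ξ hξ).const_mul ε)
    (fun t ht ξ hξ => (s.hasTrace_fluxRight hl hr c₂ ht ξ hξ).const_mul ε)
    (fun φ hφ hφc _ hφ₀ => (s.weak_const_mul ε φ hφ hφc hφ₀).ge) ht₁ ht (hcont t₁ ht₁)
    (hcont t₂ (ht₁.trans_le ht))
  simp only [← mul_sub, integral_const_mul] at hrect
  rw [intervalIntegral.integral_of_le hc, intervalIntegral.integral_of_le hc,
    intervalIntegral.integral_of_le ht]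
  linarith

lemma integral_sub_integral_eq (c₁ c₂ : ℝ) {t₁ t₂ : ℝ} (ht₁ : 0 < t₁) (ht : t₁ ≤ t₂) :
    (∫ x in c₁..c₂, s.u x t₂) - (∫ x in c₁..c₂, s.u x t₁) =
      ∫ t in t₁..t₂, (s.fluxRight c₁ t - s.fluxRight c₂ t) := by
  wlog hc : c₁ ≤ c₂ generalizing c₁ c₂
  · have hswap := this c₂ c₁ (le_of_not_ge hc)
    simp only [← neg_sub (s.fluxRight c₁ _), intervalIntegral.integral_neg] at hswap
    rw [intervalIntegral.integral_symm, intervalIntegral.integral_symm c₂ c₁]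
    linarith
  have hle := s.integral_sub_integral_le hl hr (ε := 1) (by simp) hc ht₁ ht
  have hge := s.integral_sub_integral_le hl hr (ε := -1) (by simp) hc ht₁ ht
  linarith

lemma potential_sub_time_of_pos (x : ℝ) {t₁ t₂ : ℝ} (ht₁ : 0 < t₁) (ht : t₁ ≤ t₂) :
    s.potential x t₂ - s.potential x t₁ = -∫ t in t₁..t₂, s.fluxRight x t := by
  have hI := s.intervalIntegrable_fluxRight hl hr
  have hcons := s.integral_sub_integral_eq hl hr 0 x ht₁ ht
  rw [intervalIntegral.integral_sub (hI _ _ _) (hI _ _ _)] at hcons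
  have hadd := intervalIntegral.integral_add_adjacent_intervals (hI 0 0 t₁) (hI 0 t₁ t₂)
  unfold potential
  linarith

lemma potential_sub_time (x : ℝ) {t₁ t₂ : ℝ} (ht₁ : 0 ≤ t₁) (ht : t₁ ≤ t₂) :
    s.potential x t₂ - s.potential x t₁ = -∫ t in t₁..t₂, s.fluxRight x t := by
  have hI := s.intervalIntegrable_fluxRight hl hr
  rcases ht.eq_or_lt with rfl | hlt
  · simp
  have hpot : Tendsto (fun t => s.potential x t) (𝓝[>] t₁) (𝓝 (s.potential x t₁)) :=
    (s.tendsto_intervalIntegral_u 0 x ht₁).sub <|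
      ((intervalIntegral.continuous_primitive (hI 0) 0).tendsto t₁).mono_left nhdsWithin_le_nhds
  have hflux : Tendsto (fun t => -∫ τ in t..t₂, s.fluxRight x τ) (𝓝[>] t₁)
      (𝓝 (-∫ τ in t₁..t₂, s.fluxRight x τ)) := by
    simp only [intervalIntegral.integral_symm t₂, neg_neg]
    exact ((intervalIntegral.continuous_primitive (hI x) t₂).tendsto t₁).mono_left
      nhdsWithin_le_nhds
  refine tendsto_nhds_unique (hpot.const_sub _) (hflux.congr' ?_)
  filter_upwards [self_mem_nhdsWithin, nhdsWithin_le_nhds (Iic_mem_nhds hlt)] with t h₁ h₂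
  rw [s.potential_sub_time_of_pos hl hr x (ht₁.trans_lt h₁) h₂]

end Continuous

lemma potential_sub_space (x y t : ℝ) :
    s.potential y t - s.potential x t = ∫ z in x..y, s.u z t := by
  have hadd := intervalIntegral.integral_add_adjacent_intervals (s.intervalIntegrable_u t 0 x)
    (s.intervalIntegrable_u t x y)
  unfold potential
  linarith

lemma BoundedBy.abs_potential_sub_space_le {M L : ℝ} {s : ABSol fl fr A B u0}
    (h : s.BoundedBy M L) (x y t : ℝ) : |s.potential y t - s.potential x t| ≤ M * |y - x| := by
  rw [s.potential_sub_space]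
  exact intervalIntegral.norm_integral_le_of_norm_le_const (f := fun z => s.u z t)
    fun z _ => h.abs_u_le z t

section Continuous

variable (hl : Continuous fl) (hr : Continuous fr)
include hl hr

variable {s} in
lemma BoundedBy.abs_potential_sub_time_le {M L : ℝ} (h : s.BoundedBy M L) (x : ℝ) {t t' : ℝ}
    (ht : 0 ≤ t) (ht' : 0 ≤ t') : |s.potential x t' - s.potential x t| ≤ L * |t' - t| := by
  wlog hle : t ≤ t' generalizing t t'
  · rw [abs_sub_comm, abs_sub_comm t']
    exact this ht' ht (le_of_not_ge hle)
  rw [s.potential_sub_time hl hr x ht hle, abs_neg]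
  exact intervalIntegral.norm_integral_le_of_norm_le_const (f := s.fluxRight x)
    fun z _ => h.abs_fluxRight_le x z

theorem rankineHugoniot : ∀ᵐ t : ℝ, 0 < t → fl (s.um 0 t) = fr (s.up 0 t) := by
  obtain ⟨M, L, -, h⟩ := s.exists_boundedBy hl hr 0
  have hleft := fun t (ht : 0 < t) => hasTrace_left (s.tendsto_dflux_left_zero hl ht)
  have hright := fun t (ht : 0 < t) => hasTrace_right (s.tendsto_dflux_right hl hr 0 ht)
  have hscaled : ∀ ε : ℝ, |ε| = 1 → ∀ᵐ t : ℝ, 0 < t →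
      ε * fr (s.up 0 t) ≤ ε * fl (s.um 0 t) := fun ε hε => by
    simp only [dflux_of_nonneg le_rfl] at hright
    refine HasTrace.ae_le_of_forall_test (E := fun x t => ε * s.u x t) (M := max M L)
      (Q := fun x t => ε * dflux fl fr x (s.u x t)) (s.meas.const_mul ε)
      ((s.measurable_flux hl hr).const_mul ε) (fun x t => ?_) (fun x t => ?_)
      (fun t ht ξ hξ => (hleft t ht ξ hξ).const_mul ε)
      (fun t ht ξ hξ => (hright t ht ξ hξ).const_mul ε)
      fun φ hφ hφc _ hφ₀ => (s.weak_const_mul ε φ hφ hφc hφ₀).ge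
    · simpa [abs_mul, hε] using Or.inl (h.abs_u_le x t)
    · simpa [abs_mul, hε] using Or.inr (h.abs_dflux_le x (h.abs_u_le x t))
  filter_upwards [hscaled 1 (by simp), hscaled (-1) (by simp)] with t hle hge ht
  linarith [hle ht, hge ht]

theorem interface_entropy : ∀ᵐ t : ℝ, 0 < t →
    Real.sign (s.up 0 t - B) * (fr (s.up 0 t) - fr B) ≤
      Real.sign (s.um 0 t - A) * (fl (s.um 0 t) - fl A) := by
  obtain ⟨M, L, hAB, h⟩ := s.exists_boundedBy hl hr (max |A| |B|)
  have hc : ∀ x, |cAB A B x| ≤ M := fun x => by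
    unfold cAB
    split_ifs
    exacts [(le_max_left _ _).trans hAB, (le_max_right _ _).trans hAB]
  have hcm : Measurable fun p : ℝ × ℝ => cAB A B p.1 := (measurable_cAB A B).comp measurable_fst
  refine HasTrace.ae_le_of_forall_test (E := fun x t => |s.u x t - cAB A B x|)
    (M := max (M + M) (L + L)) (c := 0)
    (Q := fun x t => Real.sign (s.u x t - cAB A B x) *
      (dflux fl fr x (s.u x t) - dflux fl fr x (cAB A B x)))
    (s.meas.sub hcm).abs ((measurable_sign_real.comp (s.meas.sub hcm)).mul
      ((s.measurable_flux hl hr).sub (measurable_dflux hl hr measurable_fst hcm)))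
    (fun x t => ?_) (fun x t => ?_) (fun t ht => hasTrace_left ?_) (fun t ht => hasTrace_right ?_)
    s.interfaceEntropy
  · rw [abs_abs]
    exact (abs_sub _ _).trans ((add_le_add (h.abs_u_le x t) (hc x)).trans (le_max_left _ _))
  · refine (abs_sign_mul_le _ _).trans ((abs_sub _ _).trans ?_)
    exact (add_le_add (h.abs_dflux_le x (h.abs_u_le x t)) (h.abs_dflux_le x (hc x))).trans
      (le_max_right _ _)
  · refine (((continuous_sign_sub_mul_sub hl A).tendsto _).comp (s.um_spec 0 t ht)).congr' ?_
    filter_upwards [self_mem_nhdsWithin] with y (hy : y < 0)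
    simp [dflux_of_neg hy, cAB_of_nonpos hy.le]
  · refine (((continuous_sign_sub_mul_sub hr B).tendsto _).comp (s.up_spec 0 t ht)).congr' ?_
    filter_upwards [self_mem_nhdsWithin] with y (hy : 0 < y)
    simp [dflux_of_nonneg hy.le, cAB_of_pos hy]

end Continuous

end ABSol

/-! ### Reflection, connections and the interface -/

section Reflection

lemma integral_comp_neg_fst (G : ℝ × ℝ → ℝ) : ∫ p : ℝ × ℝ, G (-p.1, p.2) = ∫ p, G p :=
  ((Measure.measurePreserving_neg (volume : Measure ℝ)).prod
    (MeasurePreserving.id volume)).integral_comp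
    ((MeasurableEquiv.neg ℝ).prodCongr (MeasurableEquiv.refl ℝ)).measurableEmbedding G

lemma integral_eq_const_mul_of_comp_neg {F G : ℝ × ℝ → ℝ} {ε : ℝ}
    (h : ∀ p : ℝ × ℝ, p.1 ≠ 0 → F (-p.1, p.2) = ε * G p) : ∫ p, F p = ε * ∫ p, G p := by
  have hne : ∀ᵐ p : ℝ × ℝ, p.1 ≠ 0 :=
    (Measure.quasiMeasurePreserving_fst (μ := (volume : Measure ℝ)) (ν := volume)).ae
      (Measure.ae_ne volume 0)
  rw [← integral_comp_neg_fst F, ← integral_const_mul]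
  exact integral_congr_ae (hne.mono h)

lemma dflux_neg (fl fr : ℝ → ℝ) {x : ℝ} (hx : x ≠ 0) (w : ℝ) :
    dflux (fun w => fr (-w)) (fun w => fl (-w)) (-x) (-w) = dflux fl fr x w := by
  rcases hx.lt_or_gt with h | h
  · rw [dflux_of_neg h, dflux_of_nonneg (neg_pos.2 h).le, neg_neg]
  · rw [dflux_of_nonneg h.le, dflux_of_neg (neg_neg_of_pos h), neg_neg]

lemma cAB_neg (A B : ℝ) {x : ℝ} (hx : x ≠ 0) : cAB (-B) (-A) (-x) = -cAB A B x := by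
  rcases hx.lt_or_gt with h | h
  · rw [cAB_of_nonpos h.le, cAB_of_pos (neg_pos.2 h)]
  · rw [cAB_of_pos h, cAB_of_nonpos (neg_neg_of_pos h).le]

variable {φ : ℝ → ℝ → ℝ}

lemma contDiff_comp_neg_fst (h : ContDiff ℝ 1 (fun p : ℝ × ℝ => φ p.1 p.2)) :
    ContDiff ℝ 1 (fun p : ℝ × ℝ => φ (-p.1) p.2) :=
  h.comp (contDiff_fst.neg.prodMk contDiff_snd)

lemma hasCompactSupport_comp_neg_fst (h : HasCompactSupport (fun p : ℝ × ℝ => φ p.1 p.2)) :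
    HasCompactSupport (fun p : ℝ × ℝ => φ (-p.1) p.2) :=
  h.comp_homeomorph ((Homeomorph.neg ℝ).prodCongr (Homeomorph.refl ℝ))

lemma integral_entropy_comp_neg (f : ℝ → ℝ) (u : ℝ → ℝ → ℝ) (k : ℝ) (φ : ℝ → ℝ → ℝ) :
    ∫ p : ℝ × ℝ, (|-u (-p.1) p.2 - k| * deriv (fun s => φ p.1 s) p.2 +
        Real.sign (-u (-p.1) p.2 - k) * (f (- -u (-p.1) p.2) - f (-k)) *
          deriv (fun y => φ y p.2) p.1) =
      ∫ p : ℝ × ℝ, (|u p.1 p.2 - -k| * deriv (fun s => φ (-p.1) s) p.2 +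
        Real.sign (u p.1 p.2 - -k) * (f (u p.1 p.2) - f (-k)) *
          deriv (fun y => φ (-y) p.2) p.1) := by
  rw [← integral_comp_neg_fst]
  refine integral_congr_ae (Eventually.of_forall fun p => ?_)
  have hk : -u p.1 p.2 - k = -(u p.1 p.2 - -k) := by ring
  simp only [neg_neg, deriv_comp_neg (fun y => φ y p.2), hk, abs_neg, Real.sign_neg]
  ring

end Reflection

namespace ABSol

variable {fl fr : ℝ → ℝ} {A B : ℝ} {u0 : ℝ → ℝ} (s : ABSol fl fr A B u0)

lemma integral_abs_sub_comp_neg (r t t₀ : ℝ) :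
    ∫ x in Icc (-r) r, |-s.u (-x) t - -s.u (-x) t₀| = ∫ x in Icc (-r) r, |s.u x t - s.u x t₀| := by
  have hpre : Neg.neg ⁻¹' Icc (-r) r = Icc (-r) r := by simp
  rw [← (Measure.measurePreserving_neg (volume : Measure ℝ)).setIntegral_preimage_emb
    (MeasurableEquiv.neg ℝ).measurableEmbedding (fun x => |s.u x t - s.u x t₀|), hpre]
  refine setIntegral_congr_fun measurableSet_Icc fun x _ => ?_
  simp only [← neg_sub', abs_neg]

/-- The reflected solution `(x, t) ↦ -u(-x, t)`, for the fluxes `fr (-·)` and `fl (-·)`; it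
reduces statements on the left half-line to statements on the right one. -/
def reflect :
    ABSol (fun w => fr (-w)) (fun w => fl (-w)) (-B) (-A) (fun x => -u0 (-x)) where
  u x t := -s.u (-x) t
  meas := (s.meas.comp (measurable_fst.neg.prodMk measurable_snd)).neg
  bdd := s.bdd.imp fun M hM x t => (abs_neg _).trans_le (hM (-x) t)
  um x t := -s.up (-x) t
  up x t := -s.um (-x) t
  um_spec x t ht := ((s.up_spec (-x) t ht).comp (tendsto_neg_nhdsLT)).neg
  up_spec x t ht := ((s.um_spec (-x) t ht).comp (tendsto_neg_nhdsGT)).neg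
  weak φ hφ hφc hφ₀ := by
    rw [integral_eq_const_mul_of_comp_neg (ε := -1) fun p hp => ?_,
      s.weak (fun x t => φ (-x) t) (contDiff_comp_neg_fst hφ)
        (hasCompactSupport_comp_neg_fst hφc) fun x => hφ₀ (-x), mul_zero]
    simp only [neg_neg, deriv_comp_neg (fun y => φ y p.2), dflux_neg fl fr hp]
    ring
  kruzkov_l k φ hφ hφc hφn hφ₀ := by
    rw [integral_entropy_comp_neg fr s.u k φ]
    exact s.kruzkov_r (-k) (fun x t => φ (-x) t) (contDiff_comp_neg_fst hφ)
      (hasCompactSupport_comp_neg_fst hφc) (fun x => hφn (-x)) fun x t ht =>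
        hφ₀ _ _ (ht.imp_left neg_nonneg.2)
  kruzkov_r k φ hφ hφc hφn hφ₀ := by
    rw [integral_entropy_comp_neg fl s.u k φ]
    exact s.kruzkov_l (-k) (fun x t => φ (-x) t) (contDiff_comp_neg_fst hφ)
      (hasCompactSupport_comp_neg_fst hφc) (fun x => hφn (-x)) fun x t ht =>
        hφ₀ _ _ (ht.imp_left neg_nonpos.2)
  interfaceEntropy φ hφ hφc hφn hφ₀ := by
    refine (s.interfaceEntropy (fun x t => φ (-x) t) (contDiff_comp_neg_fst hφ)
      (hasCompactSupport_comp_neg_fst hφc) (fun x => hφn (-x)) fun x => hφ₀ (-x)).trans_eq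
      (Eq.trans (integral_eq_const_mul_of_comp_neg (ε := 1) fun p hp => ?_) (one_mul _)).symm
    have hsub : -s.u p.1 p.2 - -cAB A B p.1 = -(s.u p.1 p.2 - cAB A B p.1) := by ring
    simp only [neg_neg, deriv_comp_neg (fun y => φ y p.2), cAB_neg A B hp, dflux_neg fl fr hp,
      hsub, abs_neg, Real.sign_neg]
    ring
  timeCont r t₀ ht₀ := by
    simp only [s.integral_abs_sub_comp_neg]
    exact s.timeCont r t₀ ht₀
  init := by
    filter_upwards [(Measure.measurePreserving_neg (volume : Measure ℝ)).quasiMeasurePreserving.ae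
      s.init] with x hx
    rw [hx]

lemma potential_reflect (hl : Continuous fl) (hr : Continuous fr) (x t : ℝ) :
    s.reflect.potential x t = s.potential (-x) t := by
  unfold potential
  congr 1
  · change ∫ y in (0 : ℝ)..x, -s.u (-y) t = _
    rw [intervalIntegral.integral_neg, intervalIntegral.integral_comp_neg (fun y => s.u y t),
      neg_zero, intervalIntegral.integral_symm, neg_neg]
  · refine intervalIntegral.integral_congr_ae ?_
    filter_upwards [s.rankineHugoniot hl hr] with τ hτ _
    by_cases h0 : 0 < τ
    · rw [fluxRight_zero h0, fluxRight_zero h0, ← hτ h0]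
      simp [reflect]
    · simp [fluxRight, h0]

lemma hasDerivWithinAt_potential_Ioi (x : ℝ) {t : ℝ} (ht : 0 < t) :
    HasDerivWithinAt (fun y => s.potential y t) (s.up x t) (Ioi x) x :=
  ((intervalIntegral.integral_hasDerivWithinAt_of_tendsto_ae_right (s := Ici x) (t := Ioi x)
    (s.intervalIntegrable_u t 0 x)
    ⟨univ, univ_mem, (s.measurable_slice t).aestronglyMeasurable⟩
    ((s.up_spec x t ht).mono_left inf_le_left)).mono Ioi_subset_Ici_self).sub_const _

lemma hasDerivWithinAt_potential_Iio (x : ℝ) {t : ℝ} (ht : 0 < t) :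
    HasDerivWithinAt (fun y => s.potential y t) (s.um x t) (Iio x) x := by
  have hle : 𝓝[≤] x ⊓ ae volume ≤ 𝓝[<] x := by
    refine le_inf (inf_le_left.trans nhdsWithin_le_nhds) (le_principal_iff.2 ?_)
    filter_upwards [inter_mem_inf self_mem_nhdsWithin (compl_mem_ae_iff.2 (measure_singleton x))]
      with y hy using lt_of_le_of_ne hy.1 hy.2
  exact ((intervalIntegral.integral_hasDerivWithinAt_of_tendsto_ae_right (s := Iic x) (t := Iic x)
    (s.intervalIntegrable_u t 0 x)
    ⟨univ, univ_mem, (s.measurable_slice t).aestronglyMeasurable⟩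
    ((s.um_spec x t ht).mono_left hle)).mono Iio_subset_Iic_self).sub_const _

lemma up_ae_eq {t : ℝ} (ht : 0 < t) : ∀ᵐ x : ℝ, s.up x t = s.u x t := by
  obtain ⟨M, hM⟩ := s.bdd
  filter_upwards [LocallyIntegrable.ae_hasDerivAt_integral
    (locallyIntegrable_of_abs_le (s.measurable_slice t) fun x => hM x t)] with x hx
  exact (uniqueDiffWithinAt_Ioi x).eq_deriv _ (s.hasDerivWithinAt_potential_Ioi x ht)
    ((hx 0).sub_const _).hasDerivWithinAt

end ABSol

/-- `(A, B)` is a connection for the flux given by `fl` on the left and `fr` on the right. -/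
structure IsConnection (fl fr : ℝ → ℝ) (A B : ℝ) : Prop where
  flux_eq : fl A = fr B
  deriv_left_nonpos : deriv fl A ≤ 0
  deriv_right_nonneg : 0 ≤ deriv fr B

namespace IsConnection

variable {fl fr : ℝ → ℝ} {A B a : ℝ}

lemma reflect (hAB : IsConnection fl fr A B) :
    IsConnection (fun w => fr (-w)) (fun w => fl (-w)) (-B) (-A) where
  flux_eq := by simp [hAB.flux_eq]
  deriv_left_nonpos := by simpa [deriv_comp_neg] using hAB.deriv_right_nonneg
  deriv_right_nonneg := by simpa [deriv_comp_neg] using hAB.deriv_left_nonpos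

variable (hl : UniformlyConvexFlux fl a) (hr : UniformlyConvexFlux fr a)
  (hAB : IsConnection fl fr A B) {v w : ℝ} (hvw : fl v = fr w)
  (hent : Real.sign (w - B) * (fr w - fr B) ≤ Real.sign (v - A) * (fl v - fl A))
include hl hr hAB hvw hent

lemma flux_le_of_entropy : fl A ≤ fl v := by
  by_contra! hlt
  have hAv : A < v := by
    by_contra! h
    nlinarith [hl.tangent_le A v, hAB.deriv_left_nonpos]
  have hwB : w < B := by
    by_contra! h
    nlinarith [hr.tangent_le B w, hAB.deriv_right_nonneg, hAB.flux_eq]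
  rw [Real.sign_of_neg (sub_neg.2 hwB), Real.sign_of_pos (sub_pos.2 hAv)] at hent
  linarith [hAB.flux_eq]

lemma deriv_pos_or_neg_of_entropy (hlt : fl A < fl v) : 0 < deriv fl v ∨ deriv fr w < 0 := by
  by_contra! hder
  have hvA : v < A := by
    by_contra! h
    nlinarith [hl.tangent_le v A, hder.1]
  have hBw : B < w := by
    by_contra! h
    nlinarith [hr.tangent_le w B, hder.2, hAB.flux_eq]
  rw [Real.sign_of_pos (sub_pos.2 hBw), Real.sign_of_neg (sub_neg.2 hvA)] at hent
  linarith [hAB.flux_eq]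

end IsConnection

namespace ABSol

variable {fl fr : ℝ → ℝ} {A B : ℝ} {u0 : ℝ → ℝ} (s : ABSol fl fr A B u0)

theorem interface_alternatives {a : ℝ} (hl : UniformlyConvexFlux fl a)
    (hr : UniformlyConvexFlux fr a) (hAB : IsConnection fl fr A B) :
    ∀ᵐ t : ℝ, 0 < t → fl (s.um 0 t) = s.fluxRight 0 t ∧ fl A ≤ s.fluxRight 0 t ∧
      (fl A < s.fluxRight 0 t → 0 < deriv fl (s.um 0 t) ∨ deriv fr (s.up 0 t) < 0) := by
  filter_upwards [s.rankineHugoniot hl.continuous hr.continuous,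
    s.interface_entropy hl.continuous hr.continuous] with t hRH hent ht
  rw [fluxRight_zero ht, ← hRH ht]
  exact ⟨rfl, hAB.flux_le_of_entropy hl hr (hRH ht) (hent ht),
    hAB.deriv_pos_or_neg_of_entropy hl hr (hRH ht) (hent ht)⟩

end ABSol

/-! ### Upper bounds along routes -/

section Partials

variable {F X Y : ℝ × ℝ → ℝ} {O : Set (ℝ × ℝ)} (hO : IsOpen O)
  (hX : ∀ p ∈ O, HasDerivAt (fun x => F (x, p.2)) (X p) p.1)
  (hY : ∀ p ∈ O, HasDerivAt (fun y => F (p.1, y)) (Y p) p.2)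
  (hXc : ContinuousOn X O) (hYc : ContinuousOn Y O)
include hO hX hY hXc hYc

lemma hasFDerivAt_of_hasDerivAt_partials {p : ℝ × ℝ} (hp : p ∈ O) :
    HasFDerivAt F
      (X p • ContinuousLinearMap.fst ℝ ℝ ℝ + Y p • ContinuousLinearMap.snd ℝ ℝ ℝ) p := by
  have hspan : Continuous (ContinuousLinearMap.toSpanSingleton ℝ : ℝ → ℝ →L[ℝ] ℝ) :=
    (ContinuousLinearMap.toSpanSingletonCLE (𝕜 := ℝ) (E := ℝ)).continuous
  have hF := (hasStrictFDerivAt_uncurry_coprod (f := fun x y => F (x, y))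
    (f₁ := fun x y => .toSpanSingleton ℝ (X (x, y)))
    (f₂ := fun x y => .toSpanSingleton ℝ (Y (x, y)))
    (by filter_upwards [hO.mem_nhds hp] with q hq using (hX q hq).hasFDerivAt)
    (by filter_upwards [hO.mem_nhds hp] with q hq using (hY q hq).hasFDerivAt)
    (hspan.continuousAt.comp (hXc.continuousAt (hO.mem_nhds hp)))
    (hspan.continuousAt.comp (hYc.continuousAt (hO.mem_nhds hp)))).hasFDerivAt
  refine hF.congr_fderiv ?_
  ext <;> simp [Function.HasUncurry.uncurry]

lemma contDiffAt_one_of_hasDerivAt_partials {p : ℝ × ℝ} (hp : p ∈ O) : ContDiffAt ℝ 1 F p :=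
  contDiffAt_one_iff.2 ⟨_, O, hO.mem_nhds hp,
    (hXc.smul continuousOn_const).add (hYc.smul continuousOn_const),
    fun _ hq => hasFDerivAt_of_hasDerivAt_partials hO hX hY hXc hYc hq⟩

end Partials

/-- The forward average of `g` over `[x, x + δ]`, i.e. its Steklov regularisation. -/
def rightAverage (δ : ℝ) (g : ℝ → ℝ) (x : ℝ) : ℝ := δ⁻¹ * ∫ y in x..x + δ, g y

section RightAverage

variable {δ C c : ℝ} {g : ℝ → ℝ} (hg : ∀ a b, IntervalIntegrable g volume a b)
include hg

lemma rightAverage_eq_primitive (x : ℝ) :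
    rightAverage δ g x = δ⁻¹ * ((∫ y in (0 : ℝ)..x + δ, g y) - ∫ y in (0 : ℝ)..x, g y) := by
  rw [rightAverage, intervalIntegral.integral_interval_sub_left (hg _ _) (hg _ _)]

lemma abs_rightAverage_sub_le (hδ : 0 < δ) {x : ℝ} (h : ∀ y ∈ Ioc x (x + δ), |g y - c| ≤ C) :
    |rightAverage δ g x - c| ≤ C := by
  have havg : rightAverage δ g x - c = δ⁻¹ * ∫ y in x..x + δ, (g y - c) := by
    rw [intervalIntegral.integral_sub (hg _ _) intervalIntegrable_const,
      intervalIntegral.integral_const, smul_eq_mul, rightAverage]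
    field_simp
    ring
  have hint : |∫ y in x..x + δ, (g y - c)| ≤ C * |x + δ - x| :=
    intervalIntegral.norm_integral_le_of_norm_le_const (f := fun y => g y - c) fun y hy =>
      h y (uIoc_of_le (le_add_of_nonneg_right hδ.le) ▸ hy)
  rw [add_sub_cancel_left, abs_of_pos hδ] at hint
  rw [havg, abs_mul, abs_of_pos (inv_pos.2 hδ), inv_mul_le_iff₀ hδ, mul_comm δ]
  exact hint

lemma abs_rightAverage_le (hδ : 0 < δ) (h : ∀ y, |g y| ≤ C) (x : ℝ) : |rightAverage δ g x| ≤ C := by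
  simpa using abs_rightAverage_sub_le (c := 0) hg hδ (x := x) fun y _ => by simpa using h y

lemma tendsto_rightAverage {x l : ℝ} (h : Tendsto g (𝓝[>] x) (𝓝 l)) :
    Tendsto (fun δ => rightAverage δ g x) (𝓝[>] 0) (𝓝 l) := by
  refine Metric.tendsto_nhds.2 fun ε hε => ?_
  obtain ⟨b, hb, hclose⟩ := mem_nhdsGT_iff_exists_Ioc_subset.1
    (Metric.tendsto_nhds.1 h (ε / 2) (half_pos hε))
  filter_upwards [Ioc_mem_nhdsGT (sub_pos.2 hb)] with δ hδ
  refine (abs_rightAverage_sub_le hg hδ.1 fun y hy => ?_).trans_lt (half_lt_self hε)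
  exact (hclose ⟨hy.1, hy.2.trans (by linarith [hδ.2])⟩ : dist (g y) l < ε / 2).le

end RightAverage

lemma hasDerivAt_rightAverage {g : ℝ → ℝ} (hg : Continuous g) (δ x : ℝ) :
    HasDerivAt (rightAverage δ g) (δ⁻¹ * (g (x + δ) - g x)) x := by
  have hprim := fun y => hg.integral_hasStrictDerivAt 0 y |>.hasDerivAt
  rw [funext (rightAverage_eq_primitive (δ := δ) (g := g) hg.intervalIntegrable)]
  exact (((hprim (x + δ)).comp_add_const x δ).sub (hprim x)).const_mul δ⁻¹

namespace ABSol

variable {fl fr : ℝ → ℝ} {A B : ℝ} {u0 : ℝ → ℝ} (s : ABSol fl fr A B u0)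

lemma measurable_indicator_up :
    Measurable ({p : ℝ × ℝ | 0 < p.2}.indicator fun p => s.up p.1 p.2) := by
  have hpos : MeasurableSet {p : ℝ × ℝ | 0 < p.2} :=
    measurableSet_lt measurable_const measurable_snd
  refine measurable_of_tendsto_metrizable (f := fun n : ℕ => {p : ℝ × ℝ | 0 < p.2}.indicator
    fun p => s.u (p.1 + 1 / (n + 1)) p.2) (fun n => ?_) (tendsto_pi_nhds.2 fun p => ?_)
  · exact (s.meas.comp ((measurable_fst.add_const _).prodMk measurable_snd)).indicator hpos
  by_cases hp : p ∈ {p : ℝ × ℝ | 0 < p.2}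
  · simp only [indicator_of_mem hp]
    refine (s.up_spec p.1 p.2 hp).comp
      (tendsto_nhdsWithin_iff.2 ⟨?_, Eventually.of_forall fun n => ?_⟩)
    · simpa using (tendsto_const_nhds (x := p.1)).add
        (tendsto_one_div_add_atTop_nhds_zero_nat (𝕜 := ℝ))
    · exact lt_add_of_pos_right p.1 (Nat.one_div_pos_of_nat (α := ℝ) (n := n))
  · simp only [indicator_of_notMem hp, tendsto_const_nhds]

lemma ae_prod_up_eq : ∀ᵐ p : ℝ × ℝ, 0 < p.2 → s.up p.1 p.2 = s.u p.1 p.2 := by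
  have hmeas : MeasurableSet {p : ℝ × ℝ | 0 < p.2 → s.up p.1 p.2 = s.u p.1 p.2} := by
    convert (measurableSet_lt (measurable_const (a := (0 : ℝ))) measurable_snd).compl.union
      (measurableSet_eq_fun s.measurable_indicator_up s.meas) using 1
    ext p
    by_cases hp : 0 < p.2 <;> simp [Function.uncurry_def, hp]
  rw [Measure.volume_eq_prod, Measure.ae_prod_iff_ae_ae hmeas, Measure.ae_ae_comm hmeas]
  refine Eventually.of_forall fun t => ?_
  by_cases ht : 0 < t
  · filter_upwards [s.up_ae_eq ht] with x hx using fun _ => hx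
  · exact Eventually.of_forall fun x h => absurd h ht

lemma continuous_potential (t : ℝ) : Continuous fun x => s.potential x t :=
  (intervalIntegral.continuous_primitive (s.intervalIntegrable_u t) 0).sub continuous_const

section Continuous

variable (hl : Continuous fl) (hr : Continuous fr)
include hl hr

lemma continuousOn_potential :
    ContinuousOn (fun p : ℝ × ℝ => s.potential p.1 p.2) (univ ×ˢ Ici 0) := by
  obtain ⟨M, L, -, h⟩ := s.exists_boundedBy hl hr 0
  refine continuousOn_prod_of_continuousOn_lipschitzOnWith _ M.toNNReal (fun x _ => ?_)
    fun t _ => LipschitzWith.lipschitzOnWith <| LipschitzWith.of_dist_le_mul fun x y => ?_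
  · refine LipschitzOnWith.continuousOn (K := L.toNNReal) (.of_dist_le_mul fun t ht t' ht' => ?_)
    rw [Real.coe_toNNReal _ h.flux_pos.le]
    exact BoundedBy.abs_potential_sub_time_le hl hr h x ht' ht
  · rw [Real.coe_toNNReal _ h.pos.le]
    exact h.abs_potential_sub_space_le y x t

lemma measurable_fluxRight : Measurable (Function.uncurry s.fluxRight) := by
  convert (measurable_dflux hl hr measurable_fst s.measurable_indicator_up).indicator
    (measurableSet_lt measurable_const measurable_snd : MeasurableSet {p : ℝ × ℝ | 0 < p.2}) using 1
  ext p
  by_cases hp : 0 < p.2 <;> simp [Function.uncurry_def, fluxRight, hp]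

end Continuous

lemma integral_fluxRight_of_nonneg {x y t : ℝ} (hx : 0 ≤ x) (hxy : x ≤ y) (ht : 0 < t) :
    ∫ z in x..y, s.fluxRight z t = ∫ z in x..y, fr (s.u z t) := by
  refine intervalIntegral.integral_congr_ae ?_
  filter_upwards [s.up_ae_eq ht] with z hz hzmem
  rw [uIoc_of_le hxy] at hzmem
  rw [fluxRight, indicator_of_mem (mem_Ioi.2 ht), dflux_of_nonneg (hx.trans hzmem.1.le), hz]

end ABSol

lemma UniformlyConvexFlux.locallyLipschitz {f : ℝ → ℝ} {a : ℝ} (h : UniformlyConvexFlux f a) :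
    LocallyLipschitz f :=
  (h.contDiff.of_le one_le_two).locallyLipschitz

namespace ABSol

variable {fl fr : ℝ → ℝ} {A B : ℝ} {u0 : ℝ → ℝ} (s : ABSol fl fr A B u0)

/-- The Steklov average in space of the potential. -/
def avgPotential (δ : ℝ) (p : ℝ × ℝ) : ℝ := rightAverage δ (fun y => s.potential y p.2) p.1

/-- The Steklov average in space of the solution: the `x`-derivative of `avgPotential`. -/
def avgState (δ : ℝ) (p : ℝ × ℝ) : ℝ := rightAverage δ (fun y => s.u y p.2) p.1

/-- The Steklov average in space of the right flux: for `x > 0`, minus the `t`-derivative of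
`avgPotential`. -/
def avgFlux (δ : ℝ) (p : ℝ × ℝ) : ℝ := rightAverage δ (fun y => fr (s.u y p.2)) p.1

lemma continuousOn_rightAverage_comp {g : ℝ → ℝ} (hg : LocallyLipschitz g) (δ : ℝ) :
    ContinuousOn (fun p : ℝ × ℝ => rightAverage δ (fun y => g (s.u y p.2)) p.1)
      (univ ×ˢ Ici 0) := by
  obtain ⟨M, hM⟩ := s.bdd
  obtain ⟨N, hN⟩ := (isCompact_Icc (a := -M) (b := M)).exists_bound_of_continuousOn
    hg.continuous.continuousOn
  have hgi := fun t => s.intervalIntegrable_comp_u hg.continuous t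
  have hprim : ContinuousOn (fun p : ℝ × ℝ => ∫ y in (0 : ℝ)..p.1, g (s.u y p.2))
      (univ ×ˢ Ici 0) := by
    refine continuousOn_prod_of_continuousOn_lipschitzOnWith _ N.toNNReal
      (fun x _ => s.continuousOn_intervalIntegral_comp hg 0 x)
      fun t _ => LipschitzWith.lipschitzOnWith <| LipschitzWith.of_dist_le_mul fun x y => ?_
    rw [Real.coe_toNNReal _ ((norm_nonneg _).trans (hN _ (abs_le.1 (hM 0 0)))), Real.dist_eq,
      intervalIntegral.integral_interval_sub_left (hgi t _ _) (hgi t _ _)]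
    exact intervalIntegral.norm_integral_le_of_norm_le_const fun z _ => hN _ (abs_le.1 (hM z t))
  refine ContinuousOn.congr ?_ fun p _ => rightAverage_eq_primitive (hgi p.2) p.1
  refine continuousOn_const.mul (.sub ?_ hprim)
  exact hprim.comp (f := fun p : ℝ × ℝ => (p.1 + δ, p.2)) (by fun_prop)
    fun p hp => ⟨mem_univ _, hp.2⟩

lemma continuousOn_avgState (δ : ℝ) : ContinuousOn (s.avgState δ) (univ ×ˢ Ici 0) :=
  s.continuousOn_rightAverage_comp .id δ

lemma continuousOn_avgFlux (hr : LocallyLipschitz fr) (δ : ℝ) :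
    ContinuousOn (s.avgFlux δ) (univ ×ˢ Ici 0) :=
  s.continuousOn_rightAverage_comp hr δ

lemma hasDerivAt_avgPotential_fst (δ x t : ℝ) :
    HasDerivAt (fun x => s.avgPotential δ (x, t)) (s.avgState δ (x, t)) x := by
  have h := hasDerivAt_rightAverage (s.continuous_potential t) δ x
  rwa [s.potential_sub_space] at h

lemma avgState_mul_sub_avgFlux_le {a δ : ℝ} (hr : UniformlyConvexFlux fr a) (hδ : 0 < δ) (q : ℝ)
    (p : ℝ × ℝ) : q * s.avgState δ p - s.avgFlux δ p ≤ legendre fr q := by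
  have hu := (s.intervalIntegrable_u p.2 p.1 (p.1 + δ)).const_mul q
  have hf := s.intervalIntegrable_comp_u hr.continuous p.2 p.1 (p.1 + δ)
  have hint := intervalIntegral.integral_mono_on (le_add_of_nonneg_right hδ.le) (hu.sub hf)
    intervalIntegrable_const fun z _ => hr.mul_sub_le_legendre q (s.u z p.2)
  rw [intervalIntegral.integral_sub hu hf, intervalIntegral.integral_const_mul,
    intervalIntegral.integral_const, add_sub_cancel_left, smul_eq_mul] at hint
  rw [avgState, avgFlux, rightAverage, rightAverage, mul_left_comm, ← mul_sub,
    inv_mul_le_iff₀ hδ]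
  exact hint

lemma BoundedBy.abs_avgPotential_sub_le {s : ABSol fl fr A B u0} {M L δ : ℝ}
    (h : s.BoundedBy M L) (hδ : 0 < δ) (p : ℝ × ℝ) :
    |s.avgPotential δ p - s.potential p.1 p.2| ≤ M * δ := by
  refine abs_rightAverage_sub_le (s.continuous_potential p.2).intervalIntegrable hδ fun y hy => ?_
  refine (h.abs_potential_sub_space_le p.1 y p.2).trans (mul_le_mul_of_nonneg_left ?_ h.pos.le)
  rw [abs_of_nonneg (sub_nonneg.2 hy.1.le)]
  linarith [hy.2]

section Quadrant

variable (hl : Continuous fl) (hr : LocallyLipschitz fr) {δ : ℝ} (hδ : 0 < δ)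
include hl hr hδ

lemma avgPotential_sub_time {x t₁ t₂ : ℝ} (hx : 0 ≤ x) (ht₁ : 0 ≤ t₁) (ht : t₁ ≤ t₂) :
    s.avgPotential δ (x, t₂) - s.avgPotential δ (x, t₁) = -∫ t in t₁..t₂, s.avgFlux δ (x, t) := by
  obtain ⟨M, L, -, h⟩ := s.exists_boundedBy hl hr.continuous 0
  have hpot := fun t => (s.continuous_potential t).intervalIntegrable (μ := volume) x (x + δ)
  have hxδ : x ≤ x + δ := le_add_of_nonneg_right hδ.le
  have hfubini : ∫ y in x..x + δ, ∫ t in t₁..t₂, s.fluxRight y t =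
      ∫ t in t₁..t₂, ∫ y in x..x + δ, s.fluxRight y t := by
    refine intervalIntegral_intervalIntegral_swap (Measure.integrableOn_of_bounded (M := L) ?_
      (s.measurable_fluxRight hl hr.continuous).aestronglyMeasurable
      (Eventually.of_forall fun p => h.abs_fluxRight_le p.1 p.2))
    rw [uIoc_of_le hxδ, uIoc_of_le ht, Measure.volume_eq_prod, Measure.prod_prod]
    simp [ENNReal.mul_eq_top]
  have hflux : ∫ t in t₁..t₂, ∫ y in x..x + δ, s.fluxRight y t =
      ∫ t in t₁..t₂, ∫ y in x..x + δ, fr (s.u y t) := by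
    refine intervalIntegral.integral_congr_ae (Eventually.of_forall fun t htmem => ?_)
    rw [uIoc_of_le ht] at htmem
    exact s.integral_fluxRight_of_nonneg hx hxδ (ht₁.trans_lt htmem.1)
  simp only [avgPotential, avgFlux, rightAverage, intervalIntegral.integral_const_mul]
  rw [← mul_sub, ← intervalIntegral.integral_sub (hpot _) (hpot _), ← mul_neg, ← hflux,
    ← hfubini, ← intervalIntegral.integral_neg]
  simp only [s.potential_sub_time hl hr.continuous _ ht₁ ht]

lemma hasDerivAt_avgPotential_snd {x t : ℝ} (hx : 0 ≤ x) (ht : 0 < t) :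
    HasDerivAt (fun t => s.avgPotential δ (x, t)) (-s.avgFlux δ (x, t)) t := by
  have hcont : ContinuousOn (fun t => s.avgFlux δ (x, t)) (Ici 0) :=
    (s.continuousOn_avgFlux hr δ).comp (by fun_prop) fun t ht => ⟨mem_univ _, ht⟩
  have hprim : HasDerivAt (fun t => ∫ τ in (0 : ℝ)..t, s.avgFlux δ (x, τ)) (s.avgFlux δ (x, t)) t :=
    intervalIntegral.integral_hasDerivAt_right
      ((hcont.mono (uIcc_of_le ht.le ▸ Icc_subset_Ici_self)).intervalIntegrable)
      ((hcont.mono Ioi_subset_Ici_self).stronglyMeasurableAtFilter isOpen_Ioi t ht)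
      (hcont.continuousAt (Ici_mem_nhds ht))
  refine (hprim.const_sub (s.avgPotential δ (x, 0))).congr_of_eventuallyEq ?_
  filter_upwards [Ioi_mem_nhds ht] with t' ht'
  linarith [s.avgPotential_sub_time hl hr hδ hx le_rfl (mem_Ioi.1 ht').le]

lemma hasFDerivAt_avgPotential {p : ℝ × ℝ} (hp : p ∈ Ioi (0 : ℝ) ×ˢ Ioi (0 : ℝ)) :
    HasFDerivAt (s.avgPotential δ) (s.avgState δ p • ContinuousLinearMap.fst ℝ ℝ ℝ +
      (-s.avgFlux δ p) • ContinuousLinearMap.snd ℝ ℝ ℝ) p :=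
  hasFDerivAt_of_hasDerivAt_partials (isOpen_Ioi.prod isOpen_Ioi)
    (fun q _ => s.hasDerivAt_avgPotential_fst δ q.1 q.2)
    (fun _ hq => s.hasDerivAt_avgPotential_snd hl hr hδ (mem_Ioi.1 hq.1).le hq.2)
    ((s.continuousOn_avgState δ).mono (prod_mono (subset_univ _) Ioi_subset_Ici_self))
    ((s.continuousOn_avgFlux hr δ).mono (prod_mono (subset_univ _) Ioi_subset_Ici_self)).neg hp

lemma contDiffAt_avgPotential {p : ℝ × ℝ} (hp : p ∈ Ioi (0 : ℝ) ×ˢ Ioi (0 : ℝ)) :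
    ContDiffAt ℝ 1 (s.avgPotential δ) p :=
  contDiffAt_one_of_hasDerivAt_partials (isOpen_Ioi.prod isOpen_Ioi)
    (fun q _ => s.hasDerivAt_avgPotential_fst δ q.1 q.2)
    (fun _ hq => s.hasDerivAt_avgPotential_snd hl hr hδ (mem_Ioi.1 hq.1).le hq.2)
    ((s.continuousOn_avgState δ).mono (prod_mono (subset_univ _) Ioi_subset_Ici_self))
    ((s.continuousOn_avgFlux hr δ).mono (prod_mono (subset_univ _) Ioi_subset_Ici_self)).neg hp

end Quadrant

end ABSol

/-- The cost, in the Lax–Oleinik formula for the flux `f`, of a straight leg from `p` to `q`, both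
points written as (position, time). -/
def laxCost (f : ℝ → ℝ) (p q : ℝ × ℝ) : ℝ := (q.2 - p.2) * legendre f ((q.1 - p.1) / (q.2 - p.2))

lemma UniformlyConvexFlux.laxCost_comp_neg {f : ℝ → ℝ} {a : ℝ} (h : UniformlyConvexFlux f a)
    (p q : ℝ × ℝ) : laxCost (fun w => f (-w)) p q = laxCost f (-p.1, p.2) (-q.1, q.2) := by
  rw [laxCost, laxCost, h.legendre_comp_neg]
  ring_nf

namespace ABSol

variable {fl fr : ℝ → ℝ} {A B a : ℝ} {u0 : ℝ → ℝ} (s : ABSol fl fr A B u0)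

lemma avgPotential_le_add_laxCost (hl : Continuous fl) (hr : UniformlyConvexFlux fr a) {δ : ℝ}
    (hδ : 0 < δ) {p q : ℝ × ℝ} (hp : p ∈ Ioi (0 : ℝ) ×ˢ Ioi (0 : ℝ))
    (hq : q ∈ Ioi (0 : ℝ) ×ˢ Ioi (0 : ℝ)) (hpq : p.2 < q.2) :
    s.avgPotential δ q ≤ s.avgPotential δ p + laxCost fr p q := by
  have hmem : ∀ θ ∈ Icc (0 : ℝ) 1, AffineMap.lineMap p q θ ∈ Ioi (0 : ℝ) ×ˢ Ioi (0 : ℝ) :=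
    fun θ hθ => ((convex_Ioi 0).prod (convex_Ioi 0)).lineMap_mem hp hq hθ
  have hderiv : ∀ θ ∈ Icc (0 : ℝ) 1,
      HasDerivAt (fun θ => s.avgPotential δ (AffineMap.lineMap p q θ)) ((q.2 - p.2) *
        ((q.1 - p.1) / (q.2 - p.2) * s.avgState δ (AffineMap.lineMap p q θ) -
          s.avgFlux δ (AffineMap.lineMap p q θ))) θ := fun θ hθ => by
    refine ((s.hasFDerivAt_avgPotential hl hr.locallyLipschitz hδ (hmem θ hθ)).comp_hasDerivAt θ
      AffineMap.hasDerivAt_lineMap).congr_deriv ?_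
    rw [mul_sub, ← mul_assoc, mul_div_cancel₀ _ (sub_pos.2 hpq).ne']
    simp only [add_apply, smul_apply, smul_eq_mul, ContinuousLinearMap.coe_fst',
      ContinuousLinearMap.coe_snd', Prod.fst_sub, Prod.snd_sub]
    ring
  have hmvt := (convex_Icc (0 : ℝ) 1).image_sub_le_mul_sub_of_deriv_le (C := laxCost fr p q)
    (fun θ hθ => (hderiv θ hθ).continuousAt.continuousWithinAt)
    (fun θ hθ => (hderiv θ (interior_subset hθ)).differentiableAt.differentiableWithinAt)
    (fun θ hθ => by
      rw [(hderiv θ (interior_subset hθ)).deriv]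
      exact mul_le_mul_of_nonneg_left (s.avgState_mul_sub_avgFlux_le hr hδ _ _)
        (sub_pos.2 hpq).le)
    0 (left_mem_Icc.2 zero_le_one) 1 (right_mem_Icc.2 zero_le_one) zero_le_one
  simpa [add_comm, sub_le_iff_le_add] using hmvt

lemma tendsto_avgPotential (p : ℝ × ℝ) :
    Tendsto (fun δ => s.avgPotential δ p) (𝓝[>] 0) (𝓝 (s.potential p.1 p.2)) :=
  tendsto_rightAverage (s.continuous_potential p.2).intervalIntegrable
    ((s.continuous_potential p.2).continuousAt.mono_left nhdsWithin_le_nhds)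

lemma tendsto_potential_add_add (hl : Continuous fl) (hr : Continuous fr) {p : ℝ × ℝ}
    (hp : 0 ≤ p.2) :
    Tendsto (fun η => s.potential (p.1 + η) (p.2 + η)) (𝓝[>] 0) (𝓝 (s.potential p.1 p.2)) := by
  have hcont : Continuous fun η : ℝ => (p.1 + η, p.2 + η) := by fun_prop
  have htend : Tendsto (fun η : ℝ => (p.1 + η, p.2 + η)) (𝓝[>] 0) (𝓝[univ ×ˢ Ici 0] p) := by
    refine tendsto_nhdsWithin_iff.2 ⟨(hcont.tendsto' 0 p ?_).mono_left nhdsWithin_le_nhds, ?_⟩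
    · rw [add_zero, add_zero]
    · filter_upwards [self_mem_nhdsWithin] with η hη
      exact mk_mem_prod (mem_univ _) (add_nonneg hp (mem_Ioi.1 hη).le)
  have hcomp := ((s.continuousOn_potential hl hr).continuousWithinAt
    (mk_mem_prod (mem_univ _) hp)).tendsto.comp htend
  simpa only [Function.comp_def] using hcomp

/-- By Fenchel–Young the potential is a subsolution of `∂ₜU + f_r(∂ₓU) = 0`. -/
theorem potential_le_add_laxCost_right (hl : Continuous fl) (hr : UniformlyConvexFlux fr a)
    {p q : ℝ × ℝ} (hp₁ : 0 ≤ p.1) (hp₂ : 0 ≤ p.2) (hq₁ : 0 ≤ q.1) (hpq : p.2 < q.2) :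
    s.potential q.1 q.2 ≤ s.potential p.1 p.2 + laxCost fr p q := by
  have hinterior : ∀ {p q : ℝ × ℝ}, p ∈ Ioi (0 : ℝ) ×ˢ Ioi (0 : ℝ) →
      q ∈ Ioi (0 : ℝ) ×ˢ Ioi (0 : ℝ) → p.2 < q.2 →
      s.potential q.1 q.2 ≤ s.potential p.1 p.2 + laxCost fr p q := fun hp hq hpq => by
    refine le_of_tendsto_of_tendsto (s.tendsto_avgPotential _)
      ((s.tendsto_avgPotential _).add_const _) ?_
    filter_upwards [self_mem_nhdsWithin] with δ hδ
    exact s.avgPotential_le_add_laxCost hl hr hδ hp hq hpq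
  refine le_of_tendsto_of_tendsto (s.tendsto_potential_add_add hl hr.continuous (hp₂.trans hpq.le))
    ((s.tendsto_potential_add_add hl hr.continuous hp₂).add_const _) ?_
  filter_upwards [self_mem_nhdsWithin] with η (hη : 0 < η)
  have h := hinterior (p := (p.1 + η, p.2 + η)) (q := (q.1 + η, q.2 + η))
    ⟨add_pos_of_nonneg_of_pos hp₁ hη, add_pos_of_nonneg_of_pos hp₂ hη⟩
    ⟨add_pos_of_nonneg_of_pos hq₁ hη, add_pos_of_nonneg_of_pos (hp₂.trans hpq.le) hη⟩
    (add_lt_add_left hpq η)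
  simpa only [laxCost, add_sub_add_right_eq_sub] using h

theorem potential_le_add_laxCost_left (hl : UniformlyConvexFlux fl a) (hr : Continuous fr)
    {p q : ℝ × ℝ} (hp₁ : p.1 ≤ 0) (hp₂ : 0 ≤ p.2) (hq₁ : q.1 ≤ 0) (hpq : p.2 < q.2) :
    s.potential q.1 q.2 ≤ s.potential p.1 p.2 + laxCost fl p q := by
  have h := s.reflect.potential_le_add_laxCost_right (hr.comp continuous_neg) hl.comp_neg
    (p := (-p.1, p.2)) (q := (-q.1, q.2)) (neg_nonneg.2 hp₁) hp₂
    (neg_nonneg.2 hq₁) hpq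
  simpa [s.potential_reflect hl.continuous hr, hl.laxCost_comp_neg] using h

theorem potential_interface_le (hl : UniformlyConvexFlux fl a) (hr : UniformlyConvexFlux fr a)
    (hAB : IsConnection fl fr A B) {t₁ t₂ : ℝ} (ht₁ : 0 ≤ t₁) (ht : t₁ ≤ t₂) :
    s.potential 0 t₂ ≤ s.potential 0 t₁ - fl A * (t₂ - t₁) := by
  have hint := intervalIntegral.integral_mono_ae_restrict ht
    (intervalIntegrable_const (c := fl A) (μ := volume))
    (s.intervalIntegrable_fluxRight hl.continuous hr.continuous 0 t₁ t₂) <| by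
      rw [EventuallyLE, ae_restrict_iff' measurableSet_Icc]
      filter_upwards [s.interface_alternatives hl hr hAB, measure_eq_zero_iff_ae_notMem.1
        (measure_singleton (μ := volume) (0 : ℝ))] with t halt ht₀ htmem
      exact (halt ((ht₁.trans htmem.1).lt_of_ne' ht₀)).2.1
  rw [intervalIntegral.integral_const, smul_eq_mul] at hint
  linarith [s.potential_sub_time hl.continuous hr.continuous 0 ht₁ ht]

end ABSol

/-! ### The potential is a viscosity supersolution -/

lemma hasDerivAt_of_abs_sub_le_mul_sq {f : ℝ → ℝ} {f' x C : ℝ}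
    (h : ∀ y, |f y - f x - f' * (y - x)| ≤ C * (y - x) ^ 2) : HasDerivAt f f' x := by
  refine hasDerivAt_iff_isLittleO.2 (Asymptotics.IsBigO.trans_isLittleO (g := fun y => (y - x) ^ 2)
    (.of_bound C (Eventually.of_forall fun y => ?_)) ?_)
  · rw [Real.norm_eq_abs, Real.norm_eq_abs, abs_sq, smul_eq_mul, mul_comm (y - x)]
    exact h y
  · exact (Asymptotics.isLittleO_pow_id one_lt_two).comp_tendsto
      ((continuous_sub_right x).tendsto' x 0 (sub_self x))

lemma hasDerivAt_max_zero_sq (x : ℝ) : HasDerivAt (fun x => max 0 x ^ 2) (2 * max 0 x) x := by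
  refine hasDerivAt_of_abs_sub_le_mul_sq (C := 1) fun y => ?_
  rw [abs_le]
  rcases le_total 0 x with hx | hx <;> rcases le_total 0 y with hy | hy <;>
    simp only [max_eq_left, max_eq_right, hx, hy] <;> constructor <;> nlinarith

lemma contDiff_max_zero_sq : ContDiff ℝ 1 fun x : ℝ => max 0 x ^ 2 := by
  refine contDiff_one_iff_deriv.2 ⟨fun x => (hasDerivAt_max_zero_sq x).differentiableAt, ?_⟩
  rw [funext fun x => (hasDerivAt_max_zero_sq x).deriv]
  fun_prop

section SqCutoff

variable {E : Type*} [NormedAddCommGroup E] {c : E} {r ρ : ℝ} {Q : E → ℝ}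

/-- The square of the positive part of `Q`, cut off outside a ball; it is used as a test function
when `Q ≤ 0` near the boundary of the ball. -/
def sqCutoff (c : E) (ρ : ℝ) (Q : E → ℝ) : E → ℝ :=
  (Metric.ball c ρ).indicator fun p => max 0 (Q p) ^ 2

lemma sqCutoff_nonneg (c : E) (ρ : ℝ) (Q : E → ℝ) (p : E) : 0 ≤ sqCutoff c ρ Q p :=
  indicator_nonneg (fun _ _ => sq_nonneg _) p

variable (hQ₀ : ∀ p ∈ Metric.ball c ρ \ Metric.ball c r, Q p ≤ 0)
include hQ₀

lemma sqCutoff_eq_zero {p : E} (hp : p ∉ Metric.ball c r) : sqCutoff c ρ Q p = 0 :=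
  indicator_apply_eq_zero.2 fun hpρ => by rw [max_eq_left (hQ₀ p ⟨hpρ, hp⟩), sq, zero_mul]

lemma hasCompactSupport_sqCutoff [ProperSpace E] : HasCompactSupport (sqCutoff c ρ Q) :=
  HasCompactSupport.intro (isCompact_closedBall c r) fun _ hp =>
    sqCutoff_eq_zero hQ₀ fun h => hp (Metric.ball_subset_closedBall h)

variable (hr : r < ρ)
include hr

lemma sqCutoff_eventuallyEq_zero {p : E} (hp : p ∉ Metric.ball c ρ) :
    sqCutoff c ρ Q =ᶠ[𝓝 p] fun _ => 0 := by
  filter_upwards [Metric.isClosed_closedBall.isOpen_compl.mem_nhds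
    fun h => hp (Metric.closedBall_subset_ball hr h)] with q hq
  exact sqCutoff_eq_zero hQ₀ fun h => hq (Metric.ball_subset_closedBall h)

variable [NormedSpace ℝ E] (hQ : ∀ p ∈ Metric.ball c ρ, ContDiffAt ℝ 1 Q p)
include hQ

lemma contDiff_sqCutoff : ContDiff ℝ 1 (sqCutoff c ρ Q) := by
  refine contDiff_iff_contDiffAt.2 fun p => ?_
  by_cases hp : p ∈ Metric.ball c ρ
  · exact (contDiff_max_zero_sq.contDiffAt.comp p (hQ p hp)).congr_of_eventuallyEq
      (eqOn_indicator.eventuallyEq_of_mem (Metric.isOpen_ball.mem_nhds hp))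
  · exact contDiffAt_const.congr_of_eventuallyEq (sqCutoff_eventuallyEq_zero hQ₀ hr hp)

lemma fderiv_sqCutoff (v : E) : (fun p => fderiv ℝ (sqCutoff c ρ Q) p v) =
    (Metric.ball c ρ).indicator fun p => 2 * max 0 (Q p) * fderiv ℝ Q p v := by
  funext p
  by_cases hp : p ∈ Metric.ball c ρ
  · have hsq : HasFDerivAt (sqCutoff c ρ Q) ((2 * max 0 (Q p)) • fderiv ℝ Q p) p :=
      ((hasDerivAt_max_zero_sq (Q p)).comp_hasFDerivAt p
        ((hQ p hp).differentiableAt one_ne_zero).hasFDerivAt).congr_of_eventuallyEq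
          (eqOn_indicator.eventuallyEq_of_mem (Metric.isOpen_ball.mem_nhds hp))
    rw [indicator_of_mem hp, hsq.fderiv, smul_apply, smul_eq_mul]
  · rw [indicator_of_notMem hp, (sqCutoff_eventuallyEq_zero hQ₀ hr hp).fderiv_eq,
      fderiv_const_apply, zero_apply]

end SqCutoff

lemma deriv_comp_prodMk_left {f : ℝ × ℝ → ℝ} {p : ℝ × ℝ} (hf : DifferentiableAt ℝ f p) :
    deriv (fun x => f (x, p.2)) p.1 = fderiv ℝ f p (1, 0) :=
  (hf.hasFDerivAt.comp_hasDerivAt p.1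
    ((hasDerivAt_id p.1).prodMk (hasDerivAt_const p.1 p.2))).deriv

lemma deriv_comp_prodMk_right {f : ℝ × ℝ → ℝ} {p : ℝ × ℝ} (hf : DifferentiableAt ℝ f p) :
    deriv (fun t => f (p.1, t)) p.2 = fderiv ℝ f p (0, 1) :=
  (hf.hasFDerivAt.comp_hasDerivAt p.2
    ((hasDerivAt_const p.2 p.1).prodMk (hasDerivAt_id p.2))).deriv

namespace ABSol

variable {fl fr : ℝ → ℝ} {A B a : ℝ} {u0 : ℝ → ℝ} (s : ABSol fl fr A B u0)

lemma tendsto_rightAverage_comp {g : ℝ → ℝ} (hg : Continuous g) (x : ℝ) {t : ℝ} (ht : 0 < t) :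
    Tendsto (fun δ => rightAverage δ (fun y => g (s.u y t)) x) (𝓝[>] 0) (𝓝 (g (s.up x t))) :=
  tendsto_rightAverage (s.intervalIntegrable_comp_u hg t)
    ((hg.tendsto _).comp (s.up_spec x t ht))

/-- The integrand of the Kružkov inequality with constant `k`, tested with the square of the
positive part of `κ - (V - W)`, where `D` and `-F` stand for the partial derivatives of `V`. -/
def testIntegrand (k κ : ℝ) (W V D F : ℝ × ℝ → ℝ) (p : ℝ × ℝ) : ℝ :=
  2 * max 0 (κ - (V p - W p)) * (|s.u p.1 p.2 - k| * (F p + fderiv ℝ W p (0, 1)) +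
    Real.sign (s.u p.1 p.2 - k) * (fr (s.u p.1 p.2) - fr k) * (fderiv ℝ W p (1, 0) - D p))

lemma abs_testIntegrand_le {M L K κ : ℝ} (h : s.BoundedBy M L) (hκ : 0 ≤ κ) (k : ℝ)
    {W V D F : ℝ × ℝ → ℝ} {p : ℝ × ℝ} (hV : |V p| ≤ K) (hW : |W p| ≤ K)
    (hWx : |fderiv ℝ W p (1, 0)| ≤ K) (hWt : |fderiv ℝ W p (0, 1)| ≤ K) (hD : |D p| ≤ M)
    (hF : |F p| ≤ L) :
    |s.testIntegrand k κ W V D F p| ≤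
      2 * (κ + (K + K)) * ((M + |k|) * (L + K) + (L + |fr k|) * (K + M)) := by
  have hpos : max 0 (κ - (V p - W p)) ≤ κ + (K + K) := by
    have hK : 0 ≤ K := (abs_nonneg _).trans hV
    refine max_le (by positivity) ?_
    linarith [neg_le_of_abs_le hV, le_of_abs_le hW]
  have hu := h.abs_u_le p.1 p.2
  rw [testIntegrand, abs_mul, abs_of_nonneg (by positivity)]
  refine mul_le_mul (mul_le_mul_of_nonneg_left hpos two_pos.le) ((abs_add_le _ _).trans ?_)
    (abs_nonneg _) ((mul_nonneg two_pos.le (le_max_left _ _)).trans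
      (mul_le_mul_of_nonneg_left hpos two_pos.le))
  rw [abs_mul, abs_mul (_ * _), abs_abs]
  gcongr
  · exact (h.pos.le.trans (le_add_of_nonneg_right (abs_nonneg k)))
  · exact (abs_sub _ _).trans (by gcongr)
  · exact (abs_add_le _ _).trans (by gcongr)
  · exact add_nonneg h.flux_pos.le (abs_nonneg _)
  · exact (abs_sign_mul_le _ _).trans
      ((abs_sub _ _).trans (by gcongr; exact h.abs_right_le _ hu))
  · exact (abs_sub _ _).trans (by gcongr)

lemma aestronglyMeasurable_testIntegrand (hr : Continuous fr) (k κ : ℝ) {W V D F : ℝ × ℝ → ℝ}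
    {O : Set (ℝ × ℝ)} (hO : IsOpen O) (hW : ContDiffOn ℝ 1 W O)
    (hV : AEStronglyMeasurable V (volume.restrict O))
    (hD : AEStronglyMeasurable D (volume.restrict O))
    (hF : AEStronglyMeasurable F (volume.restrict O)) :
    AEStronglyMeasurable (s.testIntegrand k κ W V D F) (volume.restrict O) := by
  have hWm := hW.continuousOn.aestronglyMeasurable (μ := volume) hO.measurableSet
  have hWd := fun v : ℝ × ℝ => ((hW.continuousOn_fderiv_of_isOpen hO le_rfl).clm_apply
    (continuousOn_const (c := v))).aestronglyMeasurable (μ := volume) hO.measurableSet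
  have hu : Measurable fun p : ℝ × ℝ => s.u p.1 p.2 := s.meas
  have hsign := (measurable_sign_real.comp (hu.sub_const k)).aestronglyMeasurable
    (μ := volume.restrict O)
  have habs := (hu.sub_const k).abs.aestronglyMeasurable (μ := volume.restrict O)
  have hfr := ((hr.measurable.comp hu).sub_const (fr k)).aestronglyMeasurable
    (μ := volume.restrict O)
  have hpos := (((continuous_const (y := (0 : ℝ))).max continuous_id).comp_aestronglyMeasurable
    ((aestronglyMeasurable_const (b := κ)).sub (hV.sub hWm))).const_mul 2
  exact hpos.mul ((habs.mul (hF.add (hWd _))).add ((hsign.mul hfr).mul ((hWd _).sub hD)))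

section TestInequality

variable (hl : Continuous fl) (hr : LocallyLipschitz fr) {W : ℝ × ℝ → ℝ} {p₀ : ℝ × ℝ}
  {r ρ κ : ℝ} (hball : Metric.ball p₀ ρ ⊆ Ioi (0 : ℝ) ×ˢ Ioi (0 : ℝ)) (hrρ : r < ρ)
include hl hr hball hrρ

lemma integral_test_avgPotential_nonneg (hW : ∀ p ∈ Metric.ball p₀ ρ, ContDiffAt ℝ 1 W p) {δ : ℝ}
    (hδ : 0 < δ)
    (hout : ∀ p ∈ Metric.ball p₀ ρ \ Metric.ball p₀ r, κ - (s.avgPotential δ p - W p) ≤ 0)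
    (k : ℝ) :
    0 ≤ ∫ p in Metric.ball p₀ ρ,
      s.testIntegrand k κ W (s.avgPotential δ) (s.avgState δ) (s.avgFlux δ) p := by
  set Q := fun p => κ - (s.avgPotential δ p - W p)
  have hQ : ∀ p ∈ Metric.ball p₀ ρ, ContDiffAt ℝ 1 Q p := fun p hp =>
    contDiffAt_const.sub ((s.contDiffAt_avgPotential hl hr hδ (hball hp)).sub (hW p hp))
  have hcut := contDiff_sqCutoff (Q := Q) hout hrρ hQ
  have hcutd := fun p => hcut.contDiffAt.differentiableAt (x := p) one_ne_zero
  have hQd : ∀ p ∈ Metric.ball p₀ ρ, ∀ v : ℝ × ℝ, fderiv ℝ Q p v =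
      fderiv ℝ W p v - (s.avgState δ p * v.1 - s.avgFlux δ p * v.2) := fun p hp v => by
    have h := ((s.hasFDerivAt_avgPotential hl hr hδ (hball hp)).sub
      ((hW p hp).differentiableAt one_ne_zero).hasFDerivAt).const_sub κ
    rw [show fderiv ℝ Q p = _ from h.fderiv]
    simp only [neg_apply, sub_apply, add_apply, smul_apply, smul_eq_mul,
      ContinuousLinearMap.coe_fst', ContinuousLinearMap.coe_snd']
    ring
  refine (s.kruzkov_r k (fun x t => sqCutoff p₀ ρ Q (x, t)) hcut
    (hasCompactSupport_sqCutoff hout) (fun x t => sqCutoff_nonneg _ _ _ _)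
    fun x t hxt => indicator_of_notMem (fun hmem => ?_) _).trans_eq ?_
  · exact hxt.elim (hball hmem).1.not_ge (hball hmem).2.not_ge
  · rw [← integral_indicator Metric.isOpen_ball.measurableSet]
    refine integral_congr_ae (Eventually.of_forall fun p => ?_)
    simp only [deriv_comp_prodMk_left (hcutd p), deriv_comp_prodMk_right (hcutd p)]
    rw [congrFun (fderiv_sqCutoff (Q := Q) hout hrρ hQ (0, 1)) p,
      congrFun (fderiv_sqCutoff (Q := Q) hout hrρ hQ (1, 0)) p]
    by_cases hp : p ∈ Metric.ball p₀ ρ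
    · simp only [indicator_of_mem hp, hQd p hp, testIntegrand]
      ring
    · simp only [indicator_of_notMem hp, mul_zero, add_zero]

end TestInequality

lemma tendsto_testIntegrand (hr : Continuous fr) (k κ : ℝ) (W : ℝ × ℝ → ℝ) {p : ℝ × ℝ}
    (hp : 0 < p.2) (hup : s.up p.1 p.2 = s.u p.1 p.2) :
    Tendsto
      (fun δ => s.testIntegrand k κ W (s.avgPotential δ) (s.avgState δ) (s.avgFlux δ) p) (𝓝[>] 0)
      (𝓝 (s.testIntegrand k κ W (fun p => s.potential p.1 p.2) (fun p => s.u p.1 p.2)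
        (fun p => fr (s.u p.1 p.2)) p)) := by
  have hstate := s.tendsto_rightAverage_comp continuous_id p.1 hp
  have hflux := s.tendsto_rightAverage_comp hr p.1 hp
  rw [hup] at hstate hflux
  exact ((tendsto_const_nhds.max (((s.tendsto_avgPotential p).sub_const _).const_sub κ)).const_mul
    2).mul (((hflux.add_const _).const_mul _).add ((hstate.const_sub _).const_mul _))

section Limit

variable (hl : Continuous fl) (hr : LocallyLipschitz fr) {W : ℝ × ℝ → ℝ} {p₀ : ℝ × ℝ}
  {r ρ κ : ℝ} (hball : Metric.closedBall p₀ ρ ⊆ Ioi (0 : ℝ) ×ˢ Ioi (0 : ℝ))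
  (hW : ∀ p ∈ Metric.closedBall p₀ ρ, ContDiffAt ℝ 1 W p)
include hl hr hball hW

lemma exists_abs_testIntegrand_avg_le (hκ : 0 ≤ κ) (k : ℝ) :
    ∃ C, ∀ δ ∈ Ioc (0 : ℝ) 1, ∀ p ∈ Metric.ball p₀ ρ,
      |s.testIntegrand k κ W (s.avgPotential δ) (s.avgState δ) (s.avgFlux δ) p| ≤ C := by
  obtain ⟨M, L, -, h⟩ := s.exists_boundedBy hl hr.continuous 0
  have hbound : ∀ {g : ℝ × ℝ → ℝ}, ContinuousOn g (Metric.closedBall p₀ ρ) →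
      ∃ K, ∀ p ∈ Metric.closedBall p₀ ρ, |g p| ≤ K := fun hg =>
    (isCompact_closedBall p₀ ρ).exists_bound_of_continuousOn hg
  have hWd : ∀ v : ℝ × ℝ, ContinuousOn (fun p => fderiv ℝ W p v) (Metric.closedBall p₀ ρ) :=
    fun v p hp => (((hW p hp).fderiv_right (m := 0) le_rfl).continuousAt.clm_apply
      continuousAt_const).continuousWithinAt
  obtain ⟨K₁, hK₁⟩ := hbound ((s.continuousOn_potential hl hr.continuous).mono
    (hball.trans (prod_mono (subset_univ _) Ioi_subset_Ici_self)))
  obtain ⟨K₂, hK₂⟩ := hbound fun p hp => (hW p hp).continuousAt.continuousWithinAt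
  obtain ⟨K₃, hK₃⟩ := hbound (hWd (1, 0))
  obtain ⟨K₄, hK₄⟩ := hbound (hWd (0, 1))
  set K := max (max (K₁ + M) K₂) (max K₃ K₄)
  refine ⟨_, fun δ hδ p hp => s.abs_testIntegrand_le h hκ k (K := K) ?_ ?_ ?_ ?_ ?_ ?_⟩
  all_goals have hp' := Metric.ball_subset_closedBall hp
  · have hV := (abs_sub_abs_le_abs_sub _ _).trans (h.abs_avgPotential_sub_le hδ.1 p)
    refine le_max_of_le_left (le_max_of_le_left ?_)
    linarith [hK₁ p hp', mul_le_of_le_one_right h.pos.le hδ.2]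
  · exact le_max_of_le_left (le_max_of_le_right (hK₂ p hp'))
  · exact le_max_of_le_right (le_max_of_le_left (hK₃ p hp'))
  · exact le_max_of_le_right (le_max_of_le_right (hK₄ p hp'))
  · exact abs_rightAverage_le (s.intervalIntegrable_u p.2) hδ.1 (h.abs_u_le · p.2) p.1
  · exact abs_rightAverage_le (s.intervalIntegrable_comp_u hr.continuous p.2) hδ.1
      (fun y => h.abs_right_le _ (h.abs_u_le y p.2)) p.1

lemma integral_testIntegrand_nonneg (hrρ : r < ρ) (hκ : 0 < κ)
    (hout : ∀ p ∈ Metric.ball p₀ ρ \ Metric.ball p₀ r, 2 * κ ≤ s.potential p.1 p.2 - W p)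
    (k : ℝ) :
    0 ≤ ∫ p in Metric.ball p₀ ρ, s.testIntegrand k κ W (fun p => s.potential p.1 p.2)
      (fun p => s.u p.1 p.2) (fun p => fr (s.u p.1 p.2)) p := by
  obtain ⟨C, hC⟩ := s.exists_abs_testIntegrand_avg_le hl hr hball hW hκ.le k
  obtain ⟨M, L, -, h⟩ := s.exists_boundedBy hl hr.continuous 0
  have hsub : Metric.ball p₀ ρ ⊆ Ioi (0 : ℝ) ×ˢ Ioi (0 : ℝ) :=
    Metric.ball_subset_closedBall.trans hball
  have hW' := fun p hp => hW p (Metric.ball_subset_closedBall hp)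
  have hO := Metric.isOpen_ball (x := p₀) (ε := ρ)
  have hδ₁ : ∀ᶠ δ : ℝ in 𝓝[>] 0, δ ∈ Ioc (0 : ℝ) 1 := Ioc_mem_nhdsGT one_pos
  refine ge_of_tendsto (tendsto_integral_filter_of_dominated_convergence (fun _ => C)
    ?_ ?_ (integrableOn_const measure_ball_lt_top.ne) ?_)
    (hδ₁.and (Ioc_mem_nhdsGT (div_pos hκ h.pos)) |>.mono fun δ hδ =>
      s.integral_test_avgPotential_nonneg (κ := κ) hl hr hsub hrρ hW' hδ.1.1 (fun p hp => ?_) k)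
  · filter_upwards [hδ₁] with δ hδ
    have hmeas : ∀ {g : ℝ × ℝ → ℝ}, ContinuousOn g (Metric.ball p₀ ρ) →
        AEStronglyMeasurable g (volume.restrict (Metric.ball p₀ ρ)) := fun hg =>
      hg.aestronglyMeasurable hO.measurableSet
    have hhalf := hsub.trans (prod_mono (subset_univ _) Ioi_subset_Ici_self)
    exact s.aestronglyMeasurable_testIntegrand hr.continuous k κ hO
      (fun p hp => (hW' p hp).contDiffWithinAt)
      (hmeas fun p hp =>
        (s.contDiffAt_avgPotential hl hr hδ.1 (hsub hp)).continuousAt.continuousWithinAt)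
      (hmeas ((s.continuousOn_avgState δ).mono hhalf))
      (hmeas ((s.continuousOn_avgFlux hr δ).mono hhalf))
  · filter_upwards [hδ₁] with δ hδ
    exact (ae_restrict_iff' hO.measurableSet).2 (Eventually.of_forall (hC δ hδ))
  · rw [ae_restrict_iff' hO.measurableSet]
    filter_upwards [s.ae_prod_up_eq] with p hup hp
    exact s.tendsto_testIntegrand hr.continuous k κ W (hsub hp).2 (hup (hsub hp).2)
  · have havg := neg_le_of_abs_le (h.abs_avgPotential_sub_le hδ.1.1 p)
    have hMδ : M * δ ≤ κ := by
      rw [mul_comm]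
      exact (le_div_iff₀ h.pos).1 hδ.2.2
    linarith [hout p hp]

end Limit

end ABSol

lemma eq_of_tendsto_of_ae_eq {g : ℝ → ℝ} {x ε l k : ℝ} (hε : 0 < ε)
    (hl : Tendsto g (𝓝[>] x) (𝓝 l)) (hg : ∀ᵐ y, dist y x < ε → g y = k) : l = k := by
  refine tendsto_nhds_unique_of_frequently_eq hl tendsto_const_nhds
    (frequently_iff.2 fun {U} hU => ?_)
  obtain ⟨z, hz, hsub⟩ := mem_nhdsGT_iff_exists_Ioo_subset.1 (inter_mem hU
    (Ioo_mem_nhdsGT (lt_add_of_pos_right x hε)))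
  obtain ⟨y, hy, hxy⟩ := (Measure.dense_of_ae hg).exists_between hz
  refine ⟨y, (hsub hxy).1, hy ?_⟩
  rw [Real.dist_eq, abs_of_pos (sub_pos.2 hxy.1)]
  exact sub_left_lt_of_lt_add (hsub hxy).2.2

namespace ABSol

variable {fl fr : ℝ → ℝ} {A B a : ℝ} {u0 : ℝ → ℝ} (s : ABSol fl fr A B u0)

section AeConst

variable {p₀ : ℝ × ℝ} (hp₀ : p₀ ∈ Ioi (0 : ℝ) ×ˢ Ioi (0 : ℝ)) {k ε : ℝ} (hε : 0 < ε)
  (hu : ∀ᵐ p : ℝ × ℝ, p ∈ Metric.ball p₀ ε → s.u p.1 p.2 = k)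
include hp₀ hε hu

lemma ae_fluxRight_eq_of_ae_eq :
    ∀ᵐ t, t ∈ Metric.ball p₀.2 (min ε p₀.2) → s.fluxRight p₀.1 t = fr k := by
  have hmeas : MeasurableSet {p : ℝ × ℝ | p ∈ Metric.ball p₀ ε → s.u p.1 p.2 = k} :=
    Metric.isOpen_ball.measurableSet.imp (measurableSet_eq_fun s.meas measurable_const)
  have hslice : ∀ᵐ t, ∀ᵐ x, (x, t) ∈ Metric.ball p₀ ε → s.u x t = k :=
    (Measure.ae_ae_comm hmeas).1 (Measure.ae_ae_of_ae_prod hu)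
  filter_upwards [hslice] with t hx ht
  obtain ⟨htε, htpos⟩ := lt_min_iff.1 (Metric.mem_ball.1 ht)
  have ht₀ : 0 < t := by
    rw [Real.dist_eq] at htpos
    linarith [neg_lt_of_abs_lt htpos]
  have hup := eq_of_tendsto_of_ae_eq hε (s.up_spec p₀.1 t ht₀)
    (hx.mono fun y hy hyx => hy (max_lt hyx htε))
  rw [fluxRight, indicator_of_mem (mem_Ioi.2 ht₀), dflux_of_nonneg hp₀.1.le, hup]

lemma hasDerivAt_potential_snd_of_ae_eq (hl : Continuous fl) (hr : Continuous fr) :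
    HasDerivAt (fun t => s.potential p₀.1 t) (-fr k) p₀.2 := by
  have hlin : (fun t => s.potential p₀.1 t) =ᶠ[𝓝 p₀.2]
      fun t => s.potential p₀.1 p₀.2 + -fr k * (t - p₀.2) := by
    have hincr : ∀ {t₁ t₂ : ℝ}, t₁ ∈ Metric.ball p₀.2 (min ε p₀.2) →
        t₂ ∈ Metric.ball p₀.2 (min ε p₀.2) → 0 ≤ t₁ → t₁ ≤ t₂ →
        s.potential p₀.1 t₂ - s.potential p₀.1 t₁ = -fr k * (t₂ - t₁) := fun h₁ h₂ h₀ h => by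
      have hball := (convex_ball p₀.2 (min ε p₀.2)).ordConnected.uIcc_subset h₁ h₂
      rw [s.potential_sub_time hl hr p₀.1 h₀ h, intervalIntegral.integral_congr_ae
        ((s.ae_fluxRight_eq_of_ae_eq hp₀ hε hu).mono
          fun t ht hmem => ht (hball (uIoc_subset_uIcc hmem))),
        intervalIntegral.integral_const, smul_eq_mul]
      ring
    have hη : 0 < min ε p₀.2 := lt_min hε hp₀.2
    filter_upwards [Metric.ball_mem_nhds p₀.2 hη, lt_mem_nhds hp₀.2] with t ht ht₀
    rcases le_total p₀.2 t with h | h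
    · linarith [hincr (Metric.mem_ball_self hη) ht (le_of_lt hp₀.2) h]
    · linarith [hincr ht (Metric.mem_ball_self hη) ht₀.le h]
  refine HasDerivAt.congr_of_eventuallyEq ?_ hlin
  simpa using (((hasDerivAt_id p₀.2).sub_const p₀.2).const_mul (-fr k)).const_add
    (s.potential p₀.1 p₀.2)

end AeConst

lemma testIntegrand_le_of_le {k κ Λ : ℝ} {W V : ℝ × ℝ → ℝ} {p : ℝ × ℝ}
    (hfr : |fr (s.u p.1 p.2) - fr k| ≤ Λ * |s.u p.1 p.2 - k|) :
    s.testIntegrand k κ W V (fun p => s.u p.1 p.2) (fun p => fr (s.u p.1 p.2)) p ≤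
      2 * max 0 (κ - (V p - W p)) * |s.u p.1 p.2 - k| *
        (fderiv ℝ W p (0, 1) + fr k + Λ * |fderiv ℝ W p (1, 0) - k|) := by
  set w := s.u p.1 p.2
  set q := fderiv ℝ W p (1, 0)
  set τ := fderiv ℝ W p (0, 1)
  have hsign : Real.sign (w - k) * (w - k) = |w - k| :=
    (sign_sub_mul_sub_eq id w k).trans (max_sub_min_eq_abs' w k)
  have hprod : Real.sign (w - k) * (fr w - fr k) * (q - k) ≤ Λ * |w - k| * |q - k| := by
    refine (le_abs_self _).trans ?_
    rw [abs_mul]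
    exact mul_le_mul_of_nonneg_right ((abs_sign_mul_le _ _).trans hfr) (abs_nonneg _)
  have hrearrange : |w - k| * (fr w + τ) + Real.sign (w - k) * (fr w - fr k) * (q - w) =
      |w - k| * (fr k + τ) + Real.sign (w - k) * (fr w - fr k) * (q - k) := by
    linear_combination (fr k - fr w) * hsign
  rw [testIntegrand, hrearrange, mul_assoc (2 * _)]
  refine mul_le_mul_of_nonneg_left ?_ (mul_nonneg two_pos.le (le_max_left _ _))
  linarith

section StrictViolation

variable (hl : Continuous fl) (hr : LocallyLipschitz fr) {W : ℝ × ℝ → ℝ} {p₀ : ℝ × ℝ}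
  {r ρ κ : ℝ}
include hl hr

lemma integrableOn_testIntegrand (hball : Metric.closedBall p₀ ρ ⊆ Ioi (0 : ℝ) ×ˢ Ioi (0 : ℝ))
    (hW : ∀ p ∈ Metric.closedBall p₀ ρ, ContDiffAt ℝ 1 W p) (hκ : 0 ≤ κ) (k : ℝ) :
    IntegrableOn (s.testIntegrand k κ W (fun p => s.potential p.1 p.2) (fun p => s.u p.1 p.2)
      fun p => fr (s.u p.1 p.2)) (Metric.ball p₀ ρ) := by
  obtain ⟨C, hC⟩ := s.exists_abs_testIntegrand_avg_le hl hr hball hW hκ k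
  have hsub := Metric.ball_subset_closedBall.trans hball
  have hu : Measurable fun p : ℝ × ℝ => s.u p.1 p.2 := s.meas
  refine IntegrableOn.of_bound measure_ball_lt_top
    (s.aestronglyMeasurable_testIntegrand hr.continuous k κ Metric.isOpen_ball
      (fun p hp => (hW p (Metric.ball_subset_closedBall hp)).contDiffWithinAt)
      (((s.continuousOn_potential hl hr.continuous).mono (hsub.trans
        (prod_mono (subset_univ _) Ioi_subset_Ici_self))).aestronglyMeasurable
          Metric.isOpen_ball.measurableSet)
      hu.aestronglyMeasurable (hr.continuous.measurable.comp hu).aestronglyMeasurable) C ?_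
  rw [ae_restrict_iff' Metric.isOpen_ball.measurableSet]
  filter_upwards [s.ae_prod_up_eq] with p hup hp
  exact le_of_tendsto
    (s.tendsto_testIntegrand hr.continuous k κ W (hsub hp).2 (hup (hsub hp).2)).norm
    (mem_of_superset (Ioc_mem_nhdsGT one_pos) fun δ hδ => hC δ hδ p hp)

lemma ae_eq_of_integral_testIntegrand_nonneg {k Λ : ℝ}
    (hball : Metric.closedBall p₀ ρ ⊆ Ioi (0 : ℝ) ×ˢ Ioi (0 : ℝ))
    (hW : ∀ p ∈ Metric.closedBall p₀ ρ, ContDiffAt ℝ 1 W p) (hκ : 0 ≤ κ)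
    (hfr : ∀ p : ℝ × ℝ, |fr (s.u p.1 p.2) - fr k| ≤ Λ * |s.u p.1 p.2 - k|)
    (hslope : ∀ p ∈ Metric.ball p₀ ρ,
      fderiv ℝ W p (0, 1) + fr k + Λ * |fderiv ℝ W p (1, 0) - k| < 0)
    (hint : 0 ≤ ∫ p in Metric.ball p₀ ρ, s.testIntegrand k κ W (fun p => s.potential p.1 p.2)
      (fun p => s.u p.1 p.2) (fun p => fr (s.u p.1 p.2)) p) :
    ∀ᵐ p : ℝ × ℝ, p ∈ Metric.ball p₀ ρ → s.potential p.1 p.2 - W p < κ → s.u p.1 p.2 = k := by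
  set F := s.testIntegrand k κ W (fun p => s.potential p.1 p.2) (fun p => s.u p.1 p.2)
    fun p => fr (s.u p.1 p.2)
  have hO := (Metric.isOpen_ball (x := p₀) (ε := ρ)).measurableSet
  have hF : ∀ p ∈ Metric.ball p₀ ρ, F p ≤ 2 * max 0 (κ - (s.potential p.1 p.2 - W p)) *
      |s.u p.1 p.2 - k| * (fderiv ℝ W p (0, 1) + fr k + Λ * |fderiv ℝ W p (1, 0) - k|) :=
    fun p _ => s.testIntegrand_le_of_le (hfr p)
  have hF₀ : 0 ≤ᵐ[volume.restrict (Metric.ball p₀ ρ)] -F :=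
    (ae_restrict_iff' hO).2 <| Eventually.of_forall fun p hp => neg_nonneg.2 <|
      (hF p hp).trans (mul_nonpos_of_nonneg_of_nonpos (by positivity) (hslope p hp).le)
  have hzero := (integral_eq_zero_iff_of_nonneg_ae hF₀
    (s.integrableOn_testIntegrand hl hr hball hW hκ k).neg).1 (le_antisymm
      (by simpa only [Pi.neg_apply, integral_neg, neg_nonpos] using hint)
      (integral_nonneg_of_ae hF₀))
  filter_upwards [(ae_restrict_iff' hO).1 hzero] with p hp hmem hlt
  by_contra hne
  have hpos : 0 < 2 * max 0 (κ - (s.potential p.1 p.2 - W p)) * |s.u p.1 p.2 - k| :=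
    mul_pos (mul_pos two_pos (lt_max_of_lt_right (sub_pos.2 hlt))) (abs_pos.2 (sub_ne_zero.2 hne))
  exact ((hF p hmem).trans_lt (mul_neg_of_pos_of_neg hpos (hslope p hmem))).ne
    (neg_eq_zero.1 (hp hmem))

lemma ae_eq_of_strict_subsolution {k : ℝ} (hp₀ : p₀ ∈ Ioi (0 : ℝ) ×ˢ Ioi (0 : ℝ))
    (hW : ContDiffAt ℝ 1 W p₀) (hWp₀ : W p₀ = s.potential p₀.1 p₀.2)
    (hmin : ∀ᶠ p in 𝓝 p₀, dist p p₀ ^ 2 ≤ s.potential p.1 p.2 - W p)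
    (hk : fderiv ℝ W p₀ (1, 0) = k) (hstrict : fderiv ℝ W p₀ (0, 1) + fr k < 0) :
    ∃ ε > 0, ∀ᵐ p : ℝ × ℝ, p ∈ Metric.ball p₀ ε → s.u p.1 p.2 = k := by
  obtain ⟨M, L, hkM, h⟩ := s.exists_boundedBy hl hr.continuous |k|
  obtain ⟨Λ, hΛ⟩ := (hr.locallyLipschitzOn (s := Icc (-M) M))
    |>.exists_lipschitzOnWith_of_compact isCompact_Icc
  have hfr : ∀ p : ℝ × ℝ, |fr (s.u p.1 p.2) - fr k| ≤ Λ * |s.u p.1 p.2 - k| := fun p =>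
    hΛ.dist_le_mul _ (abs_le.1 (h.abs_u_le _ _)) _ (abs_le.1 hkM)
  set slope := fun p => fderiv ℝ W p (0, 1) + fr k + Λ * |fderiv ℝ W p (1, 0) - k|
  have hslope : ∀ᶠ p in 𝓝 p₀, slope p < 0 := by
    have hWd := fun v : ℝ × ℝ => (hW.fderiv_right (m := 0) le_rfl).continuousAt.clm_apply
      (continuousAt_const (y := v))
    refine ((((hWd (0, 1)).add_const _).add
      (((hWd (1, 0)).sub_const k).abs.const_mul _))).eventually_lt continuousAt_const ?_
    simpa [hk] using hstrict
  obtain ⟨ρ, hρ, hgood⟩ := Metric.nhds_basis_closedBall.eventually_iff.1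
    ((eventually_mem_set.2 ((isOpen_Ioi.prod isOpen_Ioi).mem_nhds hp₀)).and
      ((hW.eventually (by simp)).and (hslope.and hmin)))
  have hball : Metric.closedBall p₀ ρ ⊆ Ioi (0 : ℝ) ×ˢ Ioi (0 : ℝ) := fun p hp => (hgood hp).1
  have hWρ : ∀ p ∈ Metric.closedBall p₀ ρ, ContDiffAt ℝ 1 W p := fun p hp => (hgood hp).2.1
  have hout : ∀ p ∈ Metric.ball p₀ ρ \ Metric.ball p₀ (ρ / 2),
      2 * (ρ ^ 2 / 8) ≤ s.potential p.1 p.2 - W p := fun p hp => by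
    have hdist : ρ / 2 ≤ dist p p₀ := not_lt.1 hp.2
    nlinarith [(hgood (Metric.ball_subset_closedBall hp.1)).2.2.2]
  have hae := s.ae_eq_of_integral_testIntegrand_nonneg hl hr hball hWρ (by positivity) hfr
    (fun p hp => (hgood (Metric.ball_subset_closedBall hp)).2.2.1)
    (s.integral_testIntegrand_nonneg hl hr hball hWρ (half_lt_self hρ) (by positivity) hout k)
  have hclose : ∀ᶠ p in 𝓝 p₀, s.potential p.1 p.2 - W p < ρ ^ 2 / 8 := by
    refine ((((s.continuousOn_potential hl hr.continuous).continuousAt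
      (prod_mem_nhds univ_mem (Ici_mem_nhds hp₀.2))).sub
        hW.continuousAt).eventually_lt continuousAt_const ?_)
    simp only [Pi.sub_apply, hWp₀, sub_self]
    positivity
  obtain ⟨ε, hε, hsub⟩ := Metric.mem_nhds_iff.1 (inter_mem hclose (Metric.ball_mem_nhds p₀ hρ))
  exact ⟨ε, hε, hae.mono fun p hp hmem => hp (hsub hmem).2 (hsub hmem).1⟩

end StrictViolation

lemma potential_supersolution (hl : Continuous fl) (hr : LocallyLipschitz fr) {P : ℝ × ℝ → ℝ}
    {p₀ : ℝ × ℝ} (hp₀ : p₀ ∈ Ioi (0 : ℝ) ×ˢ Ioi (0 : ℝ)) (hP : ContDiffAt ℝ 1 P p₀)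
    (hmin : IsLocalMin (fun p : ℝ × ℝ => s.potential p.1 p.2 - P p) p₀) :
    0 ≤ fderiv ℝ P p₀ (0, 1) + fr (fderiv ℝ P p₀ (1, 0)) := by
  by_contra! hneg
  set Q := fun p : ℝ × ℝ =>
    s.potential p₀.1 p₀.2 - P p₀ - ((p.1 - p₀.1) ^ 2 + (p.2 - p₀.2) ^ 2)
  have hQmax : IsLocalMax Q p₀ := Eventually.of_forall fun p => by
    simp only [Q]
    nlinarith [sq_nonneg (p.1 - p₀.1), sq_nonneg (p.2 - p₀.2)]
  have hfderiv : fderiv ℝ (fun p => P p + Q p) p₀ = fderiv ℝ P p₀ := by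
    rw [fderiv_fun_add (hP.differentiableAt one_ne_zero) (by fun_prop), hQmax.fderiv_eq_zero,
      add_zero]
  have hbound : ∀ᶠ p in 𝓝 p₀, dist p p₀ ^ 2 ≤ s.potential p.1 p.2 - (P p + Q p) := by
    filter_upwards [hmin] with p hp
    have hsq : dist p p₀ ^ 2 ≤ (p.1 - p₀.1) ^ 2 + (p.2 - p₀.2) ^ 2 := by
      rw [Prod.dist_eq, Real.dist_eq, Real.dist_eq]
      rcases max_choice |p.1 - p₀.1| |p.2 - p₀.2| with h | h <;> rw [h, sq_abs] <;> nlinarith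
    linarith
  obtain ⟨ε, hε, hu⟩ := s.ae_eq_of_strict_subsolution hl hr hp₀ (W := fun p => P p + Q p)
    (hP.add (by fun_prop)) (by simp [Q]) hbound rfl (by rwa [hfderiv])
  rw [hfderiv] at hu
  have htime : IsLocalMin (fun t => s.potential p₀.1 t - P (p₀.1, t)) p₀.2 :=
    (Continuous.prodMk_right p₀.1).continuousAt.eventually hmin
  have hPt := (hP.differentiableAt one_ne_zero).hasFDerivAt.comp_hasDerivAt p₀.2
    ((hasDerivAt_const p₀.2 p₀.1).prodMk (hasDerivAt_id p₀.2))
  have hstat := htime.hasDerivAt_eq_zero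
    ((s.hasDerivAt_potential_snd_of_ae_eq hp₀ hε hu hl hr.continuous).sub hPt)
  linarith

end ABSol

/-! ### Optimal backward legs -/

namespace UniformlyConvexFlux

variable {f : ℝ → ℝ} {a : ℝ} (h : UniformlyConvexFlux f a)
include h

lemma hasDerivAt_legendre (p : ℝ) : HasDerivAt (legendre f) (derivInv f p) p := by
  refine hasDerivAt_of_abs_sub_le_mul_sq (C := 1 / a) fun y => ?_
  have hfenchel := h.mul_sub_le_legendre y (derivInv f p)
  have hdef : legendre f p = p * derivInv f p - f (derivInv f p) := rfl
  rw [abs_of_nonneg (by linarith), one_div_mul_eq_div]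
  linarith [h.legendre_le_quadratic p y]

lemma contDiff_legendre : ContDiff ℝ 1 (legendre f) := by
  refine contDiff_one_iff_deriv.2 ⟨fun p => (h.hasDerivAt_legendre p).differentiableAt, ?_⟩
  rw [funext fun p => (h.hasDerivAt_legendre p).deriv]
  exact h.continuous_derivInv

lemma continuousOn_laxCost {X : Type*} [TopologicalSpace X] {S : Set X} {p q : X → ℝ × ℝ}
    (hp : ContinuousOn p S) (hq : ContinuousOn q S) (hpq : ∀ x ∈ S, (p x).2 < (q x).2) :
    ContinuousOn (fun x => laxCost f (p x) (q x)) S :=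
  (hq.snd.sub hp.snd).mul (h.continuous_legendre.comp_continuousOn
    ((hq.fst.sub hp.fst).div (hq.snd.sub hp.snd) fun x hx => (sub_pos.2 (hpq x hx)).ne'))

section

variable {p q : ℝ × ℝ} (hpq : p.2 < q.2)
include hpq

lemma contDiffAt_laxCost_left : ContDiffAt ℝ 1 (fun p => laxCost f p q) p :=
  (contDiffAt_const.sub contDiffAt_snd).mul (h.contDiff_legendre.contDiffAt.comp p
    ((contDiffAt_const.sub contDiffAt_fst).div (contDiffAt_const.sub contDiffAt_snd)
      (sub_pos.2 hpq).ne'))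

lemma hasDerivAt_laxCost_fst :
    HasDerivAt (fun y => laxCost f (y, p.2) q)
      (-derivInv f ((q.1 - p.1) / (q.2 - p.2))) p.1 := by
  have hspeed := ((hasDerivAt_id p.1).const_sub q.1).div_const (q.2 - p.2)
  refine (((h.hasDerivAt_legendre _).comp p.1 hspeed).const_mul (q.2 - p.2)).congr_deriv ?_
  have := (sub_pos.2 hpq).ne'
  simp only [id]
  field_simp

lemma hasDerivAt_laxCost_right :
    HasDerivAt (fun y => laxCost f p (y, q.2)) (derivInv f ((q.1 - p.1) / (q.2 - p.2))) q.1 := by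
  have hspeed := ((hasDerivAt_id q.1).sub_const p.1).div_const (q.2 - p.2)
  refine (((h.hasDerivAt_legendre _).comp q.1 hspeed).const_mul (q.2 - p.2)).congr_deriv ?_
  have := (sub_pos.2 hpq).ne'
  simp only [id]
  field_simp

lemma hasDerivAt_laxCost_snd :
    HasDerivAt (fun r => laxCost f (p.1, r) q)
      (f (derivInv f ((q.1 - p.1) / (q.2 - p.2)))) p.2 := by
  have hdur := (hasDerivAt_id p.2).const_sub q.2
  have hne := (sub_pos.2 hpq).ne'
  have hspeed := (hasDerivAt_const p.2 (q.1 - p.1)).div hdur hne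
  refine (hdur.mul ((h.hasDerivAt_legendre _).comp p.2 hspeed)).congr_deriv ?_
  simp only [id, legendre, Pi.div_apply, Function.comp_apply]
  field_simp
  ring

end

end UniformlyConvexFlux

/-- The part before time `t` of the parabolic boundary of the quadrant `0 ≤ x`, `0 ≤ t`, points
being written `(x, t)`; backward legs in the right half-line end there. -/
def quadrantBoundary (t : ℝ) : Set (ℝ × ℝ) :=
  {p | 0 ≤ p.1 ∧ 0 ≤ p.2 ∧ p.2 < t ∧ (p.1 = 0 ∨ p.2 = 0)}

namespace ABSol

variable {fl fr : ℝ → ℝ} {A B a : ℝ} {u0 : ℝ → ℝ} (s : ABSol fl fr A B u0)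

section RightLeg

variable (hl : Continuous fl) (hr : UniformlyConvexFlux fr a)
include hl hr

/-- `p ↦ -laxCost fr p q` solves the Hamilton–Jacobi equation; the penalty `β / (q.2 - p.2)` makes
it a strict subsolution. -/
lemma not_isLocalMin_potential_add_laxCost {β : ℝ} (hβ : 0 < β) {p₀ q : ℝ × ℝ}
    (hp₀ : p₀ ∈ Ioi (0 : ℝ) ×ˢ Ioi (0 : ℝ)) (hpq : p₀.2 < q.2) :
    ¬ IsLocalMin (fun p : ℝ × ℝ => s.potential p.1 p.2 + laxCost fr p q + β / (q.2 - p.2)) p₀ := by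
  intro hmin
  have hne := (sub_pos.2 hpq).ne'
  set P := fun p : ℝ × ℝ => -(laxCost fr p q + β / (q.2 - p.2))
  have hP : ContDiffAt ℝ 1 P p₀ := ((hr.contDiffAt_laxCost_left hpq).add
    (contDiffAt_const.div (contDiffAt_const.sub contDiffAt_snd) hne)).neg
  have hPd := hP.differentiableAt one_ne_zero
  have hPx : fderiv ℝ P p₀ (1, 0) = derivInv fr ((q.1 - p₀.1) / (q.2 - p₀.2)) := by
    rw [← deriv_comp_prodMk_left hPd]
    have hcost := (hr.hasDerivAt_laxCost_fst hpq).add_const (β / (q.2 - p₀.2))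
    exact (hcost.fun_neg.congr_deriv (neg_neg _)).deriv
  have hPt : fderiv ℝ P p₀ (0, 1) =
      -(fr (derivInv fr ((q.1 - p₀.1) / (q.2 - p₀.2))) + β / (q.2 - p₀.2) ^ 2) := by
    rw [← deriv_comp_prodMk_right hPd]
    have hpen := (hasDerivAt_const p₀.2 β).div ((hasDerivAt_id p₀.2).const_sub q.2) hne
    refine (((hr.hasDerivAt_laxCost_snd hpq).add hpen).neg.congr_deriv ?_).deriv
    simp
  have hsuper := s.potential_supersolution hl hr.locallyLipschitz hp₀ hP
    (by simpa only [P, sub_neg_eq_add, ← add_assoc] using hmin)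
  rw [hPx, hPt] at hsuper
  have : 0 < β / (q.2 - p₀.2) ^ 2 := div_pos hβ (pow_pos (sub_pos.2 hpq) 2)
  linarith

lemma exists_potential_add_abs_sub_le : ∃ K, 0 < K ∧ ∀ p q : ℝ × ℝ, 0 ≤ p.2 → p.2 < q.2 →
    s.potential q.1 q.2 + |q.1 - p.1| - K * (q.2 - p.2) ≤
      s.potential p.1 p.2 + laxCost fr p q := by
  obtain ⟨M, L, -, h⟩ := s.exists_boundedBy hl hr.continuous 0
  obtain ⟨C, hC, hleg⟩ := hr.exists_mul_abs_sub_le_legendre (M + 1)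
  refine ⟨L + C, by linarith [h.flux_pos], fun p q hp hpq => ?_⟩
  have hτ := sub_pos.2 hpq
  have hspace := le_of_abs_le (h.abs_potential_sub_space_le p.1 q.1 q.2)
  have htime := le_of_abs_le
    (h.abs_potential_sub_time_le hl hr.continuous p.1 hp (hp.trans hpq.le))
  rw [abs_of_pos hτ] at htime
  have hcost : (M + 1) * |q.1 - p.1| - C * (q.2 - p.2) ≤ laxCost fr p q := by
    refine le_of_eq_of_le ?_ (mul_le_mul_of_nonneg_left (hleg _) hτ.le)
    rw [abs_div, abs_of_pos hτ]
    field_simp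
  linarith

lemma exists_time_add_laxCost_lt {q : ℝ × ℝ} (hq : 0 < q.2) {ε : ℝ} (hε : 0 < ε) :
    ∃ r ∈ Ioo 0 q.2, s.potential q.1 r + laxCost fr (q.1, r) q < s.potential q.1 q.2 + ε := by
  have hpot : ContinuousAt (fun p : ℝ × ℝ => s.potential p.1 p.2) (q.1, q.2) :=
    (s.continuousOn_potential hl hr.continuous).continuousAt
      (prod_mem_nhds univ_mem (Ici_mem_nhds hq))
  have hcont : ContinuousAt (fun r => s.potential q.1 r + laxCost fr (q.1, r) q) q.2 := by
    simp only [laxCost, sub_self, zero_div]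
    exact (hpot.comp (f := fun r => (q.1, r)) (Continuous.prodMk_right q.1).continuousAt).add
      (by fun_prop)
  have hev := hcont.eventually_lt (continuousAt_const (y := s.potential q.1 q.2 + ε))
    (by simpa [laxCost] using hε)
  obtain ⟨r, hlt, hr⟩ :=
    ((hev.filter_mono nhdsWithin_le_nhds).and (Ioo_mem_nhdsLT hq)).exists
  exact ⟨r, hr, hlt⟩

/-- Otherwise the penalised sum would have an interior minimum: by coercivity its sublevel sets are
bounded and stay away from the time `q.2`. -/
lemma exists_boundary_penalised_le {β : ℝ} (hβ : 0 < β) {p₁ q : ℝ × ℝ} (hp₁ : 0 ≤ p₁.1)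
    (hp₁' : 0 ≤ p₁.2) (hpq : p₁.2 < q.2) :
    ∃ p ∈ quadrantBoundary q.2,
      s.potential p.1 p.2 + laxCost fr p q + β / (q.2 - p.2) ≤
        s.potential p₁.1 p₁.2 + laxCost fr p₁ q + β / (q.2 - p₁.2) := by
  set Φ := fun p : ℝ × ℝ => s.potential p.1 p.2 + laxCost fr p q + β / (q.2 - p.2)
  obtain ⟨K, hK, hcoer⟩ := s.exists_potential_add_abs_sub_le hl hr
  set W := Φ p₁ - s.potential q.1 q.2 + K * q.2 + 1
  have hsublevel : ∀ p : ℝ × ℝ, 0 ≤ p.2 → p.2 < q.2 → Φ p ≤ Φ p₁ →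
      p.1 < q.1 + W ∧ 0 < W ∧ p.2 < q.2 - β / W := by
    intro p hp hpq hle
    have hpen : 0 < β / (q.2 - p.2) := div_pos hβ (sub_pos.2 hpq)
    have hsum : |q.1 - p.1| + β / (q.2 - p.2) < W := by
      linarith [hcoer p q hp hpq, mul_nonneg hK.le hp]
    have hW : 0 < W := by linarith [abs_nonneg (q.1 - p.1)]
    have hτ : β / W < q.2 - p.2 :=
      (div_lt_comm₀ (sub_pos.2 hpq) hW).1 (by linarith [abs_nonneg (q.1 - p.1)])
    exact ⟨by linarith [neg_le_abs (q.1 - p.1)], hW, by linarith⟩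
  obtain ⟨hp₁W, hW, hp₁τ⟩ := hsublevel p₁ hp₁' hpq le_rfl
  set S := Icc 0 (q.1 + W) ×ˢ Icc 0 (q.2 - β / W)
  have hlt : ∀ p ∈ S, p.2 < q.2 := fun p hp => hp.2.2.trans_lt (sub_lt_self _ (div_pos hβ hW))
  have hΦ : ContinuousOn Φ S := (((s.continuousOn_potential hl hr.continuous).mono
    (prod_mono (subset_univ _) Icc_subset_Ici_self)).add
      (hr.continuousOn_laxCost continuousOn_id continuousOn_const hlt)).add
        (continuousOn_const.div (by fun_prop) fun p hp => (sub_pos.2 (hlt p hp)).ne')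
  have hp₁S : p₁ ∈ S := ⟨⟨hp₁, hp₁W.le⟩, hp₁', hp₁τ.le⟩
  obtain ⟨p₀, hp₀, hmin⟩ := (isCompact_Icc.prod isCompact_Icc).exists_isMinOn ⟨_, hp₁S⟩ hΦ
  refine ⟨p₀, ⟨hp₀.1.1, hp₀.2.1, hlt p₀ hp₀, ?_⟩, hmin hp₁S⟩
  by_contra! hne
  have hpos : p₀ ∈ Ioi (0 : ℝ) ×ˢ Ioi (0 : ℝ) :=
    ⟨hp₀.1.1.lt_of_ne' hne.1, hp₀.2.1.lt_of_ne' hne.2⟩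
  obtain ⟨hp₀W, -, hp₀τ⟩ := hsublevel p₀ hp₀.2.1 (hlt p₀ hp₀) (hmin hp₁S)
  exact s.not_isLocalMin_potential_add_laxCost hl hr hβ hpos (hlt p₀ hp₀)
    (hmin.isLocalMin (prod_mem_nhds (Icc_mem_nhds hpos.1 hp₀W) (Icc_mem_nhds hpos.2 hp₀τ)))

lemma exists_boundary_add_laxCost_lt {q : ℝ × ℝ} (hq₁ : 0 ≤ q.1) (hq₂ : 0 < q.2) {ε : ℝ}
    (hε : 0 < ε) : ∃ p ∈ quadrantBoundary q.2,
      s.potential p.1 p.2 + laxCost fr p q < s.potential q.1 q.2 + ε := by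
  obtain ⟨r, ⟨hr₀, hrq⟩, hlt⟩ := s.exists_time_add_laxCost_lt hl hr hq₂ (half_pos hε)
  have hτ := sub_pos.2 hrq
  have hβ : 0 < ε / 2 * (q.2 - r) := mul_pos (half_pos hε) hτ
  obtain ⟨p, hp, hle⟩ :=
    s.exists_boundary_penalised_le hl hr hβ (p₁ := (q.1, r)) hq₁ hr₀.le hrq
  refine ⟨p, hp, ?_⟩
  have hpen : 0 < ε / 2 * (q.2 - r) / (q.2 - p.2) := div_pos hβ (sub_pos.2 hp.2.2.1)
  simp only [mul_div_cancel_right₀ _ hτ.ne'] at hle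
  linarith

lemma exists_isCompact_subset_quadrantBoundary {q : ℝ × ℝ} (hq₁ : 0 < q.1) (hq₂ : 0 < q.2) :
    ∃ S ⊆ quadrantBoundary q.2, IsCompact S ∧ S.Nonempty ∧ ∃ δ > 0, ∀ p ∈ quadrantBoundary q.2,
      s.potential p.1 p.2 + laxCost fr p q < s.potential q.1 q.2 + δ → p ∈ S := by
  obtain ⟨K, hK, hcoer⟩ := s.exists_potential_add_abs_sub_le hl hr
  set τ := min q.2 (q.1 / (2 * K))
  have hτ : 0 < τ := lt_min hq₂ (by positivity)
  have hKτ : K * τ ≤ q.1 / 2 :=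
    (mul_le_mul_of_nonneg_left (min_le_right _ _) hK.le).trans_eq (by field_simp)
  refine ⟨Icc 0 (q.1 + K * q.2 + 1) ×ˢ {0} ∪ {0} ×ˢ Icc 0 (q.2 - τ), ?_,
    (isCompact_Icc.prod isCompact_singleton).union (isCompact_singleton.prod isCompact_Icc),
    ⟨0, Or.inr ⟨rfl, le_rfl, sub_nonneg.2 (min_le_left _ _)⟩⟩,
    min 1 (q.1 / 2), lt_min one_pos (half_pos hq₁), ?_⟩
  · rintro p (⟨hp₁, hp₂ : p.2 = 0⟩ | ⟨hp₁ : p.1 = 0, hp₂⟩)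
    · exact ⟨hp₁.1, hp₂.ge, hp₂.trans_lt hq₂, .inr hp₂⟩
    · exact ⟨hp₁.ge, hp₂.1, hp₂.2.trans_lt (sub_lt_self _ hτ), .inl hp₁⟩
  · rintro p ⟨hp₁, hp₂, hpq, hbdry⟩ hlt
    have hclose := hcoer p q hp₂ hpq
    rcases hbdry with h0 | h0
    · refine .inr ⟨h0, hp₂, ?_⟩
      have : K * τ < K * (q.2 - p.2) := by
        linarith [le_abs_self (q.1 - p.1), min_le_right 1 (q.1 / 2)]
      linarith [lt_of_mul_lt_mul_left this hK.le]
    · refine .inl ⟨⟨hp₁, ?_⟩, h0⟩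
      linarith [neg_le_abs (q.1 - p.1), min_le_left 1 (q.1 / 2), mul_nonneg hK.le hp₂]

/-- The optimal backward leg: it ends on the interface or at time `0`. -/
lemma exists_boundary_add_laxCost_le {q : ℝ × ℝ} (hq₁ : 0 < q.1) (hq₂ : 0 < q.2) :
    ∃ p ∈ quadrantBoundary q.2,
      s.potential p.1 p.2 + laxCost fr p q ≤ s.potential q.1 q.2 := by
  obtain ⟨S, hS, hcompact, hne, δ, hδ, hmem⟩ :=
    s.exists_isCompact_subset_quadrantBoundary hl hr hq₁ hq₂
  have hcont : ContinuousOn (fun p : ℝ × ℝ => s.potential p.1 p.2 + laxCost fr p q) S :=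
    ((s.continuousOn_potential hl hr.continuous).mono fun p hp => ⟨mem_univ _, (hS hp).2.1⟩).add
      (hr.continuousOn_laxCost continuousOn_id continuousOn_const fun p hp => (hS hp).2.2.1)
  obtain ⟨p₀, hp₀, hmin⟩ := hcompact.exists_isMinOn hne hcont
  refine ⟨p₀, hS hp₀, le_of_forall_pos_lt_add fun ε hε => ?_⟩
  obtain ⟨p, hp, hlt⟩ := s.exists_boundary_add_laxCost_lt hl hr hq₁.le hq₂ (lt_min hε hδ)
  have hpS : p ∈ S := hmem p hp (hlt.trans_le (by linarith [min_le_right ε δ]))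
  exact (hmin hpS).trans_lt (hlt.trans_le (by linarith [min_le_left ε δ]))

end RightLeg

end ABSol

lemma legendre_zero (f : ℝ → ℝ) : legendre f 0 = -f (derivInv f 0) := by
  simp [legendre]

lemma UniformlyConvexFlux.mul_sub_le_laxCost {f : ℝ → ℝ} {a : ℝ} (h : UniformlyConvexFlux f a)
    {p q : ℝ × ℝ} (hpq : p.2 < q.2) (u : ℝ) :
    (q.1 - p.1) * u - (q.2 - p.2) * f u ≤ laxCost f p q := by
  have hτ := sub_pos.2 hpq
  refine le_of_eq_of_le ?_ (mul_le_mul_of_nonneg_left (h.mul_sub_le_legendre _ u) hτ.le)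
  field_simp

namespace ABSol

variable {fl fr : ℝ → ℝ} {A B a : ℝ} {u0 : ℝ → ℝ} (s : ABSol fl fr A B u0)

/-- A straight leg in the closed right half-plane, started at time `0`, is optimal at
`q = (x, t)`. -/
def HasRightFoot (q : ℝ × ℝ) : Prop :=
  ∃ z, 0 ≤ z ∧ s.potential z 0 + laxCost fr (z, 0) q ≤ s.potential q.1 q.2

/-- A straight leg in the closed left half-plane, started at time `0`, is optimal at
`q = (x, t)`. -/
def HasLeftFoot (q : ℝ × ℝ) : Prop :=
  ∃ z, z ≤ 0 ∧ s.potential z 0 + laxCost fl (z, 0) q ≤ s.potential q.1 q.2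

section RightFoot

variable (hl : Continuous fl) (hr : UniformlyConvexFlux fr a)
include hl hr

lemma isCompact_setOf_hasRightFoot {S : Set (ℝ × ℝ)} (hS : IsCompact S)
    (hpos : ∀ q ∈ S, 0 < q.2) : IsCompact {q ∈ S | s.HasRightFoot q} := by
  obtain ⟨K, -, hcoer⟩ := s.exists_potential_add_abs_sub_le hl hr
  have hbound : Continuous fun q : ℝ × ℝ => q.1 + K * q.2 := by fun_prop
  obtain ⟨R, hR⟩ := hS.bddAbove_image hbound.continuousOn
  set T := S ×ˢ Icc 0 R
  have hT : IsCompact T := hS.prod isCompact_Icc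
  have hstart : ContinuousOn (fun w : (ℝ × ℝ) × ℝ => s.potential w.2 0) T :=
    ((s.continuous_potential 0).comp continuous_snd).continuousOn
  have hend : ContinuousOn (fun w : (ℝ × ℝ) × ℝ => s.potential w.1.1 w.1.2) T := by
    simpa only [Function.comp_def] using (s.continuousOn_potential hl hr.continuous).comp
      continuousOn_fst fun w hw => mk_mem_prod (mem_univ w.1.1) (hpos w.1 hw.1).le
  have hcost : ContinuousOn (fun w : (ℝ × ℝ) × ℝ => laxCost fr (w.2, 0) w.1) T :=
    hr.continuousOn_laxCost (p := fun w : (ℝ × ℝ) × ℝ => (w.2, 0)) (by fun_prop)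
      continuousOn_fst fun w hw => hpos w.1 hw.1
  have hfeet : IsCompact {w ∈ T | s.potential w.2 0 + laxCost fr (w.2, 0) w.1 ≤
      s.potential w.1.1 w.1.2} :=
    hT.of_isClosed_subset (hT.isClosed.isClosed_le (hstart.add hcost) hend) (sep_subset _ _)
  convert hfeet.image continuous_fst using 1
  ext q
  constructor
  · rintro ⟨hq, z, hz, hle⟩
    refine ⟨(q, z), ⟨⟨hq, hz, ?_⟩, hle⟩, rfl⟩
    have hclose := hcoer (z, 0) q le_rfl (hpos q hq)
    have hqR : q.1 + K * q.2 ≤ R := hR (mem_image_of_mem _ hq)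
    linarith [neg_le_abs (q.1 - z)]
  · rintro ⟨w, ⟨hw, hle⟩, rfl⟩
    exact ⟨hw.1, w.2, hw.2.1, hle⟩

lemma HasRightFoot.of_frequently {t : ℝ} (ht : 0 < t)
    (h : ∃ᶠ y in 𝓝[>] 0, s.HasRightFoot (y, t)) : s.HasRightFoot (0, t) := by
  have hcompact := s.isCompact_setOf_hasRightFoot hl hr
    ((isCompact_Icc (a := (0 : ℝ)) (b := 1)).prod (isCompact_singleton (x := t)))
    fun q (hq : q ∈ Icc (0 : ℝ) 1 ×ˢ {t}) => ht.trans_eq hq.2.symm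
  have htend : Tendsto (fun y : ℝ => (y, t)) (𝓝[>] 0) (𝓝 (0, t)) :=
    ((Continuous.prodMk_left t).tendsto 0).mono_left nhdsWithin_le_nhds
  refine (hcompact.isClosed.mem_of_frequently_of_tendsto ?_ htend).2
  exact (h.and_eventually (Ioo_mem_nhdsGT one_pos)).mono fun y hy =>
    ⟨⟨Ioo_subset_Icc_self hy.2, rfl⟩, hy.1⟩

/-- A backward leg from `(y, t)` to the interface forces `U(y,t) - U(0,t) ≥ θ y`, where `θ` is the
critical point of `fr`; since `up 0 t < θ`, this fails for small `y > 0`. -/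
lemma hasRightFoot_of_deriv_up_neg {t : ℝ} (ht : 0 < t) (hneg : deriv fr (s.up 0 t) < 0) :
    s.HasRightFoot (0, t) := by
  set θ := derivInv fr 0
  have hθ : deriv fr θ = 0 := hr.deriv_derivInv 0
  have hup : s.up 0 t < θ := hr.strictMono_deriv.lt_iff_lt.1 (hθ.symm ▸ hneg)
  have hslope := (s.hasDerivWithinAt_potential_Ioi 0 ht).limsup_slope_le' self_notMem_Ioi hup
  refine HasRightFoot.of_frequently s hl hr ht (Eventually.frequently ?_)
  filter_upwards [hslope, self_mem_nhdsWithin] with y hlt (hy : 0 < y)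
  rw [slope_def_field, div_lt_iff₀ (by linarith)] at hlt
  obtain ⟨⟨z, r⟩, ⟨hz, hr₀, hrt, rfl | rfl⟩, hle⟩ :=
    s.exists_boundary_add_laxCost_le hl hr (q := (y, t)) hy ht
  · have hstay := s.potential_le_add_laxCost_right hl hr (p := (0, r)) (q := (0, t))
      le_rfl hr₀ le_rfl hrt
    have hleg := hr.mul_sub_le_laxCost (p := (0, r)) (q := (y, t)) hrt θ
    simp only [laxCost, sub_zero, zero_div, legendre_zero] at hstay hleg hle
    linarith
  · exact ⟨z, hz, hle⟩

lemma isCompact_setOf_hasRightFoot_interface {δ : ℝ} (hδ : 0 < δ) (T : ℝ) :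
    IsCompact {t ∈ Icc δ T | s.HasRightFoot (0, t)} := by
  convert (s.isCompact_setOf_hasRightFoot hl hr
    ((isCompact_singleton (x := (0 : ℝ))).prod (isCompact_Icc (a := δ) (b := T)))
    fun q (hq : q ∈ {0} ×ˢ Icc δ T) => hδ.trans_le hq.2.1).image continuous_snd using 1
  ext t
  constructor
  · exact fun ⟨ht, hfoot⟩ => ⟨(0, t), ⟨⟨rfl, ht⟩, hfoot⟩, rfl⟩
  · rintro ⟨⟨x, t⟩, ⟨⟨rfl, ht⟩, hfoot⟩, rfl⟩
    exact ⟨ht, hfoot⟩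

end RightFoot

section LeftFoot

variable (hl : UniformlyConvexFlux fl a) (hr : Continuous fr)
include hl hr

lemma hasLeftFoot_iff (x t : ℝ) : s.HasLeftFoot (x, t) ↔ s.reflect.HasRightFoot (-x, t) := by
  simp only [HasLeftFoot, HasRightFoot, s.potential_reflect hl.continuous hr,
    hl.laxCost_comp_neg, neg_neg]
  exact ⟨fun ⟨z, hz, hle⟩ => ⟨-z, neg_nonneg.2 hz, by rwa [neg_neg]⟩,
    fun ⟨z, hz, hle⟩ => ⟨-z, neg_nonpos.2 hz, hle⟩⟩

lemma hasLeftFoot_of_deriv_um_pos {t : ℝ} (ht : 0 < t) (hpos : 0 < deriv fl (s.um 0 t)) :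
    s.HasLeftFoot (0, t) := by
  rw [s.hasLeftFoot_iff hl hr, neg_zero]
  refine s.reflect.hasRightFoot_of_deriv_up_neg (hr.comp continuous_neg) hl.comp_neg ht ?_
  simpa [reflect, deriv_comp_neg] using hpos

lemma isCompact_setOf_hasLeftFoot_interface {δ : ℝ} (hδ : 0 < δ) (T : ℝ) :
    IsCompact {t ∈ Icc δ T | s.HasLeftFoot (0, t)} := by
  simp only [s.hasLeftFoot_iff hl hr, neg_zero]
  exact s.reflect.isCompact_setOf_hasRightFoot_interface (hr.comp continuous_neg) hl.comp_neg hδ T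

lemma exists_boundary_add_laxCost_le_left {q : ℝ × ℝ} (hq₁ : q.1 < 0) (hq₂ : 0 < q.2) :
    ∃ p ∈ quadrantBoundary q.2,
      s.potential (-p.1) p.2 + laxCost fl (-p.1, p.2) q ≤ s.potential q.1 q.2 := by
  have := s.reflect.exists_boundary_add_laxCost_le (hr.comp continuous_neg) hl.comp_neg
    (q := (-q.1, q.2)) (neg_pos.2 hq₁) hq₂
  simpa only [s.potential_reflect hl.continuous hr, hl.laxCost_comp_neg, neg_neg] using this

end LeftFoot

section Interface

variable (hl : UniformlyConvexFlux fl a) (hr : UniformlyConvexFlux fr a)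
  (hAB : IsConnection fl fr A B)
include hl hr hAB

lemma potential_interface_ge_of_forall_not_hasFoot {r t : ℝ} (hr₀ : 0 ≤ r) (hrt : r ≤ t)
    (hfoot : ∀ τ ∈ Ioc r t, ¬ (s.HasRightFoot (0, τ) ∨ s.HasLeftFoot (0, τ))) :
    s.potential 0 r - fl A * (t - r) ≤ s.potential 0 t := by
  have hflux : ∫ τ in r..t, s.fluxRight 0 τ = ∫ _ in r..t, fl A := by
    refine intervalIntegral.integral_congr_ae ?_
    filter_upwards [s.interface_alternatives hl hr hAB] with τ halt hτ
    rw [uIoc_of_le hrt] at hτ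
    have hτ₀ : 0 < τ := hr₀.trans_lt hτ.1
    obtain ⟨-, hge, hgt⟩ := halt hτ₀
    by_contra! hne
    rcases hgt (hge.lt_of_ne' hne) with hum | hup
    · exact hfoot τ hτ (.inr (s.hasLeftFoot_of_deriv_um_pos hl hr.continuous hτ₀ hum))
    · exact hfoot τ hτ (.inl (s.hasRightFoot_of_deriv_up_neg hl.continuous hr hτ₀ hup))
  have htime := s.potential_sub_time hl.continuous hr.continuous 0 hr₀ hrt
  rw [hflux, intervalIntegral.integral_const, smul_eq_mul] at htime
  linarith

/-- Follow the interface backwards from time `t` to the last time at which it is reached by an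
optimal leg. -/
lemma exists_potential_interface_ge {t : ℝ} (ht : 0 ≤ t) : ∃ r ∈ Icc 0 t,
    s.potential 0 r - fl A * (t - r) ≤ s.potential 0 t ∧
      (r = 0 ∨ 0 < r ∧ (s.HasRightFoot (0, r) ∨ s.HasLeftFoot (0, r))) := by
  by_cases hfoot : ∃ δ, 0 < δ ∧ δ ≤ t ∧ (s.HasRightFoot (0, δ) ∨ s.HasLeftFoot (0, δ))
  · obtain ⟨δ, hδ, hδt, hδfoot⟩ := hfoot
    have hcompact : IsCompact {r ∈ Icc δ t | s.HasRightFoot (0, r) ∨ s.HasLeftFoot (0, r)} := by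
      simpa only [sep_or] using
        (s.isCompact_setOf_hasRightFoot_interface hl.continuous hr hδ t).union
          (s.isCompact_setOf_hasLeftFoot_interface hl hr.continuous hδ t)
    obtain ⟨r, ⟨⟨hδr, hrt⟩, hrfoot⟩, hlast⟩ := hcompact.exists_isGreatest ⟨δ, ⟨le_rfl, hδt⟩, hδfoot⟩
    have hr₀ : 0 < r := hδ.trans_le hδr
    refine ⟨r, ⟨hr₀.le, hrt⟩, ?_, .inr ⟨hr₀, hrfoot⟩⟩
    exact s.potential_interface_ge_of_forall_not_hasFoot hl hr hAB hr₀.le hrt fun τ hτ hτfoot =>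
      hτ.1.not_ge (hlast ⟨⟨hδr.trans hτ.1.le, hτ.2⟩, hτfoot⟩)
  · refine ⟨0, ⟨le_rfl, ht⟩, ?_, .inl rfl⟩
    exact s.potential_interface_ge_of_forall_not_hasFoot hl hr hAB le_rfl ht fun τ hτ hτfoot =>
      hfoot ⟨τ, hτ.1, hτ.2, hτfoot⟩

end Interface

end ABSol

/-! ### Routes -/

lemma laxCost_reverse (f : ℝ → ℝ) (T : ℝ) (p q : ℝ × ℝ) :
    laxCost f (-q.1, T - q.2) (-p.1, T - p.2) = laxCost f p q := by
  simp only [laxCost, sub_sub_sub_cancel_left, neg_sub_neg]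

/-- `Route fl fr γ p q c`: the point `q = (x, t)` is reached from `p` by a concatenation, of total
cost `c`, of straight legs in either closed half-plane, charged the Lax–Oleinik cost of the flux
there, and of stays on the interface, charged `-γ` per unit of time. -/
inductive Route (fl fr : ℝ → ℝ) (γ : ℝ) : ℝ × ℝ → ℝ × ℝ → ℝ → Prop
  | refl (p : ℝ × ℝ) : Route fl fr γ p p 0
  | left {p q : ℝ × ℝ} (hp : p.1 ≤ 0) (hq : q.1 ≤ 0) (hpq : p.2 < q.2) :
      Route fl fr γ p q (laxCost fl p q)
  | right {p q : ℝ × ℝ} (hp : 0 ≤ p.1) (hq : 0 ≤ q.1) (hpq : p.2 < q.2) :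
      Route fl fr γ p q (laxCost fr p q)
  | stay {r t : ℝ} (hrt : r ≤ t) : Route fl fr γ (0, r) (0, t) (-(γ * (t - r)))
  | trans {p q r : ℝ × ℝ} {c d : ℝ} (hpr : Route fl fr γ p r c) (hrq : Route fl fr γ r q d) :
      Route fl fr γ p q (c + d)

namespace Route

variable {fl fr : ℝ → ℝ} {γ c : ℝ} {p q : ℝ × ℝ}

lemma snd_le (h : Route fl fr γ p q c) : p.2 ≤ q.2 := by
  induction h with
  | refl => exact le_rfl
  | left _ _ hpq => exact hpq.le
  | right _ _ hpq => exact hpq.le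
  | stay hrt => exact hrt
  | trans _ _ hpr hrq => exact hpr.trans hrq

lemma reverse (h : Route fl fr γ p q c) (T : ℝ) :
    Route fr fl γ (-q.1, T - q.2) (-p.1, T - p.2) c := by
  induction h with
  | refl => exact refl _
  | @left p q hp hq hpq =>
    rw [← laxCost_reverse fl T]
    exact right (neg_nonneg.2 hq) (neg_nonneg.2 hp) (sub_lt_sub_left hpq T)
  | @right p q hp hq hpq =>
    rw [← laxCost_reverse fr T]
    exact left (neg_nonpos.2 hq) (neg_nonpos.2 hp) (sub_lt_sub_left hpq T)
  | @stay r t hrt =>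
    have h := stay (fl := fr) (fr := fl) (γ := γ) (sub_le_sub_left hrt T)
    rwa [sub_sub_sub_cancel_left, ← neg_zero] at h
  | @trans _ _ _ c d _ _ hpr hrq => exact add_comm d c ▸ hrq.trans hpr

end Route

namespace ABSol

variable {fl fr : ℝ → ℝ} {A B a : ℝ} {u0 : ℝ → ℝ} (s : ABSol fl fr A B u0)
  (hl : UniformlyConvexFlux fl a) (hr : UniformlyConvexFlux fr a) (hAB : IsConnection fl fr A B)
include hl hr hAB

theorem potential_le_add_of_route {p q : ℝ × ℝ} {c : ℝ} (h : Route fl fr (fl A) p q c)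
    (hp : 0 ≤ p.2) : s.potential q.1 q.2 ≤ s.potential p.1 p.2 + c := by
  induction h with
  | refl => rw [add_zero]
  | left hp₁ hq₁ hpq => exact s.potential_le_add_laxCost_left hl hr.continuous hp₁ hp hq₁ hpq
  | right hp₁ hq₁ hpq => exact s.potential_le_add_laxCost_right hl.continuous hr hp₁ hp hq₁ hpq
  | stay hrt => exact s.potential_interface_le hl hr hAB hp hrt
  | trans hpr _ ihpr ihrq =>
    rw [← add_assoc]
    exact (ihrq (hp.trans hpr.snd_le)).trans (add_le_add_left (ihpr hp) _)

lemma exists_route_interface {t : ℝ} (ht : 0 ≤ t) : ∃ y c,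
    Route fl fr (fl A) (y, 0) (0, t) c ∧ s.potential y 0 + c ≤ s.potential 0 t := by
  obtain ⟨r, hrt, hstay, rfl | ⟨hr₀, hfoot⟩⟩ := s.exists_potential_interface_ge hl hr hAB ht
  · exact ⟨0, _, .stay ht, by linarith⟩
  · rcases hfoot with ⟨z, hz, hleg⟩ | ⟨z, hz, hleg⟩
    · exact ⟨z, _, (Route.right hz le_rfl hr₀).trans (.stay hrt.2), by linarith⟩
    · exact ⟨z, _, (Route.left hz le_rfl hr₀).trans (.stay hrt.2), by linarith⟩

lemma exists_route_of_boundary {p : ℝ × ℝ} (hp : 0 ≤ p.2) (hbdry : p.1 = 0 ∨ p.2 = 0) : ∃ y c,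
    Route fl fr (fl A) (y, 0) p c ∧ s.potential y 0 + c ≤ s.potential p.1 p.2 := by
  obtain ⟨x, t⟩ := p
  rcases hbdry with rfl | rfl
  · exact s.exists_route_interface hl hr hAB hp
  · exact ⟨x, 0, .refl _, (add_zero _).le⟩

theorem exists_route {q : ℝ × ℝ} (hq : 0 < q.2) : ∃ y c,
    Route fl fr (fl A) (y, 0) q c ∧ s.potential y 0 + c ≤ s.potential q.1 q.2 := by
  rcases lt_trichotomy q.1 0 with hx | hx | hx
  · obtain ⟨p, ⟨hp₁, hp₂, hpq, hbdry⟩, hleg⟩ :=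
      s.exists_boundary_add_laxCost_le_left hl hr.continuous hx hq
    obtain ⟨y, c, hroute, hle⟩ := s.exists_route_of_boundary hl hr hAB (p := (-p.1, p.2)) hp₂
      (hbdry.imp_left neg_eq_zero.2)
    exact ⟨y, _, hroute.trans (.left (neg_nonpos.2 hp₁) hx.le hpq), by linarith⟩
  · exact s.exists_route_of_boundary hl hr hAB hq.le (.inl hx)
  · obtain ⟨p, ⟨hp₁, hp₂, hpq, hbdry⟩, hleg⟩ :=
      s.exists_boundary_add_laxCost_le hl.continuous hr hx hq
    obtain ⟨y, c, hroute, hle⟩ := s.exists_route_of_boundary hl hr hAB hp₂ hbdry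
    exact ⟨y, _, hroute.trans (.right hp₁ hx.le hpq), by linarith⟩

end ABSol

/-! ### Characteristics -/

lemma hasDerivAt_of_squeeze {f g h : ℝ → ℝ} {d x : ℝ} (hf : HasDerivAt f d x)
    (hh : HasDerivAt h d x) (hfg : f ≤ᶠ[𝓝 x] g) (hgh : g ≤ᶠ[𝓝 x] h) (hfx : f x = g x)
    (hhx : h x = g x) : HasDerivAt g d x := by
  refine hasDerivAt_iff_isLittleO.2 (Asymptotics.IsBigO.trans_isLittleO (.of_bound 1 ?_)
    (hf.isLittleO.norm_left.add hh.isLittleO.norm_left))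
  filter_upwards [hfg, hgh] with y hfy hhy
  simp only [Real.norm_eq_abs, hfx, hhx, one_mul]
  refine le_trans (abs_le.2 ⟨?_, ?_⟩) (le_abs_self _)
  · linarith [neg_abs_le (f y - g x - (y - x) • d), abs_nonneg (h y - g x - (y - x) • d)]
  · linarith [le_abs_self (h y - g x - (y - x) • d), abs_nonneg (f y - g x - (y - x) • d)]

/-- The position at time `t` on the straight leg from `p` to `q`, both points written as
(position, time). -/
def leg (p q : ℝ × ℝ) (t : ℝ) : ℝ := p.1 + (q.1 - p.1) / (q.2 - p.2) * (t - p.2)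

section Leg

variable {p q : ℝ × ℝ} {t : ℝ}

lemma leg_left (p q : ℝ × ℝ) : leg p q p.2 = p.1 := by simp [leg]

lemma leg_right (hpq : p.2 < q.2) : leg p q q.2 = q.1 := by
  rw [leg, div_mul_cancel₀ _ (sub_pos.2 hpq).ne', add_sub_cancel]

lemma hasDerivAt_leg (p q : ℝ × ℝ) (t : ℝ) :
    HasDerivAt (leg p q) ((q.1 - p.1) / (q.2 - p.2)) t := by
  refine HasDerivAt.const_add p.1 ?_
  simpa using ((hasDerivAt_id t).sub_const p.2).const_mul ((q.1 - p.1) / (q.2 - p.2))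

lemma exists_lipschitzWith_leg (p q : ℝ × ℝ) : ∃ K, LipschitzWith K (leg p q) :=
  ⟨_, lipschitzWith_of_nnnorm_deriv_le (fun t => (hasDerivAt_leg p q t).differentiableAt)
    fun t => (congrArg nnnorm (hasDerivAt_leg p q t).deriv).le⟩

lemma leg_mul_sub (hpq : p.2 < q.2) (t : ℝ) :
    leg p q t * (q.2 - p.2) = p.1 * (q.2 - t) + q.1 * (t - p.2) := by
  have := (sub_pos.2 hpq).ne'
  rw [leg]
  field_simp
  ring

lemma leg_pos (hp : 0 ≤ p.1) (hq : 0 ≤ q.1) (hne : ¬(p.1 = 0 ∧ q.1 = 0)) (ht : t ∈ Ioo p.2 q.2) :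
    0 < leg p q t := by
  have hpq := ht.1.trans ht.2
  refine pos_of_mul_pos_left ?_ (sub_pos.2 hpq).le
  rw [leg_mul_sub hpq]
  have ht₁ := sub_pos.2 ht.1
  have ht₂ := sub_pos.2 ht.2
  rcases hp.eq_or_lt with hp₀ | hp₀
  · have hq₀ : 0 < q.1 := hq.lt_of_ne' fun h => hne ⟨hp₀.symm, h⟩
    positivity
  · positivity

lemma leg_sub_div (ht : p.2 < t) :
    (leg p q t - p.1) / (t - p.2) = (q.1 - p.1) / (q.2 - p.2) := by
  rw [leg, add_sub_cancel_left, mul_div_cancel_right₀ _ (sub_pos.2 ht).ne']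

lemma sub_leg_div (ht : t ∈ Ioo p.2 q.2) :
    (q.1 - leg p q t) / (q.2 - t) = (q.1 - p.1) / (q.2 - p.2) := by
  have hpq := ht.1.trans ht.2
  rw [div_eq_div_iff (sub_pos.2 ht.2).ne' (sub_pos.2 hpq).ne', sub_mul, leg_mul_sub hpq]
  ring

lemma laxCost_add_leg (f : ℝ → ℝ) (ht : t ∈ Ioo p.2 q.2) :
    laxCost f p (leg p q t, t) + laxCost f (leg p q t, t) q = laxCost f p q := by
  simp only [laxCost, leg_sub_div ht.1, sub_leg_div ht]
  ring

end Leg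

namespace ABSol

variable {fl fr : ℝ → ℝ} {A B a : ℝ} {u0 : ℝ → ℝ} (s : ABSol fl fr A B u0)

section

variable (hl : Continuous fl) (hr : UniformlyConvexFlux fr a) {p q : ℝ × ℝ}
  (hp₁ : 0 ≤ p.1) (hp₂ : 0 ≤ p.2) (hq : 0 ≤ q.1)
  (hopt : s.potential p.1 p.2 + laxCost fr p q ≤ s.potential q.1 q.2)
  {t : ℝ} (ht : t ∈ Ioo p.2 q.2) (hpos : 0 < leg p q t)
include hl hr hp₁ hp₂ hq hopt ht hpos

/-- On an optimal leg the potential is squeezed between the costs from `p` and to `q`. -/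
lemma hasDerivAt_potential_leg :
    HasDerivAt (fun y => s.potential y t) (derivInv fr ((q.1 - p.1) / (q.2 - p.2)))
      (leg p q t) := by
  have ht₀ : 0 ≤ t := hp₂.trans ht.1.le
  have hle_to : ∀ y, 0 ≤ y → s.potential q.1 q.2 - laxCost fr (y, t) q ≤ s.potential y t :=
    fun y hy => sub_le_iff_le_add.2 <|
      s.potential_le_add_laxCost_right hl hr (p := (y, t)) hy ht₀ hq ht.2
  have hle_from : ∀ y, 0 ≤ y → s.potential y t ≤ s.potential p.1 p.2 + laxCost fr p (y, t) :=
    fun y hy => s.potential_le_add_laxCost_right hl hr (q := (y, t)) hp₁ hp₂ hy ht.1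
  have hderiv_to := (hr.hasDerivAt_laxCost_fst (p := (leg p q t, t)) ht.2).const_sub
    (s.potential q.1 q.2)
  have hderiv_from := (hr.hasDerivAt_laxCost_right (q := (leg p q t, t)) ht.1).const_add
    (s.potential p.1 p.2)
  simp only [sub_leg_div ht, neg_neg] at hderiv_to
  simp only [leg_sub_div ht.1] at hderiv_from
  have hnear : ∀ᶠ y in 𝓝 (leg p q t), 0 ≤ y := Ici_mem_nhds hpos
  have hsplit := laxCost_add_leg fr ht
  have hto := hle_to _ hpos.le
  have hfrom := hle_from _ hpos.le
  exact hasDerivAt_of_squeeze hderiv_to hderiv_from (hnear.mono hle_to) (hnear.mono hle_from)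
    (by linarith) (by linarith)

lemma deriv_traces_leg :
    deriv fr (s.um (leg p q t) t) = (q.1 - p.1) / (q.2 - p.2) ∧
      deriv fr (s.up (leg p q t) t) = (q.1 - p.1) / (q.2 - p.2) := by
  have ht₀ : 0 < t := hp₂.trans_lt ht.1
  have hderiv := s.hasDerivAt_potential_leg hl hr hp₁ hp₂ hq hopt ht hpos
  rw [(uniqueDiffWithinAt_Iio _).eq_deriv _ (s.hasDerivWithinAt_potential_Iio _ ht₀)
      hderiv.hasDerivWithinAt,
    (uniqueDiffWithinAt_Ioi _).eq_deriv _ (s.hasDerivWithinAt_potential_Ioi _ ht₀)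
      hderiv.hasDerivWithinAt]
  exact ⟨hr.deriv_derivInv _, hr.deriv_derivInv _⟩

end

/-- The condition imposed by `IsABgic` at the time `t`. -/
def IsCharacteristicAt (ζ : ℝ → ℝ) (t : ℝ) : Prop :=
  (ζ t < 0 → HasDerivAt ζ (deriv fl (s.um (ζ t) t)) t ∧
    deriv fl (s.um (ζ t) t) = deriv fl (s.up (ζ t) t)) ∧
  (0 < ζ t → HasDerivAt ζ (deriv fr (s.um (ζ t) t)) t ∧
    deriv fr (s.um (ζ t) t) = deriv fr (s.up (ζ t) t)) ∧
  (ζ t = 0 → fl (s.um 0 t) = fl A ∧ fr (s.up 0 t) = fl A)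

/-- Some Lipschitz curve through the points `p` and `q`, written as (position, time), satisfies the
conditions of `IsABgic` at almost every time in between. -/
def JoinedByCharacteristic (p q : ℝ × ℝ) : Prop :=
  ∃ ζ : ℝ → ℝ, (∃ K, LipschitzWith K ζ) ∧ ζ p.2 = p.1 ∧ ζ q.2 = q.1 ∧
    ∀ᵐ t, t ∈ Ioo p.2 q.2 → s.IsCharacteristicAt ζ t

variable {s}

lemma IsCharacteristicAt.congr {ζ η : ℝ → ℝ} {t : ℝ} (h : s.IsCharacteristicAt ζ t)
    (hηζ : η =ᶠ[𝓝 t] ζ) : s.IsCharacteristicAt η t := by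
  rw [IsCharacteristicAt, hηζ.eq_of_nhds]
  exact ⟨fun hneg => (h.1 hneg).imp_left fun hd => hd.congr_of_eventuallyEq hηζ,
    fun hpos => (h.2.1 hpos).imp_left fun hd => hd.congr_of_eventuallyEq hηζ, h.2.2⟩

lemma IsCharacteristicAt.neg_of_reflect (hAB : fl A = fr B) {ζ : ℝ → ℝ} {t : ℝ}
    (h : s.reflect.IsCharacteristicAt ζ t) : s.IsCharacteristicAt (fun t => -ζ t) t := by
  simp only [IsCharacteristicAt, reflect, deriv_comp_neg, neg_neg, neg_inj] at h
  refine ⟨fun hneg => ?_, fun hpos => ?_, fun hzero => ?_⟩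
  · obtain ⟨hd, heq⟩ := h.2.1 (neg_lt_zero.1 hneg)
    exact ⟨hd.fun_neg.congr_deriv (by rw [neg_neg, heq]), heq.symm⟩
  · obtain ⟨hd, heq⟩ := h.1 (neg_pos.1 hpos)
    exact ⟨hd.fun_neg.congr_deriv (by rw [neg_neg, heq]), heq.symm⟩
  · rw [hAB]
    simpa only [neg_zero] using (h.2.2 (neg_eq_zero.1 hzero)).symm

lemma JoinedByCharacteristic.of_reflect (hAB : fl A = fr B) {p q : ℝ × ℝ}
    (h : s.reflect.JoinedByCharacteristic (-p.1, p.2) (-q.1, q.2)) :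
    s.JoinedByCharacteristic p q := by
  obtain ⟨ζ, ⟨K, hK⟩, hp, hq, hchar⟩ := h
  exact ⟨fun t => -ζ t, ⟨K, hK.neg⟩, neg_eq_iff_eq_neg.2 hp, neg_eq_iff_eq_neg.2 hq,
    hchar.mono fun t h ht => (h ht).neg_of_reflect hAB⟩

lemma JoinedByCharacteristic.trans {p q r : ℝ × ℝ} (hpr : s.JoinedByCharacteristic p r)
    (hrq : s.JoinedByCharacteristic r q) (hpr₂ : p.2 ≤ r.2) (hrq₂ : r.2 ≤ q.2) :
    s.JoinedByCharacteristic p q := by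
  obtain ⟨ζ, ⟨K, hK⟩, hζp, hζr, hζ⟩ := hpr
  obtain ⟨η, ⟨L, hL⟩, hηr, hηq, hη⟩ := hrq
  set glue : ℝ → ℝ := fun t => ζ (min t r.2) + η (max t r.2) - r.1
  have hleft : ∀ t ≤ r.2, glue t = ζ t := fun t ht => by
    simp only [glue, min_eq_left ht, max_eq_right ht, hηr, add_sub_cancel_right]
  have hright : ∀ t ≥ r.2, glue t = η t := fun t ht => by
    simp only [glue, min_eq_right ht, max_eq_left ht, hζr, add_sub_cancel_left]
  have hLip := ((hK.comp (LipschitzWith.id.min_const r.2)).add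
    (hL.comp (LipschitzWith.id.max_const r.2))).sub (LipschitzWith.const r.1)
  refine ⟨glue, ⟨_, hLip⟩, (hleft _ hpr₂).trans hζp, (hright _ hrq₂).trans hηq, ?_⟩
  filter_upwards [hζ, hη, Measure.ae_ne volume r.2] with t hζt hηt htr ht
  rcases htr.lt_or_gt with hlt | hgt
  · exact (hζt ⟨ht.1, hlt⟩).congr ((eventually_lt_nhds hlt).mono fun y hy => hleft y hy.le)
  · exact (hηt ⟨hgt, ht.2⟩).congr ((eventually_gt_nhds hgt).mono fun y hy => hright y hy.le)

lemma JoinedByCharacteristic.mem_charSet0 {T x y : ℝ}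
    (h : s.JoinedByCharacteristic (y, 0) (x, T)) : y ∈ charSet0 T fl fr (fl A) s x := by
  obtain ⟨ζ, ⟨K, hK⟩, hy, hx, hchar⟩ := h
  refine ⟨ζ, ⟨⟨⟨K, hK.lipschitzOnWith⟩, ?_⟩, hx⟩, hy⟩
  rw [← restrict_Ioo_eq_restrict_Icc]
  exact (ae_restrict_iff' measurableSet_Ioo).2 hchar

variable (s) (hl : UniformlyConvexFlux fl a) (hr : UniformlyConvexFlux fr a)
  (hAB : IsConnection fl fr A B)
include hl hr hAB

/-- The interface flux is at least `fl A`, with integral at most that of `fl A`. -/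
lemma ae_traces_eq_of_stay {t₁ t₂ : ℝ} (ht₁ : 0 ≤ t₁) (ht : t₁ ≤ t₂)
    (hopt : s.potential 0 t₁ - fl A * (t₂ - t₁) ≤ s.potential 0 t₂) :
    ∀ᵐ t, t ∈ Ioo t₁ t₂ → fl (s.um 0 t) = fl A ∧ fr (s.up 0 t) = fl A := by
  have halt := s.interface_alternatives hl hr hAB
  have hint := (s.intervalIntegrable_fluxRight hl.continuous hr.continuous 0 t₁ t₂).sub
    (intervalIntegrable_const (c := fl A))
  have hnonneg : 0 ≤ᵐ[volume.restrict (Ioc t₁ t₂)] fun t => s.fluxRight 0 t - fl A := by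
    filter_upwards [ae_restrict_of_ae halt, ae_restrict_mem measurableSet_Ioc] with t ht htmem
    exact sub_nonneg.2 (ht (ht₁.trans_lt htmem.1)).2.1
  have hzero : ∫ t in Ioc t₁ t₂, (s.fluxRight 0 t - fl A) = 0 := by
    refine le_antisymm ?_ (integral_nonneg_of_ae hnonneg)
    rw [← intervalIntegral.integral_of_le ht, intervalIntegral.integral_sub
      (s.intervalIntegrable_fluxRight hl.continuous hr.continuous 0 t₁ t₂)
      intervalIntegrable_const, intervalIntegral.integral_const, smul_eq_mul]
    linarith [s.potential_sub_time hl.continuous hr.continuous 0 ht₁ ht]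
  have hflux := (integral_eq_zero_iff_of_nonneg_ae hnonneg
    ((intervalIntegrable_iff_integrableOn_Ioc_of_le ht).1 hint)).1 hzero
  filter_upwards [halt, (ae_restrict_iff' measurableSet_Ioc).1 hflux] with t ht hfluxt htmem
  have ht₀ : 0 < t := ht₁.trans_lt htmem.1
  have heq : s.fluxRight 0 t = fl A := sub_eq_zero.1 (hfluxt (Ioo_subset_Ioc_self htmem))
  exact ⟨(ht ht₀).1.trans heq, fluxRight_zero (s := s) ht₀ ▸ heq⟩

lemma joinedByCharacteristic_of_stay {t₁ t₂ : ℝ} (ht₁ : 0 ≤ t₁) (ht : t₁ ≤ t₂)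
    (hopt : s.potential 0 t₁ - fl A * (t₂ - t₁) ≤ s.potential 0 t₂) :
    s.JoinedByCharacteristic (0, t₁) (0, t₂) :=
  ⟨fun _ => 0, ⟨0, .const 0⟩, rfl, rfl, (s.ae_traces_eq_of_stay hl hr hAB ht₁ ht hopt).mono
    fun _ htr ht => ⟨(absurd · (lt_irrefl _)), (absurd · (lt_irrefl _)), fun _ => htr ht⟩⟩

lemma joinedByCharacteristic_of_right_leg {p q : ℝ × ℝ} (hp₁ : 0 ≤ p.1) (hp₂ : 0 ≤ p.2)
    (hq : 0 ≤ q.1) (hpq : p.2 < q.2)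
    (hopt : s.potential p.1 p.2 + laxCost fr p q ≤ s.potential q.1 q.2) :
    s.JoinedByCharacteristic p q := by
  by_cases hzero : p.1 = 0 ∧ q.1 = 0
  · obtain ⟨x, t₁⟩ := p
    obtain ⟨y, t₂⟩ := q
    obtain ⟨rfl, rfl⟩ : x = 0 ∧ y = 0 := hzero
    refine s.joinedByCharacteristic_of_stay hl hr hAB hp₂ hpq.le (le_trans ?_ hopt)
    have hcost : (0 - 0) * B - (t₂ - t₁) * fr B ≤ _ := hr.mul_sub_le_laxCost hpq B
    refine (add_le_add_iff_left (s.potential 0 t₁)).2 (le_trans (le_of_eq ?_) hcost)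
    rw [hAB.flux_eq]
    ring
  · refine ⟨leg p q, exists_lipschitzWith_leg p q, leg_left p q, leg_right hpq,
      .of_forall fun t ht => ?_⟩
    have hpos := leg_pos hp₁ hq hzero ht
    obtain ⟨hum, hup⟩ := s.deriv_traces_leg hl.continuous hr hp₁ hp₂ hq hopt ht hpos
    exact ⟨(absurd · hpos.not_gt), fun _ => ⟨hum ▸ hasDerivAt_leg p q t, hum.trans hup.symm⟩,
      (absurd · hpos.ne')⟩

lemma joinedByCharacteristic_of_left_leg {p q : ℝ × ℝ} (hp₁ : p.1 ≤ 0) (hp₂ : 0 ≤ p.2)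
    (hq : q.1 ≤ 0) (hpq : p.2 < q.2)
    (hopt : s.potential p.1 p.2 + laxCost fl p q ≤ s.potential q.1 q.2) :
    s.JoinedByCharacteristic p q := by
  refine .of_reflect hAB.flux_eq (s.reflect.joinedByCharacteristic_of_right_leg hr.comp_neg
    hl.comp_neg hAB.reflect (neg_nonneg.2 hp₁) hp₂ (neg_nonneg.2 hq) hpq ?_)
  simpa only [s.potential_reflect hl.continuous hr.continuous, hl.laxCost_comp_neg, neg_neg]
    using hopt

/-- A route of least cost is followed by a characteristic, since each of its pieces is optimal. -/
theorem joinedByCharacteristic_of_route {p q : ℝ × ℝ} {c : ℝ} (h : Route fl fr (fl A) p q c)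
    (hp : 0 ≤ p.2) (hopt : s.potential p.1 p.2 + c ≤ s.potential q.1 q.2) :
    s.JoinedByCharacteristic p q := by
  induction h with
  | refl p => exact ⟨fun _ => p.1, ⟨0, .const p.1⟩, rfl, rfl, .of_forall fun t ht => by simp at ht⟩
  | left hp₁ hq₁ hpq => exact s.joinedByCharacteristic_of_left_leg hl hr hAB hp₁ hp hq₁ hpq hopt
  | right hp₁ hq₁ hpq => exact s.joinedByCharacteristic_of_right_leg hl hr hAB hp₁ hp hq₁ hpq hopt
  | stay hrt => exact s.joinedByCharacteristic_of_stay hl hr hAB hp hrt hopt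
  | trans hpr hrq ihpr ihrq =>
    have hr₂ := hp.trans hpr.snd_le
    have hle_pr := s.potential_le_add_of_route hl hr hAB hpr hp
    have hle_rq := s.potential_le_add_of_route hl hr hAB hrq hr₂
    exact (ihpr hp (by linarith)).trans (ihrq hr₂ (by linarith)) hpr.snd_le hrq.snd_le

end ABSol

namespace ABSol

variable {T A B : ℝ} {fl fr : ℝ → ℝ} {C D : ℝ} {v0 : ℝ → ℝ}

lemma potential_zero_eq_of_init_eq_neg (v : ABSol fr fl C D v0)
    (ustar : ABSol fl fr A B fun x => v.u (-x) T) (y : ℝ) :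
    ustar.potential y 0 = v.potential 0 T - v.potential (-y) T := by
  have hzero : ustar.potential 0 0 = 0 := by simp [potential]
  calc ustar.potential y 0 = ∫ z in 0..y, ustar.u z 0 := by
        rw [← ustar.potential_sub_space 0 y 0, hzero, sub_zero]
    _ = ∫ z in 0..y, v.u (-z) T :=
        intervalIntegral.integral_congr_ae (ustar.init.mono fun z hz _ => hz)
    _ = ∫ z in -y..0, v.u z T := by
        rw [intervalIntegral.integral_comp_neg (fun z => v.u z T), neg_zero]
    _ = v.potential 0 T - v.potential (-y) T := (v.potential_sub_space (-y) 0 T).symm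

end ABSol

end

theorem charSet0_covers_line_general {T a A B Bb Aa : ℝ} {fl fr v0 : ℝ → ℝ} (hT : 0 < T)
    (hl : UniformlyConvexFlux fl a) (hr : UniformlyConvexFlux fr a)
    (hAB : IsConnection fl fr A B) (hBA : IsConnection fr fl Bb Aa) (hγ : fr Bb = fl A)
    (v : ABSol fr fl Bb Aa v0) (ustar : ABSol fl fr A B fun x => v.u (-x) T) :
    ⋃ x, charSet0 T fl fr (fl A) ustar x = univ := by
  refine eq_univ_of_forall fun y => ?_
  obtain ⟨x, c, hroute, hopt⟩ := v.exists_route hr hl hBA (q := (-y, T)) hT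
  have hrev := hγ ▸ hroute.reverse T
  obtain ⟨y', c', hroute', hopt'⟩ := ustar.exists_route hl hr hAB (q := (-x, T)) hT
  have hrev' := hγ.symm ▸ hroute'.reverse T
  simp only [neg_neg, sub_self, sub_zero] at hrev hrev'
  have hle := v.potential_le_add_of_route hr hl hBA hrev' le_rfl
  have hy := v.potential_zero_eq_of_init_eq_neg ustar y
  have hy' := v.potential_zero_eq_of_init_eq_neg ustar y'
  have hopt_rev : ustar.potential y 0 + c ≤ ustar.potential (-x) T := by linarith
  exact mem_iUnion.2
    ⟨-x, (ustar.joinedByCharacteristic_of_route hl hr hAB hrev le_rfl hopt_rev).mem_charSet0⟩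

/-- the initial positions of the AB-genuine/interface
characteristics of the backward-forward solution `u^*` cover the whole real
line (Lemma 4.5 of the paper). -/
theorem charSet0_covers_line
    {T a θl θr A B : ℝ} {fl fr : ℝ → ℝ}
    (hT : 0 < T)
    (hflC : ContDiff ℝ 2 fl) (hfrC : ContDiff ℝ 2 fr)
    (ha : 0 < a)
    (hfl2 : ∀ w : ℝ, a ≤ deriv (deriv fl) w)
    (hfr2 : ∀ w : ℝ, a ≤ deriv (deriv fr) w)
    (hf0 : fl 0 = fr 0) (hf1 : fl 1 = fr 1)
    (hθl : deriv fl θl = 0) (hθr : deriv fr θr = 0)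
    (hθl0 : 0 ≤ θl) (hθr1 : θr ≤ 1)
    (hAB : fl A = fr B) (hA' : deriv fl A ≤ 0) (hB' : 0 ≤ deriv fr B)
    {Bb Aa : ℝ} {ω : ℝ → ℝ}
    (hBb : Bb ≤ θr) (hBbf : fr Bb = fr B)
    (hAa : θl ≤ Aa) (hAaf : fl Aa = fl A)
    (hω : Attainable T fl fr A B ω)
    (v : ABSol fr fl Bb Aa (fun x => ω (-x)))
    (ustar : ABSol fl fr A B (fun x => v.u (-x) T))
    :
    (⋃ x : ℝ, charSet0 T fl fr (fl A) ustar x) = Set.univ := by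
  have hl : UniformlyConvexFlux fl a := ⟨hflC, ha, hfl2⟩
  have hr : UniformlyConvexFlux fr a := ⟨hfrC, ha, hfr2⟩
  exact charSet0_covers_line_general hT hl hr ⟨hAB, hA', hB'⟩
    ⟨hBbf.trans (hAB.symm.trans hAaf.symm), hθr ▸ hr.strictMono_deriv.monotone hBb,
      hθl ▸ hl.strictMono_deriv.monotone hAa⟩ (hBbf.trans hAB.symm) v ustar
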